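/- arXiv:2211.05399 — 3 statements merged into one kernel-verified Lean document; each statement's English description precedes it below -/
import Mathlib

section
/- Let d ≥ 1 and 0 ≤ s < d/2. There is a constant C = C(d,s) such that for every Schwartz function f on ℝ^d, ∫_{ℝ^d} |f(x)|²/|x|^{2s} dx ≤ C ∫_{ℝ^d} |2πξ|^{2s} |𝓕f(ξ)|² dξ. -/
open MeasureTheory Real FourierTransform

theorem aux_lint_Ioi {p c : ℝ} (hp : p < -1) (hc : 0 < c) :
    ∫⁻ R in Set.Ioi c, ENNReal.ofReal (R ^ p) = ENNReal.ofReal (-c ^ (p + 1) / (p + 1)) := by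
  rw [← integral_Ioi_rpow_of_lt hp hc]
  rw [ofReal_integral_eq_lintegral_ofReal (integrableOn_Ioi_rpow_of_lt hp hc)]
  filter_upwards [ae_restrict_mem measurableSet_Ioi] with R hR
  have : 0 < R := hc.trans hR
  positivity

theorem aux_lint_Ioo {p c : ℝ} (hp : -1 < p) (hc : 0 < c) :
    ∫⁻ R in Set.Ioo 0 c, ENNReal.ofReal (R ^ p) = ENNReal.ofReal (c ^ (p + 1) / (p + 1)) := by
  have h1 : IntegrableOn (fun R : ℝ => R ^ p) (Set.Ioo 0 c) :=
    (intervalIntegral.integrableOn_Ioo_rpow_iff hc).2 hp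
  rw [← ofReal_integral_eq_lintegral_ofReal h1]
  · congr 1
    rw [← integral_Ioc_eq_integral_Ioo, ← intervalIntegral.integral_of_le hc.le,
      integral_rpow (Or.inl hp), Real.zero_rpow (by linarith), sub_zero]
  · filter_upwards [ae_restrict_mem measurableSet_Ioo] with R hR
    have : 0 < R := hR.1
    positivity

/-- integral of a power over a ball -/
theorem aux_ball (d : ℕ) (hd : 1 ≤ d) (b : ℝ) (hb : b < d) :
    ∃ A : ℝ, 0 ≤ A ∧ ∀ r : ℝ, 0 < r →
      ∫⁻ ξ in Metric.ball (0 : EuclideanSpace ℝ (Fin d)) r, ENNReal.ofReal (‖ξ‖ ^ (-b))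
        = ENNReal.ofReal (A * r ^ ((d : ℝ) - b)) := by
  have : Nontrivial (EuclideanSpace ℝ (Fin d)) := by
    apply Module.nontrivial_of_finrank_pos (R := ℝ)
    simp; omega
  set v := (volume : Measure (EuclideanSpace ℝ (Fin d))).real (Metric.ball 0 1) with hv
  refine ⟨d * v / (d - b), ?_, ?_⟩
  · have : 0 < (d : ℝ) - b := by linarith
    positivity
  intro r hr
  have hint : IntegrableOn (fun ξ : EuclideanSpace ℝ (Fin d) => ‖ξ‖ ^ (-b)) (Metric.ball 0 r) := by
    apply integrableOn_ball_of_norm_le_rpow (C := 1) (α := b)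
    · simpa using hb
    · refine Filter.Eventually.of_forall fun x => ?_
      rw [Real.norm_of_nonneg (by positivity), one_mul]
    · exact (measurable_norm.pow_const _).aestronglyMeasurable
    · simpa using hd
  rw [← ofReal_integral_eq_lintegral_ofReal hint
    (Filter.Eventually.of_forall fun x => by positivity)]
  congr 1
  rw [← integral_indicator measurableSet_ball]
  have e1 : ∀ x : EuclideanSpace ℝ (Fin d), (Metric.ball 0 r).indicator (fun ξ => ‖ξ‖ ^ (-b)) x
      = (fun y => (Set.Iio r).indicator (fun y => y ^ (-b)) y) ‖x‖ := by
    intro x; simp [Set.indicator]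
  simp_rw [e1]
  rw [integral_fun_norm_addHaar]
  have e2 : ∫ y in Set.Ioi (0:ℝ), y ^ (d - 1) • (Set.Iio r).indicator (fun y : ℝ => y ^ (-b)) y
      = r ^ ((d : ℝ) - b) / (d - b) := by
    have : ∀ y ∈ Set.Ioi (0:ℝ), y ^ (d - 1) • (Set.Iio r).indicator (fun y : ℝ => y ^ (-b)) y
        = (Set.Iio r).indicator (fun y : ℝ => y ^ ((d:ℝ) - 1 - b)) y := by
      intro y hy
      by_cases h : y < r
      · simp only [Set.indicator, Set.mem_Iio, h, if_true, smul_eq_mul]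
        rw [← Real.rpow_natCast, ← Real.rpow_add hy, Nat.cast_sub hd]
        congr 1; simp; ring
      · simp [h]
    rw [setIntegral_congr_fun measurableSet_Ioi this, setIntegral_indicator measurableSet_Iio,
      Set.Ioi_inter_Iio, ← integral_Ioc_eq_integral_Ioo, ← intervalIntegral.integral_of_le hr.le,
      integral_rpow (Or.inl (by linarith)), Real.zero_rpow (by linarith), sub_zero]
    rw [show (d : ℝ) - 1 - b + 1 = d - b by ring]
  simp only [finrank_euclideanSpace, Fintype.card_fin]
  rw [e2]
  simp only [nsmul_eq_mul, smul_eq_mul]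
  ring

theorem aux_CS {d : ℕ} (a r : ℝ) (g : EuclideanSpace ℝ (Fin d) → ℂ) (hg : Measurable g) 
    (hd : 1 ≤ d) :
    (∫⁻ ξ in Metric.ball (0 : EuclideanSpace ℝ (Fin d)) r, ‖g ξ‖ₑ) ^ 2 ≤
      (∫⁻ ξ in Metric.ball (0 : EuclideanSpace ℝ (Fin d)) r, ENNReal.ofReal (‖ξ‖ ^ (-(2 * a)))) *
      ∫⁻ ξ in Metric.ball (0 : EuclideanSpace ℝ (Fin d)) r,
        ENNReal.ofReal (‖ξ‖ ^ (2 * a)) * ‖g ξ‖ₑ ^ 2 := by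
  have : Nontrivial (EuclideanSpace ℝ (Fin d)) := by
    apply Module.nontrivial_of_finrank_pos (R := ℝ)
    simp; omega
  set μ := (volume : Measure (EuclideanSpace ℝ (Fin d))).restrict (Metric.ball 0 r)
  have hm : ∀ b : ℝ, Measurable fun ξ : EuclideanSpace ℝ (Fin d) => ENNReal.ofReal (‖ξ‖ ^ b) :=
    fun b => (measurable_norm.pow_const _).ennreal_ofReal
  have key := ENNReal.lintegral_mul_le_Lp_mul_Lq μ Real.HolderConjugate.two_two
    (f := fun ξ => ENNReal.ofReal (‖ξ‖ ^ (-a)))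
    (g := fun ξ => ENNReal.ofReal (‖ξ‖ ^ a) * ‖g ξ‖ₑ)
    (hm _).aemeasurable ((hm _).mul hg.enorm).aemeasurable
  have h0 : ∀ᵐ ξ ∂μ, ξ ≠ 0 := by
    apply ae_restrict_of_ae
    exact Measure.ae_ne volume 0
  have e1 : ∫⁻ ξ, ‖g ξ‖ₑ ∂μ = ∫⁻ ξ, ((fun ξ : EuclideanSpace ℝ (Fin d) => ENNReal.ofReal (‖ξ‖ ^ (-a))) *
      fun ξ => ENNReal.ofReal (‖ξ‖ ^ a) * ‖g ξ‖ₑ) ξ ∂μ := by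
    apply lintegral_congr_ae
    filter_upwards [h0] with ξ hξ
    have : 0 < ‖ξ‖ := norm_pos_iff.2 hξ
    simp only [Pi.mul_apply]
    rw [← mul_assoc, ← ENNReal.ofReal_mul (by positivity), ← Real.rpow_add this]
    simp
  have sq : ∀ (b : ℝ) (ξ : EuclideanSpace ℝ (Fin d)),
      ENNReal.ofReal (‖ξ‖ ^ b) ^ (2:ℕ) = ENNReal.ofReal (‖ξ‖ ^ (2 * b)) := by
    intro b ξ
    rw [← ENNReal.ofReal_pow (by positivity), ← Real.rpow_mul_natCast (by positivity)]
    congr 2; push_cast; ring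
  rw [e1]
  refine (pow_le_pow_left₀ (by positivity) key 2).trans (le_of_eq ?_)
  rw [mul_pow, ← ENNReal.rpow_natCast, ← ENNReal.rpow_natCast, ← ENNReal.rpow_mul,
    ← ENNReal.rpow_mul]
  norm_num
  congr 1
  · refine lintegral_congr fun ξ => ?_
    rw [sq]; congr 2; ring
  · refine lintegral_congr fun ξ => ?_
    rw [mul_pow, sq]

theorem aux_plancherel {d : ℕ} (f : SchwartzMap (EuclideanSpace ℝ (Fin d)) ℂ) :
    ∫⁻ x, ‖f x‖ₑ ^ 2 = ∫⁻ ξ, ‖𝓕 f ξ‖ₑ ^ 2 := by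
  have h : ∀ g : SchwartzMap (EuclideanSpace ℝ (Fin d)) ℂ,
      ∫⁻ x, ‖g x‖ₑ ^ 2 = ENNReal.ofReal (∫ x, ‖g x‖ ^ 2) := by
    intro g
    have : Integrable (fun x => ‖g x‖ ^ 2) := (g.memLp 2).integrable_norm_pow (by norm_num)
    rw [ofReal_integral_eq_lintegral_ofReal this
      (Filter.Eventually.of_forall fun x => by positivity)]
    refine lintegral_congr fun x => ?_
    rw [ENNReal.ofReal_pow (norm_nonneg _), ofReal_norm]
  rw [h, h, SchwartzMap.integral_norm_sq_fourier]

theorem aux_local {d : ℕ} (f : SchwartzMap (EuclideanSpace ℝ (Fin d)) ℂ) {R : ℝ} (hR : 0 < R) :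
    ∫⁻ x in Metric.ball (0 : EuclideanSpace ℝ (Fin d)) R, ‖f x‖ₑ ^ 2 ≤
      2 * (∫⁻ ξ in {ξ : EuclideanSpace ℝ (Fin d) | 1 < R * ‖ξ‖}, ‖𝓕 f ξ‖ₑ ^ 2) +
      2 * (volume (Metric.ball (0 : EuclideanSpace ℝ (Fin d)) R) *
        (∫⁻ ξ in Metric.ball (0 : EuclideanSpace ℝ (Fin d)) (2 / R), ‖𝓕 f ξ‖ₑ) ^ 2) := by
  let φ : ContDiffBump (0 : EuclideanSpace ℝ (Fin d)) :=
    ⟨1 / R, 2 / R, by positivity, by gcongr; norm_num⟩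
  let ψ : EuclideanSpace ℝ (Fin d) → ℂ := fun ξ => ((φ ξ : ℝ) : ℂ)
  have hψ : Function.HasTemperateGrowth ψ := by
    apply HasCompactSupport.hasTemperateGrowth
    · exact φ.hasCompactSupport.comp_left (g := Complex.ofReal) (by simp)
    · exact Complex.ofRealCLM.contDiff.comp φ.contDiff
  let G := SchwartzMap.smulLeftCLM ℂ ψ (𝓕 f)
  have hG : ∀ ξ, G ξ = ψ ξ * 𝓕 f ξ := fun ξ => by
    simp only [G, SchwartzMap.smulLeftCLM_apply_apply hψ, smul_eq_mul]
  let l : SchwartzMap (EuclideanSpace ℝ (Fin d)) ℂ := 𝓕⁻ G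
  have hl : 𝓕 l = G := by simp [l]
  have hhigh : ∫⁻ x, ‖(f - l) x‖ₑ ^ 2 ≤
      ∫⁻ ξ in {ξ : EuclideanSpace ℝ (Fin d) | 1 < R * ‖ξ‖}, ‖𝓕 f ξ‖ₑ ^ 2 := by
    rw [aux_plancherel, ← lintegral_indicator
      (measurableSet_lt measurable_const (measurable_norm.const_mul R))]
    refine lintegral_mono fun ξ => ?_
    have e : 𝓕 (f - l) ξ = (1 - ψ ξ) * 𝓕 f ξ := by
      rw [sub_eq_add_neg, FourierTransform.fourier_add, FourierTransform.fourier_neg, hl]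
      simp only [add_apply, neg_apply, hG]
      ring
    simp only [e]
    by_cases h : 1 < R * ‖ξ‖
    · rw [Set.indicator_of_mem (by exact h), enorm_mul]
      gcongr
      refine mul_le_of_le_one_left' ?_
      have : (1 - ψ ξ) = ((1 - φ ξ : ℝ) : ℂ) := by simp [ψ]
      rw [this, ← ofReal_norm, Complex.norm_real, ENNReal.ofReal_le_one, Real.norm_eq_abs, abs_le]
      constructor <;> linarith [φ.nonneg' ξ, φ.le_one (x := ξ)]
    · have : φ ξ = 1 := by
        apply φ.one_of_mem_closedBall
        rw [mem_closedBall_zero_iff]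
        change ‖ξ‖ ≤ 1 / R
        rw [le_div_iff₀ hR]; linarith
      simp [ψ, this]
  have hlow : ∀ x, ‖l x‖ₑ ≤ 
      ∫⁻ ξ in Metric.ball (0 : EuclideanSpace ℝ (Fin d)) (2 / R), ‖𝓕 f ξ‖ₑ := by
    intro x
    have : l x = ∫ ξ, 𝐞 (inner ℝ ξ x) • G ξ := by
      simp only [l, SchwartzMap.fourierInv_coe, Real.fourierInv_eq]
    rw [this, ← lintegral_indicator measurableSet_ball]
    refine (enorm_integral_le_lintegral_enorm _).trans (lintegral_mono fun ξ => ?_)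
    have e : ‖𝐞 (inner ℝ ξ x) • G ξ‖ₑ = ‖G ξ‖ₑ := by
      rw [← ofReal_norm, Circle.norm_smul, ofReal_norm]
    simp only [e]
    rw [hG]
    by_cases h : ξ ∈ Metric.ball (0 : EuclideanSpace ℝ (Fin d)) (2 / R)
    · rw [Set.indicator_of_mem h, enorm_mul]
      refine mul_le_of_le_one_left' ?_
      rw [← ofReal_norm, Complex.norm_real, ENNReal.ofReal_le_one, Real.norm_eq_abs, abs_le]
      constructor <;> linarith [φ.nonneg' ξ, φ.le_one (x := ξ)]
    · have : φ ξ = 0 := by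
        apply φ.zero_of_le_dist
        simpa using h
      simp [ψ, this]
  calc ∫⁻ x in Metric.ball (0 : EuclideanSpace ℝ (Fin d)) R, ‖f x‖ₑ ^ 2
      ≤ ∫⁻ x in Metric.ball (0 : EuclideanSpace ℝ (Fin d)) R,
          (2 * ‖(f - l) x‖ₑ ^ 2 + 2 * ‖l x‖ₑ ^ 2) := by
        refine lintegral_mono fun x => ?_
        have h1 : ‖f x‖ ^ 2 ≤ 2 * ‖(f - l) x‖ ^ 2 + 2 * ‖l x‖ ^ 2 := by
          have : ‖f x‖ ≤ ‖(f - l) x‖ + ‖l x‖ := by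
            have := norm_add_le ((f - l) x) (l x)
            simpa using this
          nlinarith [norm_nonneg (f x), norm_nonneg ((f - l) x), norm_nonneg (l x),
            sq_nonneg (‖(f - l) x‖ - ‖l x‖)]
        have h2 := ENNReal.ofReal_le_ofReal h1
        rw [ENNReal.ofReal_add (by positivity) (by positivity), ENNReal.ofReal_mul (by norm_num),
          ENNReal.ofReal_mul (by norm_num), ENNReal.ofReal_pow (norm_nonneg _),
          ENNReal.ofReal_pow (norm_nonneg _), ENNReal.ofReal_pow (norm_nonneg _),
          ofReal_norm, ofReal_norm, ofReal_norm] at h2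
        simpa using h2
    _ = 2 * (∫⁻ x in Metric.ball (0 : EuclideanSpace ℝ (Fin d)) R, ‖(f - l) x‖ₑ ^ 2) +
        2 * ∫⁻ x in Metric.ball (0 : EuclideanSpace ℝ (Fin d)) R, ‖l x‖ₑ ^ 2 := by
        have m1 : Measurable fun x => ‖(f - l) x‖ₑ ^ 2 := 
          ((f - l).continuous.measurable.enorm).pow_const 2
        have m2 : Measurable fun x => ‖l x‖ₑ ^ 2 := 
          (l.continuous.measurable.enorm).pow_const 2
        rw [lintegral_add_left (m1.const_mul 2), lintegral_const_mul _ m1, lintegral_const_mul _ m2]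
    _ ≤ _ := by
        gcongr 2 * ?_ + 2 * ?_
        · exact (setLIntegral_le_lintegral _ _).trans hhigh
        · calc _ ≤ ∫⁻ x in Metric.ball (0 : EuclideanSpace ℝ (Fin d)) R, 
              (∫⁻ ξ in Metric.ball (0 : EuclideanSpace ℝ (Fin d)) (2 / R), ‖𝓕 f ξ‖ₑ) ^ 2 := by
                refine lintegral_mono fun x => ?_
                gcongr
                exact hlow x
            _ = _ := by rw [setLIntegral_const, mul_comm]

/-- combined estimate at scale `R` -/
theorem aux_scale (d : ℕ) (hd : 1 ≤ d) (a : ℝ) (ha : 2 * a < d) :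
    ∃ B : ℝ, 0 ≤ B ∧ ∀ (f : SchwartzMap (EuclideanSpace ℝ (Fin d)) ℂ) (R : ℝ), 0 < R →
      ∫⁻ x in Metric.ball (0 : EuclideanSpace ℝ (Fin d)) R, ‖f x‖ₑ ^ 2 ≤
        2 * (∫⁻ ξ in {ξ : EuclideanSpace ℝ (Fin d) | 1 < R * ‖ξ‖}, ‖𝓕 f ξ‖ₑ ^ 2) +
        ENNReal.ofReal (B * R ^ (2 * a)) *
          ∫⁻ ξ in Metric.ball (0 : EuclideanSpace ℝ (Fin d)) (2 / R),
            ENNReal.ofReal (‖ξ‖ ^ (2 * a)) * ‖𝓕 f ξ‖ₑ ^ 2 := by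
  obtain ⟨A, hA, hball⟩ := aux_ball d hd (2 * a) ha
  have : Nontrivial (EuclideanSpace ℝ (Fin d)) := by
    apply Module.nontrivial_of_finrank_pos (R := ℝ)
    simp; omega
  set v := (volume : Measure (EuclideanSpace ℝ (Fin d))).real (Metric.ball 0 1) with hv
  refine ⟨2 * v * A * 2 ^ ((d : ℝ) - 2 * a), by positivity, fun f R hR => ?_⟩
  refine (aux_local f hR).trans ?_
  gcongr 2 * _ + ?_
  have h1 : volume (Metric.ball (0 : EuclideanSpace ℝ (Fin d)) R) =
      ENNReal.ofReal (R ^ d * v) := by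
    rw [Measure.addHaar_ball _ _ hR.le, ENNReal.ofReal_mul (by positivity), hv,
      ofReal_measureReal (measure_ball_lt_top.ne)]
    simp
  have h2 := aux_CS a (2 / R) (fun ξ => 𝓕 f ξ) (𝓕 f).continuous.measurable hd
  rw [hball _ (by positivity)] at h2
  rw [h1]
  set I := ∫⁻ ξ in Metric.ball (0 : EuclideanSpace ℝ (Fin d)) (2 / R),
            ENNReal.ofReal (‖ξ‖ ^ (2 * a)) * ‖𝓕 f ξ‖ₑ ^ 2
  calc _ ≤ ENNReal.ofReal 2 * (ENNReal.ofReal (R ^ d * v) *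
          (ENNReal.ofReal (A * (2 / R) ^ ((d : ℝ) - 2 * a)) * I)) := by
        rw [ENNReal.ofReal_ofNat]
        gcongr
    _ = ENNReal.ofReal (2 * ((R ^ d * v) * (A * (2 / R) ^ ((d : ℝ) - 2 * a)))) * I := by
        rw [ENNReal.ofReal_mul (p := 2) (by positivity),
          ENNReal.ofReal_mul (p := R ^ d * v) (by positivity)]
        simp only [mul_assoc]
    _ = _ := by
        congr 2
        rw [Real.div_rpow (by norm_num) hR.le, Real.rpow_sub hR, Real.rpow_natCast]
        field_simp

theorem aux_main (d : ℕ) (hd : 1 ≤ d) (s : ℝ) (hs : 0 < s) (hsd : s < (d : ℝ) / 2) :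
    ∃ K : ℝ, 0 ≤ K ∧ ∀ f : SchwartzMap (EuclideanSpace ℝ (Fin d)) ℂ,
      ∫⁻ x : EuclideanSpace ℝ (Fin d), ENNReal.ofReal (‖f x‖ ^ 2 / ‖x‖ ^ (2 * s)) ≤
        ENNReal.ofReal K * ∫⁻ ξ : EuclideanSpace ℝ (Fin d),
          ENNReal.ofReal (‖ξ‖ ^ (2 * s)) * ‖𝓕 f ξ‖ₑ ^ 2 := by
  obtain ⟨a, has, had⟩ := exists_between hsd
  obtain ⟨B, hB, hscale⟩ := aux_scale d hd a (by linarith)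
  have : Nontrivial (EuclideanSpace ℝ (Fin d)) := by
    apply Module.nontrivial_of_finrank_pos (R := ℝ)
    simp; omega
  set K2 : ℝ := B * (2 * s) * (2 ^ (2 * a - 2 * s) / (2 * a - 2 * s)) with hK2
  have hpos : 0 < 2 * a - 2 * s := by linarith
  have hK2' : 0 ≤ K2 := by positivity
  refine ⟨2 + K2, by positivity, fun f => ?_⟩
  let w : ℝ → ENNReal := fun R => ENNReal.ofReal (2 * s * R ^ (-(2 * s) - 1))
  have hw : Measurable w := ((measurable_id.pow_const _).const_mul _).ennreal_ofReal
  let u : EuclideanSpace ℝ (Fin d) → ENNReal := fun x => ‖f x‖ₑ ^ 2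
  have hu : Measurable u := (f.continuous.measurable.enorm).pow_const 2
  let g : EuclideanSpace ℝ (Fin d) → ENNReal := fun x => ‖𝓕 f x‖ₑ ^ 2
  have hg : Measurable g := ((𝓕 f).continuous.measurable.enorm).pow_const 2
  let S0 : Set (ℝ × EuclideanSpace ℝ (Fin d)) := {p | ‖p.2‖ < p.1}
  let S1 : Set (ℝ × EuclideanSpace ℝ (Fin d)) := {p | 1 < p.1 * ‖p.2‖}
  let S2 : Set (ℝ × EuclideanSpace ℝ (Fin d)) := {p | p.1 * ‖p.2‖ < 2}
  have hS0 : MeasurableSet S0 := measurableSet_lt measurable_snd.norm measurable_fst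
  have hS1 : MeasurableSet S1 := 
    measurableSet_lt measurable_const (measurable_fst.mul measurable_snd.norm)
  have hS2 : MeasurableSet S2 := 
    measurableSet_lt (measurable_fst.mul measurable_snd.norm) measurable_const
  let F0 : ℝ × EuclideanSpace ℝ (Fin d) → ENNReal := S0.indicator fun p => w p.1 * u p.2
  have hF0 : Measurable F0 := ((hw.comp measurable_fst).mul (hu.comp measurable_snd)).indicator hS0
  let F1 : ℝ × EuclideanSpace ℝ (Fin d) → ENNReal := S1.indicator fun p => w p.1 * (2 * g p.2)
  have hF1 : Measurable F1 :=
    ((hw.comp measurable_fst).mul ((hg.comp measurable_snd).const_mul 2)).indicator hS1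
  let F2 : ℝ × EuclideanSpace ℝ (Fin d) → ENNReal := S2.indicator fun p => 
    w p.1 * ENNReal.ofReal (B * p.1 ^ (2 * a)) * (ENNReal.ofReal (‖p.2‖ ^ (2 * a)) * g p.2)
  have hF2 : Measurable F2 := by
    refine Measurable.indicator (Measurable.mul (Measurable.mul (hw.comp measurable_fst) ?_)
      (Measurable.mul ?_ (hg.comp measurable_snd))) hS2
    · exact ((measurable_fst.pow_const _).const_mul _).ennreal_ofReal
    · exact (measurable_snd.norm.pow_const _).ennreal_ofReal
  have step1 : ∫⁻ x : EuclideanSpace ℝ (Fin d), ENNReal.ofReal (‖f x‖ ^ 2 / ‖x‖ ^ (2 * s)) =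
      ∫⁻ x, ∫⁻ R in Set.Ioi (0:ℝ), F0 (R, x) := by
    apply lintegral_congr_ae
    filter_upwards [Measure.ae_ne volume (0 : EuclideanSpace ℝ (Fin d))] with x hx
    have hx' : 0 < ‖x‖ := norm_pos_iff.2 hx
    have e : ∀ R, F0 (R, x) = (Set.Ioi ‖x‖).indicator (fun R => 
        (ENNReal.ofReal (2 * s) * u x) * ENNReal.ofReal (R ^ (-(2 * s) - 1))) R := by
      intro R
      by_cases h : ‖x‖ < R
      · rw [Set.indicator_of_mem (by exact h)]
        simp only [F0]
        rw [Set.indicator_of_mem (by exact h)]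
        simp only [w]
        rw [ENNReal.ofReal_mul (by positivity)]
        ring
      · rw [Set.indicator_of_notMem (by exact h)]
        simp only [F0]
        rw [Set.indicator_of_notMem (by exact h)]
    simp_rw [e]
    rw [setLIntegral_indicator measurableSet_Ioi, Set.inter_eq_left.2 (Set.Ioi_subset_Ioi hx'.le),
      lintegral_const_mul _ (by exact (measurable_id.pow_const _).ennreal_ofReal),
      aux_lint_Ioi (by linarith) hx']
    simp only [u]
    rw [← ofReal_norm, ← ENNReal.ofReal_pow (norm_nonneg _), 
      ← ENNReal.ofReal_mul (by positivity), ← ENNReal.ofReal_mul (by positivity)]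
    congr 1
    rw [show -(2 * s) - 1 + 1 = -(2 * s) by ring, Real.rpow_neg hx'.le]
    field_simp
  have step2 : ∫⁻ x, ∫⁻ R in Set.Ioi (0:ℝ), F0 (R, x) ≤
      ∫⁻ R in Set.Ioi (0:ℝ), ∫⁻ ξ, (F1 (R, ξ) + F2 (R, ξ)) := by
    rw [lintegral_lintegral_swap (by exact (hF0.comp measurable_swap).aemeasurable)]
    refine setLIntegral_mono' measurableSet_Ioi fun R hR => ?_
    have hR' : (0:ℝ) < R := hR
    have e0 : ∫⁻ x, F0 (R, x) = w R * ∫⁻ x in Metric.ball 0 R, u x := by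
      rw [← lintegral_const_mul _ hu, ← lintegral_indicator measurableSet_ball]
      refine lintegral_congr fun x => ?_
      simp [F0, S0, Set.indicator]
    have e1 : ∫⁻ x, F1 (R, x) = w R * (2 * ∫⁻ ξ in {ξ | 1 < R * ‖ξ‖}, g ξ) := by
      rw [← lintegral_const_mul _ hg, ← lintegral_const_mul _ (hg.const_mul 2),
        ← lintegral_indicator (measurableSet_lt measurable_const (measurable_norm.const_mul R))]
      refine lintegral_congr fun x => ?_
      simp [F1, S1, Set.indicator]
    have e2 : ∫⁻ x, F2 (R, x) = w R * (ENNReal.ofReal (B * R ^ (2 * a)) *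
        ∫⁻ ξ in Metric.ball 0 (2 / R), ENNReal.ofReal (‖ξ‖ ^ (2 * a)) * g ξ) := by
      have m : Measurable fun ξ : EuclideanSpace ℝ (Fin d) =>
          ENNReal.ofReal (‖ξ‖ ^ (2 * a)) * g ξ :=
        (measurable_norm.pow_const _).ennreal_ofReal.mul hg
      rw [← mul_assoc, ← lintegral_const_mul _ m, ← lintegral_indicator measurableSet_ball]
      refine lintegral_congr fun x => ?_
      have : x ∈ Metric.ball (0 : EuclideanSpace ℝ (Fin d)) (2 / R) ↔ R * ‖x‖ < 2 := by
        rw [mem_ball_zero_iff, lt_div_iff₀ hR', mul_comm]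
      simp only [F2, S2, Set.indicator, this, Set.mem_ofPred_eq]
    rw [lintegral_add_left (by exact hF1.comp measurable_prodMk_left), e0, e1, e2, ← mul_add]
    gcongr
    exact hscale f R hR'
  have step3 : ∫⁻ R in Set.Ioi (0:ℝ), ∫⁻ ξ, (F1 (R, ξ) + F2 (R, ξ)) = 
      ∫⁻ ξ, ENNReal.ofReal (2 + K2) * (ENNReal.ofReal (‖ξ‖ ^ (2 * s)) * g ξ) := by
    rw [lintegral_lintegral_swap (by exact (hF1.add hF2).aemeasurable)]
    apply lintegral_congr_ae
    filter_upwards [Measure.ae_ne volume (0 : EuclideanSpace ℝ (Fin d))] with x hx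
    have hx' : 0 < ‖x‖ := norm_pos_iff.2 hx
    rw [lintegral_add_left (by exact hF1.comp measurable_prodMk_right)]
    have e1 : ∀ R, F1 (R, x) = (Set.Ioi (1 / ‖x‖)).indicator (fun R => 
        (ENNReal.ofReal (2 * (2 * s)) * g x) * ENNReal.ofReal (R ^ (-(2 * s) - 1))) R := by
      intro R
      have : R ∈ Set.Ioi (1 / ‖x‖) ↔ 1 < R * ‖x‖ := by
        rw [Set.mem_Ioi, div_lt_iff₀ hx']
      simp only [F1, S1, Set.indicator, this, Set.mem_ofPred_eq]
      congr 1
      simp only [w]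
      rw [ENNReal.ofReal_mul (p := 2 * s) (by positivity),
        ENNReal.ofReal_mul (p := 2) (q := 2 * s) (by positivity), ENNReal.ofReal_ofNat]
      ring
    have e2 : ∀ R ∈ Set.Ioi (0:ℝ), F2 (R, x) = (Set.Iio (2 / ‖x‖)).indicator (fun R => 
        (ENNReal.ofReal (B * (2 * s) * ‖x‖ ^ (2 * a)) * g x) *
          ENNReal.ofReal (R ^ (2 * a - 2 * s - 1))) R := by
      intro R hR
      have hR' : (0:ℝ) < R := hR
      have : R ∈ Set.Iio (2 / ‖x‖) ↔ R * ‖x‖ < 2 := by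
        rw [Set.mem_Iio, lt_div_iff₀ hx']
      simp only [F2, S2, Set.indicator, this, Set.mem_ofPred_eq]
      congr 1
      simp only [w]
      rw [← mul_assoc, ← ENNReal.ofReal_mul (by positivity), ← ENNReal.ofReal_mul (by positivity),
        mul_right_comm _ (g x), ← ENNReal.ofReal_mul (by positivity)]
      congr 2
      rw [show 2 * a - 2 * s - 1 = (-(2 * s) - 1) + 2 * a by ring, Real.rpow_add hR']
      ring
    rw [setLIntegral_congr_fun measurableSet_Ioi e2]
    simp_rw [e1]
    rw [setLIntegral_indicator measurableSet_Ioi, setLIntegral_indicator measurableSet_Iio,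
      Set.inter_eq_left.2 (Set.Ioi_subset_Ioi (by positivity)), Set.inter_comm, Set.Ioi_inter_Iio,
      lintegral_const_mul _ (by exact (measurable_id.pow_const _).ennreal_ofReal),
      lintegral_const_mul _ (by exact (measurable_id.pow_const _).ennreal_ofReal),
      aux_lint_Ioi (by linarith) (by positivity), aux_lint_Ioo (by linarith) (by positivity),
      mul_right_comm, mul_right_comm _ (g x), ← add_mul, ← mul_assoc (ENNReal.ofReal (2 + K2))]
    have q : 0 ≤ -(1 / ‖x‖) ^ (-(2 * s) - 1 + 1) / (-(2 * s) - 1 + 1) := by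
      apply div_nonneg_of_nonpos
      · rw [neg_nonpos]; positivity
      · linarith
    have q2 : 0 ≤ (2 / ‖x‖) ^ (2 * a - 2 * s - 1 + 1) / (2 * a - 2 * s - 1 + 1) := by
      apply div_nonneg (by positivity) (by linarith)
    rw [← ENNReal.ofReal_mul (by positivity), ← ENNReal.ofReal_mul (by positivity), 
      ← ENNReal.ofReal_mul (by positivity), ← ENNReal.ofReal_add (mul_nonneg (by positivity) q) (mul_nonneg (by positivity) q2)]
    congr 2
    rw [show -(2 * s) - 1 + 1 = -(2 * s) by ring,
      show 2 * a - 2 * s - 1 + 1 = 2 * a - 2 * s by ring, one_div, Real.inv_rpow hx'.le,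
      Real.rpow_neg hx'.le, inv_inv, Real.div_rpow (by norm_num) hx'.le, hK2,
      Real.rpow_sub hx']
    have := hpos.ne'
    field_simp
  rw [step1]
  refine (step2.trans_eq step3).trans_eq ?_
  rw [lintegral_const_mul]
  exact (measurable_norm.pow_const _).ennreal_ofReal.mul hg

theorem aux_main' (d : ℕ) (hd : 1 ≤ d) (s : ℝ) (hs : 0 ≤ s) (hsd : s < (d : ℝ) / 2) :
    ∃ K : ℝ, 0 ≤ K ∧ ∀ f : SchwartzMap (EuclideanSpace ℝ (Fin d)) ℂ,
      ∫⁻ x : EuclideanSpace ℝ (Fin d), ENNReal.ofReal (‖f x‖ ^ 2 / ‖x‖ ^ (2 * s)) ≤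
        ENNReal.ofReal K * ∫⁻ ξ : EuclideanSpace ℝ (Fin d),
          ENNReal.ofReal (‖ξ‖ ^ (2 * s)) * ‖𝓕 f ξ‖ₑ ^ 2 := by
  rcases hs.eq_or_lt with rfl | h
  · refine ⟨1, zero_le_one, fun f => ?_⟩
    simp only [mul_zero, Real.rpow_zero, div_one, ENNReal.ofReal_one, one_mul]
    rw [← aux_plancherel]
    refine (lintegral_congr fun x => ?_).le
    rw [ENNReal.ofReal_pow (norm_nonneg _), ofReal_norm]
  · exact aux_main d hd s h hsd

theorem aux_integrable {d : ℕ} (s : ℝ) (hs : 0 ≤ s) (hsd : s < (d : ℝ) / 2)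
    (g : SchwartzMap (EuclideanSpace ℝ (Fin d)) ℂ) :
    Integrable fun ξ : EuclideanSpace ℝ (Fin d) => (2 * π * ‖ξ‖) ^ (2 * s) * ‖g ξ‖ ^ 2 := by
  obtain ⟨M, hM⟩ := g.toBoundedContinuousFunction.isBounded_range.exists_norm_le
  have hM' : ∀ x, ‖g x‖ ≤ M := fun x => hM (g x) ⟨x, rfl⟩
  have i0 := g.integrable_pow_mul volume 0
  have i1 := g.integrable_pow_mul volume d
  refine ((i0.add (i1.const_mul ((2 * π) ^ d))).mul_const M).mono' ?_ ?_
  · exact (((measurable_norm.const_mul _).pow_const _).mul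
      (g.continuous.measurable.norm.pow_const 2)).aestronglyMeasurable
  · refine Filter.Eventually.of_forall fun x => ?_
    rw [Real.norm_of_nonneg (by positivity)]
    have hb : (2 * π * ‖x‖) ^ (2 * s) ≤ 1 + (2 * π * ‖x‖) ^ d := by
      rcases le_total (2 * π * ‖x‖) 1 with h | h
      · have := Real.rpow_le_one (by positivity) h (by linarith : 0 ≤ 2 * s)
        have : 0 ≤ (2 * π * ‖x‖) ^ d := by positivity
        linarith
      · have := Real.rpow_le_rpow_of_exponent_le h (by linarith : 2 * s ≤ d)
        rw [Real.rpow_natCast] at this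
        linarith
    calc _ ≤ (1 + (2 * π * ‖x‖) ^ d) * (‖g x‖ * M) := by
          rw [sq]
          gcongr
          exact hM' x
      _ = _ := by simp only [Pi.add_apply, mul_pow]; ring

/-- Fractional Hardy inequality in `L²`: for `0 ≤ s < d/2` there is `C = C(d,s)` such that
`∫ |f(x)|²/|x|^{2s} dx ≤ C ∫ |2πξ|^{2s} |𝓕f(ξ)|² dξ` for every Schwartz function `f`. -/
theorem fractional_hardy_L2 (d : ℕ) (hd : 1 ≤ d) (s : ℝ) (hs : 0 ≤ s)
    (hsd : s < (d : ℝ) / 2) :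
    ∃ C : ℝ, 0 < C ∧ ∀ f : SchwartzMap (EuclideanSpace ℝ (Fin d)) ℂ,
      ∫ x : EuclideanSpace ℝ (Fin d), ‖f x‖ ^ 2 / ‖x‖ ^ (2 * s) ≤
        C * ∫ ξ : EuclideanSpace ℝ (Fin d), (2 * π * ‖ξ‖) ^ (2 * s) * ‖𝓕 (⇑f) ξ‖ ^ 2 := by
  obtain ⟨K, hK, h⟩ := aux_main' d hd s hs hsd
  refine ⟨K + 1, by positivity, fun f => ?_⟩
  have hint := aux_integrable s hs hsd (𝓕 f)
  rw [← SchwartzMap.fourier_coe]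
  have h0 : 0 ≤ ∫ ξ : EuclideanSpace ℝ (Fin d), (2 * π * ‖ξ‖) ^ (2 * s) * ‖𝓕 f ξ‖ ^ 2 :=
    integral_nonneg fun x => by positivity
  rw [integral_eq_lintegral_of_nonneg_ae (Filter.Eventually.of_forall fun x => by positivity)
    (by exact ((f.continuous.measurable.norm.pow_const 2).div
      (measurable_norm.pow_const _)).aestronglyMeasurable)]
  refine ENNReal.toReal_le_of_le_ofReal (by positivity) ((h f).trans ?_)
  rw [ENNReal.ofReal_mul (by positivity), ofReal_integral_eq_lintegral_ofReal hint
    (Filter.Eventually.of_forall fun x => by positivity)]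
  gcongr with ξ
  · linarith
  · rw [ENNReal.ofReal_mul (by positivity), ENNReal.ofReal_pow (norm_nonneg _), ofReal_norm]
    gcongr
    have : 1 ≤ 2 * π := by linarith [Real.pi_gt_three]
    nlinarith [norm_nonneg ξ]
end

section
/- (Stein–Weiss inequality.) Let d ≥ 1, 0 < λ < d, 1 < p < ∞, p ≤ q < ∞, α < d/p′ (p′ the conjugate exponent of p), β < d/q, α + β ≥ 0, and 1/q = 1/p + (λ+α+β)/d − 1. There is a constant C = C(d,q,p,λ,α,β) such that for every measurable f on ℝ^d, ( ∫_{ℝ^d} ( |x|^{−β} ∫_{ℝ^d} |f(y)|/|x−y|^λ dy )^q dx )^{1/q} ≤ C ( ∫_{ℝ^d} ( |f(x)| |x|^{α} )^{p} dx )^{1/p}. -/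
open MeasureTheory Real
open scoped ENNReal NNReal


abbrev Esw (d : ℕ) := EuclideanSpace ℝ (Fin d)

lemma sw_radial (d : ℕ) (hd : 1 ≤ d) (h : ℝ → ℝ) (h0 : ∀ r, 0 ≤ h r)
    (hi : IntegrableOn (fun y : ℝ => y ^ ((d : ℝ) - 1) * h y) (Set.Ioi 0)) :
    ∫⁻ x : Esw d, ENNReal.ofReal (h ‖x‖) =
      ENNReal.ofReal ((d * (volume : Measure (Esw d)).real (Metric.ball 0 1)) *
        ∫ y in Set.Ioi (0 : ℝ), y ^ ((d : ℝ) - 1) * h y) := by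
  have : Nonempty (Fin d) := ⟨⟨0, hd⟩⟩
  have hfr : Module.finrank ℝ (Esw d) = d := by simp [Esw]
  have key : ∀ y : ℝ, y ^ (d - 1) • h y = y ^ ((d : ℝ) - 1) * h y := by
    intro y
    rw [smul_eq_mul, ← Real.rpow_natCast, Nat.cast_sub hd, Nat.cast_one]
  have hI : Integrable (fun x : Esw d => h ‖x‖) := by
    rw [integrable_fun_norm_addHaar (volume : Measure (Esw d)) (f := h), hfr]
    simpa only [key] using hi
  rw [← ofReal_integral_eq_lintegral_ofReal hI (ae_of_all _ fun x => h0 _),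
    integral_fun_norm_addHaar (volume : Measure (Esw d)) h, hfr]
  simp only [key]
  simp [mul_assoc]

lemma sw_near (d : ℕ) (hd : 1 ≤ d) (s : ℝ) (hs : s < d) :
    ∃ C : ℝ≥0∞, C ≠ ⊤ ∧ ∀ R : ℝ≥0∞, R ≠ 0 → R ≠ ⊤ →
      ∫⁻ y : Esw d in {y | ‖y‖ₑ ≤ R}, ‖y‖ₑ ^ (-s) ≤ C * R ^ ((d : ℝ) - s) := by
  have : Nonempty (Fin d) := ⟨⟨0, hd⟩⟩
  set V := (d * (volume : Measure (Esw d)).real (Metric.ball 0 1))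
  have hV : 0 ≤ V := by positivity
  refine ⟨ENNReal.ofReal (V / (d - s)), ENNReal.ofReal_ne_top, fun R hR0 hR => ?_⟩
  lift R to ℝ≥0 using hR
  have hR0' : 0 < (R : ℝ) := by
    have : R ≠ 0 := by exact_mod_cast hR0
    positivity
  set h : ℝ → ℝ := (Set.Ioc 0 (R : ℝ)).indicator (fun r => r ^ (-s)) with hh
  have e1 : ∀ y : ℝ, y ^ ((d : ℝ) - 1) * h y =
      (Set.Ioc 0 (R : ℝ)).indicator (fun r => r ^ ((d : ℝ) - s - 1)) y := by
    intro y
    by_cases hy : y ∈ Set.Ioc 0 (R : ℝ)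
    · simp only [hh, Set.indicator_of_mem hy]
      rw [← Real.rpow_add hy.1]; ring_nf
    · simp only [hh, Set.indicator_of_notMem hy, mul_zero]
  have hItg : IntegrableOn (fun r : ℝ => r ^ ((d : ℝ) - s - 1)) (Set.Ioc 0 (R : ℝ)) := by
    rw [← intervalIntegrable_iff_integrableOn_Ioc_of_le hR0'.le]
    exact intervalIntegral.intervalIntegrable_rpow' (by linarith)
  have e2 := sw_radial d hd h (fun r => Set.indicator_nonneg (fun x hx => Real.rpow_nonneg hx.1.le _) _)
    (by
      simp only [e1]
      exact (hItg.integrable_indicator measurableSet_Ioc).integrableOn)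
  simp only [e1] at e2
  rw [setIntegral_indicator measurableSet_Ioc, Set.inter_eq_right.2 (fun x hx => hx.1),
    ← intervalIntegral.integral_of_le hR0'.le, integral_rpow (Or.inl (by linarith)),
    Real.zero_rpow (by linarith)] at e2
  have e3 : ENNReal.ofReal (V / (d - s)) * (R : ℝ≥0∞) ^ ((d : ℝ) - s) =
      ENNReal.ofReal (V * (((R : ℝ) ^ ((d : ℝ) - s - 1 + 1) - 0) / ((d : ℝ) - s - 1 + 1))) := by
    rw [← ENNReal.ofReal_coe_nnreal, ENNReal.ofReal_rpow_of_pos hR0', ← ENNReal.ofReal_mul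
      (div_nonneg hV (by linarith))]
    congr 1
    simp only [sub_add_cancel, sub_zero]
    ring
  rw [e3, ← e2, ← lintegral_indicator (measurableSet_le measurable_enorm measurable_const)]
  apply lintegral_mono_ae
  have : ∀ᵐ y : Esw d, y ≠ 0 := by simp [ae_iff]
  filter_upwards [this] with y hy
  have hy0 : 0 < ‖y‖ := norm_pos_iff.2 hy
  by_cases hyR : ‖y‖ₑ ≤ R
  · have hyR' : ‖y‖ ≤ R := by
      rw [← ofReal_norm, ← ENNReal.ofReal_coe_nnreal] at hyR
      exact (ENNReal.ofReal_le_ofReal_iff R.coe_nonneg).1 hyR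
    rw [Set.indicator_of_mem (by exact hyR), hh]
    rw [Set.indicator_of_mem (show ‖y‖ ∈ Set.Ioc 0 (R : ℝ) from ⟨hy0, hyR'⟩),
      ← ofReal_norm, ENNReal.ofReal_rpow_of_pos hy0]
  · rw [Set.indicator_of_notMem (by exact hyR)]
    exact zero_le

lemma sw_far (d : ℕ) (hd : 1 ≤ d) (s : ℝ) (hs : d < s) :
    ∃ C : ℝ≥0∞, C ≠ ⊤ ∧ ∀ R : ℝ≥0∞, R ≠ 0 → R ≠ ⊤ →
      ∫⁻ y : Esw d in {y | R < ‖y‖ₑ}, ‖y‖ₑ ^ (-s) ≤ C * R ^ ((d : ℝ) - s) := by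
  have : Nonempty (Fin d) := ⟨⟨0, hd⟩⟩
  set V := (d * (volume : Measure (Esw d)).real (Metric.ball 0 1))
  have hV : 0 ≤ V := by positivity
  refine ⟨ENNReal.ofReal (V / (s - d)), ENNReal.ofReal_ne_top, fun R hR0 hR => ?_⟩
  lift R to ℝ≥0 using hR
  have hR0' : 0 < (R : ℝ) := by
    have : R ≠ 0 := by exact_mod_cast hR0
    positivity
  set h : ℝ → ℝ := (Set.Ioi (R : ℝ)).indicator (fun r => r ^ (-s)) with hh
  have e1 : ∀ y : ℝ, y ^ ((d : ℝ) - 1) * h y =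
      (Set.Ioi (R : ℝ)).indicator (fun r => r ^ ((d : ℝ) - s - 1)) y := by
    intro y
    by_cases hy : y ∈ Set.Ioi (R : ℝ)
    · simp only [hh, Set.indicator_of_mem hy]
      rw [← Real.rpow_add (hR0'.trans hy)]; ring_nf
    · simp only [hh, Set.indicator_of_notMem hy, mul_zero]
  have hItg : IntegrableOn (fun r : ℝ => r ^ ((d : ℝ) - s - 1)) (Set.Ioi (R : ℝ)) := 
    integrableOn_Ioi_rpow_of_lt (by linarith) hR0'
  have e2 := sw_radial d hd h (fun r => Set.indicator_nonneg
    (fun x hx => Real.rpow_nonneg (hR0'.trans hx).le _) _)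
    (by
      simp only [e1]
      exact (hItg.integrable_indicator measurableSet_Ioi).integrableOn)
  simp only [e1] at e2
  rw [setIntegral_indicator measurableSet_Ioi, Set.inter_eq_right.2 (Set.Ioi_subset_Ioi hR0'.le),
    integral_Ioi_rpow_of_lt (by linarith) hR0'] at e2
  have e3 : ENNReal.ofReal (V / (s - d)) * (R : ℝ≥0∞) ^ ((d : ℝ) - s) =
      ENNReal.ofReal (V * (-(R : ℝ) ^ ((d : ℝ) - s - 1 + 1) / ((d : ℝ) - s - 1 + 1))) := by
    rw [← ENNReal.ofReal_coe_nnreal, ENNReal.ofReal_rpow_of_pos hR0', ← ENNReal.ofReal_mul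
      (div_nonneg hV (by linarith))]
    congr 1
    simp only [sub_add_cancel]
    rw [neg_div, ← div_neg, neg_sub]
    ring
  rw [e3, ← e2, ← lintegral_indicator (measurableSet_lt measurable_const measurable_enorm)]
  apply lintegral_mono
  intro y
  by_cases hyR : R < ‖y‖ₑ
  · have hyR' : (R : ℝ) < ‖y‖ := by
      rw [← ofReal_norm, ← ENNReal.ofReal_coe_nnreal] at hyR
      exact (ENNReal.ofReal_lt_ofReal_iff_of_nonneg R.coe_nonneg).1 hyR
    rw [Set.indicator_of_mem (by exact hyR), hh]
    beta_reduce
    rw [Set.indicator_of_mem (by exact hyR'),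
      ← ofReal_norm, ENNReal.ofReal_rpow_of_pos (hR0'.trans hyR')]
  · rw [Set.indicator_of_notMem (by exact hyR)]
    exact zero_le

/-- layer cake for a single extended nonnegative number -/
lemma sw_layer (k : ℝ) (hk : 0 < k) (a : ℝ≥0∞) :
    ∫⁻ t in Set.Ioi (0 : ℝ), ({t : ℝ | ENNReal.ofReal t < a}).indicator
      (fun t => ENNReal.ofReal (k * t ^ (k - 1))) t = a ^ k := by
  have fin : ∀ b : ℝ≥0, ∫⁻ t in Set.Ioi (0 : ℝ), ({t : ℝ | ENNReal.ofReal t < b}).indicator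
      (fun t => ENNReal.ofReal (k * t ^ (k - 1))) t = (b : ℝ≥0∞) ^ k := by
    intro b
    have hm : MeasurableSet {t : ℝ | ENNReal.ofReal t < b} :=
      measurableSet_lt ENNReal.measurable_ofReal measurable_const
    have hset : {t : ℝ | ENNReal.ofReal t < b} ∩ Set.Ioi 0 = Set.Ioo 0 (b : ℝ) := by
      ext t
      simp only [Set.mem_inter_iff, Set.mem_ofPred_eq, Set.mem_Ioi, Set.mem_Ioo]
      rw [and_comm]
      refine and_congr_right fun ht => ?_
      rw [← ENNReal.ofReal_coe_nnreal, ENNReal.ofReal_lt_ofReal_iff_of_nonneg ht.le]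
    rw [lintegral_indicator hm, Measure.restrict_restrict hm, hset,
      restrict_Ioo_eq_restrict_Ioc]
    have hItg : IntervalIntegrable (fun t : ℝ => k * t ^ (k - 1)) volume 0 b :=
      (intervalIntegral.intervalIntegrable_rpow' (by linarith)).const_mul k
    have hItg2 := (intervalIntegrable_iff_integrableOn_Ioc_of_le b.coe_nonneg).1 hItg
    rw [← ofReal_integral_eq_lintegral_ofReal hItg2, ← intervalIntegral.integral_of_le b.coe_nonneg,
      intervalIntegral.integral_const_mul, integral_rpow (Or.inl (by linarith)),
      sub_add_cancel, Real.zero_rpow hk.ne', sub_zero, mul_div_cancel₀ _ hk.ne',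
      ← ENNReal.ofReal_coe_nnreal, ENNReal.ofReal_rpow_of_nonneg b.coe_nonneg hk.le]
    filter_upwards [ae_restrict_mem measurableSet_Ioc] with t ht
    have := Real.rpow_nonneg ht.1.le (k - 1)
    positivity
  induction a with
  | coe b => exact fin b
  | top =>
    rw [ENNReal.top_rpow_of_pos hk, eq_top_iff]
    refine ENNReal.le_of_forall_nnreal_lt fun r _ => ?_
    have h1 : (r : ℝ≥0∞) = ((r ^ (1 / k) : ℝ≥0) : ℝ≥0∞) ^ k := by
      rw [← ENNReal.coe_rpow_of_nonneg _ hk.le, ← NNReal.rpow_mul, one_div_mul_cancel hk.ne',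
        NNReal.rpow_one]
    rw [h1, ← fin]
    refine lintegral_mono fun t => ?_
    refine Set.indicator_le_indicator_of_subset ?_ (fun _ => zero_le) t
    intro t ht
    simp

/-- the operator with kernel `K` is bounded from `L^p` to `L^q` -/
def SWBdd (d : ℕ) (p q : ℝ) (K : Esw d → Esw d → ℝ≥0∞) : Prop :=
  ∃ C : ℝ≥0∞, C ≠ ⊤ ∧ ∀ g : Esw d → ℝ≥0∞, Measurable g →
    ∫⁻ x, (∫⁻ y, K x y * g y) ^ q ≤ C * (∫⁻ y, g y ^ p) ^ (q / p)

lemma sw_schur (d : ℕ) (p p' : ℝ) (hpp : p.HolderConjugate p') (K : Esw d → Esw d → ℝ≥0∞)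
    (hK : Measurable (Function.uncurry K)) (w : Esw d → ℝ≥0∞) (hw : Measurable w)
    (hw0 : ∀ᵐ y, w y ≠ 0 ∧ w y ≠ ⊤) (A B : ℝ≥0∞)
    (h1 : ∀ᵐ x, ∫⁻ y, K x y * w y ^ p' ≤ A * w x ^ p')
    (h2 : ∀ᵐ y, ∫⁻ x, K x y * w x ^ p ≤ B * w y ^ p)
    (g : Esw d → ℝ≥0∞) (hg : Measurable g) :
    ∫⁻ x, (∫⁻ y, K x y * g y) ^ p ≤ A ^ (p / p') * B * ∫⁻ y, g y ^ p := by
  have hp := hpp.pos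
  have hp' := hpp.symm.pos
  have hKx : ∀ x, Measurable (K x) := fun x => hK.of_uncurry_left
  have hKy : ∀ y, Measurable (fun x => K x y) := fun y => hK.of_uncurry_right
  have step : ∀ᵐ x, (∫⁻ y, K x y * g y) ^ p ≤
      A ^ (p / p') * ∫⁻ y, w x ^ p * (K x y * ((w y)⁻¹ ^ p * g y ^ p)) := by
    filter_upwards [h1] with x hx
    have e1 : ∫⁻ y, K x y * g y ≤
        ∫⁻ y, ((fun y => K x y ^ (1 / p') * w y) * (fun y => K x y ^ (1 / p) * ((w y)⁻¹ * g y))) y := by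
      refine lintegral_mono_ae ?_
      filter_upwards [hw0] with y hy
      simp only [Pi.mul_apply]
      have a1 : K x y = K x y ^ (1 / p') * K x y ^ (1 / p) := by
        rw [← ENNReal.rpow_add_of_nonneg _ _ (by positivity) (by positivity)]
        have : 1 / p' + 1 / p = 1 := by
          have := hpp.inv_add_inv_eq_one
          rw [one_div, one_div]; linarith
        rw [this, ENNReal.rpow_one]
      have a2 : w y * (w y)⁻¹ = 1 := ENNReal.mul_inv_cancel hy.1 hy.2
      calc K x y * g y = (K x y ^ (1 / p') * K x y ^ (1 / p)) * (w y * (w y)⁻¹) * g y := by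
            rw [← a1, a2, mul_one]
        _ ≤ _ := by apply le_of_eq; ring
    have e2 := ENNReal.lintegral_mul_le_Lp_mul_Lq volume hpp.symm
      (f := fun y => K x y ^ (1 / p') * w y) (g := fun y => K x y ^ (1 / p) * ((w y)⁻¹ * g y))
      (by have := hKx x; fun_prop) (by have := hKx x; fun_prop)
    have e3 : ∀ y, (K x y ^ (1 / p') * w y) ^ p' = K x y * w y ^ p' := by
      intro y
      rw [ENNReal.mul_rpow_of_nonneg _ _ hp'.le, ← ENNReal.rpow_mul, one_div_mul_cancel hp'.ne',
        ENNReal.rpow_one]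
    have e4 : ∀ y, (K x y ^ (1 / p) * ((w y)⁻¹ * g y)) ^ p = K x y * ((w y)⁻¹ ^ p * g y ^ p) := by
      intro y
      rw [ENNReal.mul_rpow_of_nonneg _ _ hp.le, ← ENNReal.rpow_mul, one_div_mul_cancel hp.ne',
        ENNReal.rpow_one, ENNReal.mul_rpow_of_nonneg _ _ hp.le]
    simp only [e3, e4] at e2
    have e5 := ENNReal.rpow_le_rpow (e1.trans e2) hp.le
    refine e5.trans ?_
    rw [ENNReal.mul_rpow_of_nonneg _ _ hp.le, ← ENNReal.rpow_mul, ← ENNReal.rpow_mul,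
      one_div_mul_cancel hp.ne', ENNReal.rpow_one,
      lintegral_const_mul _ (by have := hKx x; fun_prop), ← mul_assoc]
    refine mul_le_mul_left ?_ _
    calc _ ≤ (A * w x ^ p') ^ (1 / p' * p) := ENNReal.rpow_le_rpow hx (by positivity)
      _ = _ := by
        rw [ENNReal.mul_rpow_of_nonneg _ _ (by positivity), ← ENNReal.rpow_mul]
        congr 2 <;> field_simp
  have hmeas : Measurable (fun z : Esw d × Esw d =>
      w z.1 ^ p * (K z.1 z.2 * ((w z.2)⁻¹ ^ p * g z.2 ^ p))) := by
    have : Measurable fun z : Esw d × Esw d => K z.1 z.2 := hK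
    fun_prop
  calc ∫⁻ x, (∫⁻ y, K x y * g y) ^ p
      ≤ ∫⁻ x, A ^ (p / p') * ∫⁻ y, w x ^ p * (K x y * ((w y)⁻¹ ^ p * g y ^ p)) :=
        lintegral_mono_ae step
    _ = A ^ (p / p') * ∫⁻ x, ∫⁻ y, w x ^ p * (K x y * ((w y)⁻¹ ^ p * g y ^ p)) :=
        lintegral_const_mul _ hmeas.lintegral_prod_right'
    _ = A ^ (p / p') * ∫⁻ y, ∫⁻ x, w x ^ p * (K x y * ((w y)⁻¹ ^ p * g y ^ p)) := by
        rw [lintegral_lintegral_swap hmeas.aemeasurable]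
    _ ≤ A ^ (p / p') * ∫⁻ y, B * g y ^ p := by
        refine mul_le_mul_right ?_ _
        refine lintegral_mono_ae ?_
        filter_upwards [h2, hw0] with y hy hy0
        have a2 : w y ^ p * (w y)⁻¹ ^ p = 1 := by
          rw [← ENNReal.mul_rpow_of_nonneg _ _ hp.le, ENNReal.mul_inv_cancel hy0.1 hy0.2,
            ENNReal.one_rpow]
        calc ∫⁻ x, w x ^ p * (K x y * ((w y)⁻¹ ^ p * g y ^ p))
            = ∫⁻ x, ((w y)⁻¹ ^ p * g y ^ p) * (K x y * w x ^ p) := by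
              congr 1; ext x; ring
          _ = ((w y)⁻¹ ^ p * g y ^ p) * ∫⁻ x, (K x y * w x ^ p) :=
              lintegral_const_mul _ (by have := hKy y; fun_prop)
          _ ≤ ((w y)⁻¹ ^ p * g y ^ p) * (B * w y ^ p) := mul_le_mul_right hy _
          _ = B * g y ^ p * (w y ^ p * (w y)⁻¹ ^ p) := by ring
          _ = _ := by rw [a2, mul_one]
    _ = _ := by rw [lintegral_const_mul _ (by fun_prop), mul_assoc]

lemma sw_interp (d : ℕ) (p p' q : ℝ) (hpp : p.HolderConjugate p') (hpq : p ≤ q)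
    (K : Esw d → Esw d → ℝ≥0∞)
    (hK : Measurable (Function.uncurry K)) (τ : Esw d → ℝ≥0∞) (hτ : Measurable τ) (A B : ℝ≥0∞) (hA : A ≠ ⊤) (hB : B ≠ ⊤)
    (h1 : ∀ᵐ x, ∫⁻ y, K x y ^ p' ≤ A * τ x ^ p')
    (h2 : ∀ g : Esw d → ℝ≥0∞, Measurable g →
      ∫⁻ x, (∫⁻ y, (K x y * τ x ^ ((q - p) / p)) * g y) ^ p ≤ B * ∫⁻ y, g y ^ p) :
    SWBdd d p q K := by
  have hp := hpp.pos
  have hp' := hpp.symm.pos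
  have hKx : ∀ x, Measurable (K x) := fun x => hK.of_uncurry_left
  refine ⟨(A ^ (1 / p')) ^ (q - p) * B, ?_, fun g hg => ?_⟩
  · refine ENNReal.mul_ne_top ?_ hB
    exact ENNReal.rpow_ne_top_of_nonneg (by linarith)
      (ENNReal.rpow_ne_top_of_nonneg (by positivity) hA)
  set G := ∫⁻ y, g y ^ p with hG
  have step : ∀ᵐ x, (∫⁻ y, K x y * g y) ^ q ≤ ((A ^ (1 / p')) ^ (q - p) * G ^ ((q - p) / p)) *
      (∫⁻ y, (K x y * τ x ^ ((q - p) / p)) * g y) ^ p := by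
    filter_upwards [h1] with x hx
    have e2 := ENNReal.lintegral_mul_le_Lp_mul_Lq volume hpp.symm (f := K x) (g := g)
      (hKx x).aemeasurable hg.aemeasurable
    simp only [Pi.mul_apply] at e2
    have e3 : (∫⁻ y, K x y ^ p') ^ (1 / p') ≤ A ^ (1 / p') * τ x := by
      calc _ ≤ (A * τ x ^ p') ^ (1 / p') := ENNReal.rpow_le_rpow hx (by positivity)
        _ = _ := by
          rw [ENNReal.mul_rpow_of_nonneg _ _ (by positivity), ← ENNReal.rpow_mul,
            mul_one_div_cancel hp'.ne', ENNReal.rpow_one]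
    set H := ∫⁻ y, K x y * g y with hH
    have e4 : H ≤ A ^ (1 / p') * τ x * G ^ (1 / p) := e2.trans (mul_le_mul_left e3 _)
    have e5 : ∫⁻ y, (K x y * τ x ^ ((q - p) / p)) * g y = τ x ^ ((q - p) / p) * H := by
      rw [hH, ← lintegral_const_mul _ (by have := hKx x; fun_prop)]
      congr 1; ext y; ring
    rw [e5, ENNReal.mul_rpow_of_nonneg _ _ hp.le, ← ENNReal.rpow_mul (τ x), div_mul_cancel₀ _ hp.ne']
    calc H ^ q = H ^ (q - p) * H ^ p := by
          rw [← ENNReal.rpow_add_of_nonneg _ _ (by linarith) hp.le]; congr 1; ring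
      _ ≤ (A ^ (1 / p') * τ x * G ^ (1 / p)) ^ (q - p) * H ^ p :=
          mul_le_mul_left (ENNReal.rpow_le_rpow e4 (by linarith)) _
      _ = _ := by
          rw [ENNReal.mul_rpow_of_nonneg _ _ (by linarith),
            ENNReal.mul_rpow_of_nonneg _ _ (by linarith), ← ENNReal.rpow_mul G,
            show 1 / p * (q - p) = (q - p) / p by ring]
          ring
  calc ∫⁻ x, (∫⁻ y, K x y * g y) ^ q ≤ ∫⁻ x, ((A ^ (1 / p')) ^ (q - p) * G ^ ((q - p) / p)) *
      (∫⁻ y, (K x y * τ x ^ ((q - p) / p)) * g y) ^ p := lintegral_mono_ae step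
    _ ≤ ((A ^ (1 / p')) ^ (q - p) * G ^ ((q - p) / p)) * (B * G) := by
      rw [lintegral_const_mul]
      · exact mul_le_mul_right (h2 g hg) _
      · have hm : Measurable (fun z : Esw d × Esw d =>
            K z.1 z.2 * τ z.1 ^ ((q - p) / p) * g z.2) := by
          have : Measurable fun z : Esw d × Esw d => K z.1 z.2 := hK
          fun_prop
        exact hm.lintegral_prod_right'.pow_const _
    _ = ((A ^ (1 / p')) ^ (q - p) * B) * (G ^ ((q - p) / p) * G ^ (1 : ℝ)) := by
      rw [ENNReal.rpow_one]; ring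
    _ = _ := by
      rw [← ENNReal.rpow_add_of_nonneg _ _ (div_nonneg (by linarith) hp.le) zero_le_one]
      congr 2
      field_simp
      ring

lemma sw_enorm_pos {d : ℕ} {x : Esw d} (hx : x ≠ 0) : ‖x‖ₑ ≠ 0 := by simpa using hx

lemma sw_ae_ne {d : ℕ} (hd : 1 ≤ d) : ∀ᵐ y : Esw d, y ≠ 0 := by
  have : Nonempty (Fin d) := ⟨⟨0, hd⟩⟩
  simp [ae_iff]

/-- near kernel -/
noncomputable def swk (d : ℕ) (μ : ℝ) (r : ℝ≥0∞) : Esw d → ℝ≥0∞ :=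
  ({z | ‖z‖ₑ ≤ r}).indicator fun z => ‖z‖ₑ ^ (-μ)

/-- far kernel -/
noncomputable def swl (d : ℕ) (μ : ℝ) (r : ℝ≥0∞) : Esw d → ℝ≥0∞ :=
  ({z | r < ‖z‖ₑ}).indicator fun z => ‖z‖ₑ ^ (-μ)

lemma swk_meas (d : ℕ) (μ : ℝ) (r : ℝ≥0∞) : Measurable (swk d μ r) :=
  Measurable.indicator (by fun_prop) (measurableSet_le measurable_enorm measurable_const)

lemma swl_meas (d : ℕ) (μ : ℝ) (r : ℝ≥0∞) : Measurable (swl d μ r) :=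
  Measurable.indicator (by fun_prop) (measurableSet_lt measurable_const measurable_enorm)

lemma swk_add_swl (d : ℕ) (μ : ℝ) (r : ℝ≥0∞) (z : Esw d) :
    ‖z‖ₑ ^ (-μ) = swk d μ r z + swl d μ r z := by
  unfold swk swl
  by_cases h : ‖z‖ₑ ≤ r
  · rw [Set.indicator_of_mem (by exact h), Set.indicator_of_notMem (by simpa using h), add_zero]
  · rw [Set.indicator_of_notMem (by exact h), Set.indicator_of_mem (by simpa using h), zero_add]

lemma swk_int (d : ℕ) (μ : ℝ) (r : ℝ≥0∞) :
    ∫⁻ z, swk d μ r z = ∫⁻ y : Esw d in {y | ‖y‖ₑ ≤ r}, ‖y‖ₑ ^ (-μ) :=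
  lintegral_indicator (measurableSet_le measurable_enorm measurable_const) _

lemma swl_int (d : ℕ) (μ e : ℝ) (he : 0 < e) (r : ℝ≥0∞) :
    ∫⁻ z, swl d μ r z ^ e = ∫⁻ y : Esw d in {y | r < ‖y‖ₑ}, ‖y‖ₑ ^ (-(μ * e)) := by
  rw [← lintegral_indicator (measurableSet_lt measurable_const measurable_enorm)]
  congr 1; ext z
  unfold swl
  by_cases h : r < ‖z‖ₑ
  · rw [Set.indicator_of_mem (by exact h), Set.indicator_of_mem (by exact h), ← ENNReal.rpow_mul]
    congr 1; ring
  · rw [Set.indicator_of_notMem (by exact h), Set.indicator_of_notMem (by exact h),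
      ENNReal.zero_rpow_of_pos he]

lemma sw_hls_unit (d : ℕ) (hd : 1 ≤ d) (μ p p' q : ℝ) (hpp : p.HolderConjugate p')
    (hq : 0 < q) (hμ : μ < d) (hscal : 1 / q = 1 / p + μ / d - 1) :
    ∃ C : ℝ≥0∞, C ≠ ⊤ ∧ ∀ g : Esw d → ℝ≥0∞, Measurable g → ∫⁻ y, g y ^ p ≤ 1 →
      ∫⁻ x, (∫⁻ y, ‖x - y‖ₑ ^ (-μ) * g y) ^ q ≤ C := by
  have hp := hpp.pos
  have hp' := hpp.symm.pos
  have hinv : 1 / p + 1 / p' = 1 := by simpa using hpp.inv_add_inv_eq_one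
  have hd0 : (0 : ℝ) < d := by exact_mod_cast hd
  have hμ1 : μ = d / q + d / p' := by
    have : μ / d = 1 / q + 1 / p' := by linarith
    field_simp at this ⊢
    linarith
  have hμp : d < μ * p' := by
    rw [hμ1, add_mul, div_mul_cancel₀ _ hp'.ne']
    have : 0 < d / q * p' := by positivity
    linarith
  obtain ⟨C2, hC2, near⟩ := sw_near d hd μ hμ
  obtain ⟨C1, hC1, far⟩ := sw_far d hd (μ * p') hμp
  set c1 := C1 ^ (1 / p') with hc1
  have hc1t : c1 ≠ ⊤ := ENNReal.rpow_ne_top_of_nonneg (by positivity) hC1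
  set M := c1 + C2 + 1 with hM
  have hMt : M ≠ ⊤ := by simp [hM, hc1t, hC2]
  have hM0 : M ≠ 0 := by simp [hM]
  refine ⟨M ^ q * (C2 * ENNReal.ofReal p'), ENNReal.mul_ne_top
    (ENNReal.rpow_ne_top_of_nonneg hq.le hMt) (ENNReal.mul_ne_top hC2 ENNReal.ofReal_ne_top),
    fun g hg hg1 => ?_⟩
  set T : Esw d → ℝ≥0∞ := fun x => ∫⁻ y, ‖x - y‖ₑ ^ (-μ) * g y with hT
  have hTm : Measurable T := by
    have : Measurable fun z : Esw d × Esw d => ‖z.1 - z.2‖ₑ ^ (-μ) * g z.2 := by fun_prop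
    exact this.lintegral_prod_right'
  have dist : ∀ t : ℝ, 0 < t → volume {x | ENNReal.ofReal t < T x / M} ≤
      C2 * ENNReal.ofReal t ^ (-(q / p)) *
        ∫⁻ y, ({y | ENNReal.ofReal t ^ (q / p) < g y}).indicator g y := by
    intro t ht
    set tt := ENNReal.ofReal t with htt
    have tt0 : tt ≠ 0 := by simpa [htt] using ht
    have ttt : tt ≠ ⊤ := ENNReal.ofReal_ne_top
    set r := tt ^ (-(q / d)) with hr
    have hr0 : r ≠ 0 := by simp [hr, ENNReal.rpow_eq_zero_iff, tt0, ttt]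
    have hrt : r ≠ ⊤ := by simp [hr, ENNReal.rpow_eq_top_iff, tt0, ttt]
    set g1 := ({y | tt ^ (q / p) < g y}).indicator g with hg1def
    have hg1m : Measurable g1 := hg.indicator (measurableSet_lt measurable_const hg)
    have hkI : ∫⁻ z, swk d μ r z ≤ C2 * tt ^ (1 - q / p) := by
      rw [swk_int]
      refine (near r hr0 hrt).trans_eq ?_
      rw [hr, ← ENNReal.rpow_mul]
      congr 2
      have : μ = d * (1 / q - 1 / p + 1) := by
        have : μ / d = 1 / q - 1 / p + 1 := by linarith
        field_simp at this ⊢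
        linarith
      rw [this]
      field_simp
      ring
    have hlI : (∫⁻ z, swl d μ r z ^ p') ^ (1 / p') ≤ c1 * tt := by
      rw [swl_int _ _ _ hp']
      refine (ENNReal.rpow_le_rpow (far r hr0 hrt) (by positivity)).trans_eq ?_
      rw [ENNReal.mul_rpow_of_nonneg _ _ (by positivity), hr, ← ENNReal.rpow_mul,
        ← ENNReal.rpow_mul]
      have : -(q / d) * ((d - μ * p') * (1 / p')) = 1 := by
        rw [hμ1]
        field_simp
        ring
      rw [this, ENNReal.rpow_one]
    set Rt : Esw d → ℝ≥0∞ := fun x => ∫⁻ y, swk d μ r (x - y) * g1 y with hRt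
    have hsub : Measurable fun z : Esw d × Esw d => z.1 - z.2 := by fun_prop
    have hkm2 : Measurable fun z : Esw d × Esw d => swk d μ r (z.1 - z.2) * g1 z.2 :=
      ((swk_meas d μ r).comp hsub).mul (hg1m.comp measurable_snd)
    have hRm : Measurable Rt := hkm2.lintegral_prod_right'
    have hkx : ∀ x, Measurable fun y => swk d μ r (x - y) := fun x =>
      (swk_meas d μ r).comp (by fun_prop)
    have hlx : ∀ x, Measurable fun y => swl d μ r (x - y) := fun x =>
      (swl_meas d μ r).comp (by fun_prop)
    have hTle : ∀ x, T x ≤ c1 * tt + C2 * tt + Rt x := by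
      intro x
      have b1 : T x ≤ ∫⁻ y, (swl d μ r (x - y) * g y +
          (swk d μ r (x - y) * tt ^ (q / p) + swk d μ r (x - y) * g1 y)) := by
        refine lintegral_mono fun y => ?_
        simp only
        rw [swk_add_swl d μ r (x - y), add_mul, add_comm, ← mul_add]
        gcongr
        by_cases hy : tt ^ (q / p) < g y
        · rw [hg1def, Set.indicator_of_mem (by exact hy)]; exact le_add_self
        · exact (not_lt.1 hy).trans le_self_add
      have b2 : ∫⁻ y, swl d μ r (x - y) * g y ≤ c1 * tt := by
        have e2 := ENNReal.lintegral_mul_le_Lp_mul_Lq volume hpp.symm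
          (f := fun y => swl d μ r (x - y)) (g := g) (hlx x).aemeasurable hg.aemeasurable
        simp only [Pi.mul_apply] at e2
        rw [lintegral_sub_left_eq_self (fun z => swl d μ r z ^ p') x] at e2
        refine e2.trans ?_
        calc _ ≤ (c1 * tt) * 1 := by
              refine mul_le_mul' hlI ?_
              exact ENNReal.rpow_le_one hg1 (by positivity)
          _ = _ := mul_one _
      have b3 : ∫⁻ y, swk d μ r (x - y) * tt ^ (q / p) ≤ C2 * tt := by
        rw [lintegral_mul_const _ (hkx x), lintegral_sub_left_eq_self (fun z => swk d μ r z) x]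
        calc _ ≤ C2 * tt ^ (1 - q / p) * tt ^ (q / p) := mul_le_mul_left hkI _
          _ = C2 * tt := by
            rw [mul_assoc, ← ENNReal.rpow_add _ _ tt0 ttt, sub_add_cancel, ENNReal.rpow_one]
      refine b1.trans ?_
      have m1 : Measurable fun y => swl d μ r (x - y) * g y := (hlx x).mul hg
      have m2 : Measurable fun y => swk d μ r (x - y) * tt ^ (q / p) := (hkx x).mul_const _
      rw [lintegral_add_left m1, lintegral_add_left m2, ← add_assoc]
      exact add_le_add (add_le_add b2 b3) le_rfl
    have hsubset : {x | tt < T x / M} ⊆ {x | tt ≤ Rt x} := by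
      intro x hx
      by_contra hcon
      have hcon' : Rt x < tt := not_le.1 hcon
      have hx' : tt * M < T x := (ENNReal.lt_div_iff_mul_lt (Or.inl hM0) (Or.inl hMt)).1 hx
      refine absurd hx' (not_lt.2 ?_)
      calc T x ≤ c1 * tt + C2 * tt + Rt x := hTle x
        _ ≤ c1 * tt + C2 * tt + tt := by gcongr
        _ = tt * M := by rw [hM]; ring
    refine (measure_mono hsubset).trans ?_
    refine (meas_ge_le_lintegral_div hRm.aemeasurable tt0 ttt).trans ?_
    have hRI : ∫⁻ x, Rt x ≤ C2 * tt ^ (1 - q / p) * ∫⁻ y, g1 y := by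
      rw [hRt, lintegral_lintegral_swap hkm2.aemeasurable, ← lintegral_const_mul _ hg1m]
      refine lintegral_mono fun y => ?_
      simp only
      have m1 : Measurable fun x => swk d μ r (x - y) := (swk_meas d μ r).comp (by fun_prop)
      rw [lintegral_mul_const _ m1,
        lintegral_sub_right_eq_self (fun z => swk d μ r z) y]
      exact mul_le_mul_left hkI _
    calc _ ≤ (C2 * tt ^ (1 - q / p) * ∫⁻ y, g1 y) / tt := ENNReal.div_le_div_right hRI _
      _ = C2 * (tt ^ (1 - q / p) * tt ^ (-1 : ℝ)) * ∫⁻ y, g1 y := by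
        rw [ENNReal.div_eq_inv_mul, ENNReal.rpow_neg_one]; ring
      _ = _ := by
        rw [← ENNReal.rpow_add _ _ tt0 ttt]
        congr 3; ring
  set k := q / p' with hk
  have hk0 : 0 < k := by positivity
  have hkq : k = q - q / p := by
    have : 1 / p' = 1 - 1 / p := by linarith
    rw [hk, div_eq_mul_one_div, this]; ring
  have main : ∫⁻ x, (T x / M) ^ q ≤ C2 * ENNReal.ofReal p' := by
    calc ∫⁻ x, (T x / M) ^ q
        = ∫⁻ x, ∫⁻ t in Set.Ioi (0 : ℝ), ({t : ℝ | ENNReal.ofReal t < T x / M}).indicator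
            (fun t => ENNReal.ofReal (q * t ^ (q - 1))) t := by
          simp only [sw_layer q hq]
      _ = ∫⁻ t in Set.Ioi (0 : ℝ), ∫⁻ x, ({t : ℝ | ENNReal.ofReal t < T x / M}).indicator
            (fun t => ENNReal.ofReal (q * t ^ (q - 1))) t := by
          refine lintegral_lintegral_swap (Measurable.aemeasurable ?_)
          have hms : MeasurableSet {z : Esw d × ℝ | ENNReal.ofReal z.2 < T z.1 / M} :=
            measurableSet_lt (by fun_prop) (by fun_prop)
          have : Measurable fun z : Esw d × ℝ => ENNReal.ofReal (q * z.2 ^ (q - 1)) := by fun_prop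
          exact this.indicator hms
      _ ≤ ∫⁻ t in Set.Ioi (0 : ℝ), ∫⁻ y, (C2 * ENNReal.ofReal p') *
            (g y * ({t : ℝ | ENNReal.ofReal t < g y ^ (p / q)}).indicator
            (fun t => ENNReal.ofReal (k * t ^ (k - 1))) t) := by
          refine setLIntegral_mono_ae' measurableSet_Ioi (ae_of_all _ fun t (ht : 0 < t) => ?_)
          have ms1 : MeasurableSet {x | ENNReal.ofReal t < T x / M} :=
            measurableSet_lt measurable_const (by fun_prop)
          have tt0 : ENNReal.ofReal t ≠ 0 := by simpa using ht
          calc ∫⁻ x, ({t : ℝ | ENNReal.ofReal t < T x / M}).indicator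
                (fun t => ENNReal.ofReal (q * t ^ (q - 1))) t
              = ENNReal.ofReal (q * t ^ (q - 1)) * volume {x | ENNReal.ofReal t < T x / M} := by
                rw [← lintegral_indicator_const ms1]
                rfl
            _ ≤ ENNReal.ofReal (q * t ^ (q - 1)) * (C2 * ENNReal.ofReal t ^ (-(q / p)) *
                ∫⁻ y, ({y | ENNReal.ofReal t ^ (q / p) < g y}).indicator g y) :=
                mul_le_mul_right (dist t ht) _
            _ = (C2 * ENNReal.ofReal p') * ENNReal.ofReal (k * t ^ (k - 1)) *
                ∫⁻ y, ({y | ENNReal.ofReal t ^ (q / p) < g y}).indicator g y := by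
                have : ENNReal.ofReal (q * t ^ (q - 1)) * ENNReal.ofReal t ^ (-(q / p)) =
                    ENNReal.ofReal p' * ENNReal.ofReal (k * t ^ (k - 1)) := by
                  rw [ENNReal.ofReal_rpow_of_pos ht, ← ENNReal.ofReal_mul (by positivity),
                    ← ENNReal.ofReal_mul hp'.le, mul_assoc, ← Real.rpow_add ht, ← mul_assoc]
                  congr 2
                  · rw [hk]; field_simp
                  · rw [hkq]; congr 1; ring
                rw [mul_assoc C2 (ENNReal.ofReal p'), ← this]; ring
            _ = _ := by
                rw [← lintegral_const_mul _ (hg.indicator (measurableSet_lt measurable_const hg))]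
                congr 1; ext y
                have hiff : ENNReal.ofReal t ^ (q / p) < g y ↔ ENNReal.ofReal t < g y ^ (p / q) := by
                  have : p / q = (q / p)⁻¹ := by rw [inv_div]
                  rw [this, ENNReal.lt_rpow_inv_iff (by positivity)]
                by_cases hy : ENNReal.ofReal t < g y ^ (p / q)
                · rw [Set.indicator_of_mem (by exact hiff.2 hy), Set.indicator_of_mem (by exact hy)]
                  ring
                · rw [Set.indicator_of_notMem (by exact fun h => hy (hiff.1 h)),
                    Set.indicator_of_notMem (by exact hy)]
                  simp
      _ = ∫⁻ y, ∫⁻ t in Set.Ioi (0 : ℝ), (C2 * ENNReal.ofReal p') *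
            (g y * ({t : ℝ | ENNReal.ofReal t < g y ^ (p / q)}).indicator
            (fun t => ENNReal.ofReal (k * t ^ (k - 1))) t) := by
          refine lintegral_lintegral_swap (Measurable.aemeasurable ?_)
          have hms : MeasurableSet {z : ℝ × Esw d | ENNReal.ofReal z.1 < g z.2 ^ (p / q)} :=
            measurableSet_lt (by fun_prop) (by fun_prop)
          have h3 : Measurable fun z : ℝ × Esw d => ENNReal.ofReal (k * z.1 ^ (k - 1)) := by
            fun_prop
          exact Measurable.const_mul
            ((hg.comp measurable_snd).mul (h3.indicator hms)) _
      _ = ∫⁻ y, (C2 * ENNReal.ofReal p') * g y ^ p := by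
          congr 1; ext y
          have hm3 : Measurable (({t : ℝ | ENNReal.ofReal t < g y ^ (p / q)}).indicator
            (fun t => ENNReal.ofReal (k * t ^ (k - 1)))) :=
            Measurable.indicator (by fun_prop) (measurableSet_lt (by fun_prop) (by fun_prop))
          rw [lintegral_const_mul _ (hm3.const_mul _), lintegral_const_mul _ hm3, sw_layer k hk0,
            ← ENNReal.rpow_mul]
          congr 1
          nth_rewrite 1 [← ENNReal.rpow_one (g y)]
          rw [← ENNReal.rpow_add_of_nonneg _ _ zero_le_one (by positivity)]
          congr 1
          rw [hkq]; field_simp; ring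
      _ = C2 * ENNReal.ofReal p' * ∫⁻ y, g y ^ p := lintegral_const_mul _ (by fun_prop)
      _ ≤ C2 * ENNReal.ofReal p' * 1 := mul_le_mul_right hg1 _
      _ = _ := mul_one _
  calc ∫⁻ x, T x ^ q = ∫⁻ x, M ^ q * (T x / M) ^ q := by
        congr 1; ext x
        rw [← ENNReal.mul_rpow_of_nonneg _ _ hq.le, ENNReal.mul_div_cancel hM0 hMt]
    _ = M ^ q * ∫⁻ x, (T x / M) ^ q := lintegral_const_mul _ (by fun_prop)
    _ ≤ _ := mul_le_mul_right main _

lemma sw_hls (d : ℕ) (hd : 1 ≤ d) (μ p p' q : ℝ) (hpp : p.HolderConjugate p')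
    (hq : 0 < q) (hμ : μ < d) (hscal : 1 / q = 1 / p + μ / d - 1) :
    SWBdd d p q (fun x y => ‖x - y‖ₑ ^ (-μ)) := by
  have hp := hpp.pos
  obtain ⟨C, hC, h⟩ := sw_hls_unit d hd μ p p' q hpp hq hμ hscal
  refine ⟨C + 1, by simp [hC], fun g hg => ?_⟩
  set G := ∫⁻ y, g y ^ p with hG
  by_cases hGt : G = ⊤
  · rw [hGt, ENNReal.top_rpow_of_pos (by positivity), ENNReal.mul_top (by simp)]
    exact le_top
  by_cases hG0 : G = 0
  · have : ∀ᵐ y, g y = 0 := by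
      have := (lintegral_eq_zero_iff (by fun_prop)).1 hG0
      filter_upwards [this] with y hy
      exact (ENNReal.rpow_eq_zero_iff_of_pos hp).1 hy
    have h0 : ∀ x : Esw d, ∫⁻ y, ‖x - y‖ₑ ^ (-μ) * g y = 0 := by
      intro x
      rw [← lintegral_zero (α := Esw d) (μ := volume)]
      refine lintegral_congr_ae ?_
      filter_upwards [this] with y hy
      simp [hy]
    simp only [h0, ENNReal.zero_rpow_of_pos hq]
    simp
  set c := G ^ (1 / p) with hc
  have hc0 : c ≠ 0 := by simp [hc, ENNReal.rpow_eq_zero_iff, hG0, hGt]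
  have hct : c ≠ ⊤ := by simp [hc, ENNReal.rpow_eq_top_iff, hG0, hGt]
  have hcp : c ^ p = G := by
    rw [hc, ← ENNReal.rpow_mul, one_div_mul_cancel hp.ne', ENNReal.rpow_one]
  have hcq : c ^ q = G ^ (q / p) := by
    rw [hc, ← ENNReal.rpow_mul]; congr 1; ring
  have h1 := h (fun y => c⁻¹ * g y) (by fun_prop) (by
    simp only [ENNReal.mul_rpow_of_nonneg _ _ hp.le]
    rw [lintegral_const_mul _ (by fun_prop), ← hG, ENNReal.inv_rpow, hcp,
      ENNReal.inv_mul_cancel hG0 hGt])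
  have h2 : ∀ x : Esw d, ∫⁻ y, ‖x - y‖ₑ ^ (-μ) * g y =
      c * ∫⁻ y, ‖x - y‖ₑ ^ (-μ) * (c⁻¹ * g y) := by
    intro x
    rw [← lintegral_const_mul _ (by fun_prop)]
    congr 1; ext y
    calc _ = ‖x - y‖ₑ ^ (-μ) * g y * (c * c⁻¹) := by
          rw [ENNReal.mul_inv_cancel hc0 hct, mul_one]
      _ = _ := by ring
  simp only [h2, ENNReal.mul_rpow_of_nonneg _ _ hq.le]
  rw [lintegral_const_mul' _ _ (ENNReal.rpow_ne_top_of_nonneg hq.le hct), hcq, mul_comm]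
  gcongr
  exact h1.trans le_self_add

lemma sw_near_if (d : ℕ) (hd : 1 ≤ d) (s : ℝ) (hs : s < d) :
    ∃ C : ℝ≥0∞, C ≠ ⊤ ∧ ∀ (c : ℝ≥0∞) (x : Esw d), x ≠ 0 →
      ∫⁻ y : Esw d, (if ‖y‖ₑ ≤ ‖x‖ₑ then c * ‖y‖ₑ ^ (-s) else 0) ≤
        c * (C * ‖x‖ₑ ^ ((d : ℝ) - s)) := by
  obtain ⟨C, hC, h⟩ := sw_near d hd s hs
  refine ⟨C, hC, fun c x hx => ?_⟩
  refine le_trans (le_of_eq ?_) (mul_le_mul_right (h ‖x‖ₑ (sw_enorm_pos hx) enorm_ne_top) c)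
  rw [← lintegral_indicator (measurableSet_le measurable_enorm measurable_const),
    ← lintegral_const_mul _ (Measurable.indicator (by fun_prop)
      (measurableSet_le measurable_enorm measurable_const))]
  congr 1; ext y
  by_cases hy : ‖y‖ₑ ≤ ‖x‖ₑ
  · rw [if_pos hy, Set.indicator_of_mem (by exact hy)]
  · rw [if_neg hy, Set.indicator_of_notMem (by exact hy), mul_zero]

lemma sw_far_if (d : ℕ) (hd : 1 ≤ d) (s : ℝ) (hs : d < s) :
    ∃ C : ℝ≥0∞, C ≠ ⊤ ∧ ∀ (c : ℝ≥0∞) (x : Esw d), x ≠ 0 →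
      ∫⁻ y : Esw d, (if ‖x‖ₑ ≤ ‖y‖ₑ then c * ‖y‖ₑ ^ (-s) else 0) ≤
        c * (C * ‖x‖ₑ ^ ((d : ℝ) - s)) := by
  obtain ⟨C, hC, h⟩ := sw_far d hd s hs
  have h20 : (2 : ℝ≥0∞)⁻¹ ≠ 0 := by simp
  have h2t : (2 : ℝ≥0∞)⁻¹ ≠ ⊤ := by simp
  refine ⟨C * (2⁻¹ : ℝ≥0∞) ^ ((d : ℝ) - s), ENNReal.mul_ne_top hC
    (by simp [ENNReal.rpow_eq_top_iff]), fun c x hx => ?_⟩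
  have hx0 := sw_enorm_pos hx
  have h' := h (2⁻¹ * ‖x‖ₑ) (mul_ne_zero h20 hx0) (ENNReal.mul_ne_top h2t enorm_ne_top)
  rw [ENNReal.mul_rpow_of_ne_top h2t enorm_ne_top, ← mul_assoc] at h'
  refine le_trans ?_ (mul_le_mul_right h' c)
  rw [← lintegral_indicator (measurableSet_lt measurable_const measurable_enorm),
    ← lintegral_const_mul _ (Measurable.indicator (by fun_prop)
      (measurableSet_lt measurable_const measurable_enorm))]
  refine lintegral_mono fun y => ?_
  by_cases hy : ‖x‖ₑ ≤ ‖y‖ₑ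
  · have : 2⁻¹ * ‖x‖ₑ < ‖y‖ₑ := by
      refine lt_of_lt_of_le ?_ hy
      rw [mul_comm, ← div_eq_mul_inv]
      exact ENNReal.half_lt_self hx0 enorm_ne_top
    simp only
    rw [if_pos hy, Set.indicator_of_mem (by exact this)]
  · simp only
    rw [if_neg hy]
    exact zero_le

/-- Hardy kernel, small `y` -/
noncomputable def swlo (d : ℕ) (a b : ℝ) (x y : Esw d) : ℝ≥0∞ :=
  if ‖y‖ₑ ≤ ‖x‖ₑ then ‖x‖ₑ ^ (-a) * ‖y‖ₑ ^ (-b) else 0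

/-- Hardy kernel, large `y` -/
noncomputable def swhi (d : ℕ) (a b : ℝ) (x y : Esw d) : ℝ≥0∞ :=
  if ‖x‖ₑ ≤ ‖y‖ₑ then ‖x‖ₑ ^ (-a) * ‖y‖ₑ ^ (-b) else 0

lemma swlo_meas (d : ℕ) (a b : ℝ) : Measurable (Function.uncurry (swlo d a b)) := by
  unfold Function.uncurry swlo
  exact Measurable.ite (measurableSet_le (by fun_prop) (by fun_prop)) (by fun_prop) (by fun_prop)

lemma swhi_meas (d : ℕ) (a b : ℝ) : Measurable (Function.uncurry (swhi d a b)) := by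
  unfold Function.uncurry swhi
  exact Measurable.ite (measurableSet_le (by fun_prop) (by fun_prop)) (by fun_prop) (by fun_prop)

lemma sw_w_ne {d : ℕ} (hd : 1 ≤ d) (s : ℝ) :
    ∀ᵐ y : Esw d, ‖y‖ₑ ^ (-s) ≠ 0 ∧ ‖y‖ₑ ^ (-s) ≠ ⊤ := by
  filter_upwards [sw_ae_ne hd] with y hy
  simp [ENNReal.rpow_eq_zero_iff, ENNReal.rpow_eq_top_iff, hy]

lemma sw_lo_bdd (d : ℕ) (hd : 1 ≤ d) (a b p p' q : ℝ) (hpp : p.HolderConjugate p') (hpq : p ≤ q)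
    (hb : b < d / p') (hab : a + b = d / q + d / p') : SWBdd d p q (swlo d a b) := by
  have hp := hpp.pos
  have hp' := hpp.symm.pos
  have hq : 0 < q := hp.trans_le hpq
  have hinv : 1 / p + 1 / p' = 1 := by simpa using hpp.inv_add_inv_eq_one
  have hd1 : (d : ℝ) / p + d / p' = d := by
    calc (d : ℝ) / p + d / p' = d * (1 / p + 1 / p') := by ring
      _ = d := by rw [hinv, mul_one]
  have hbp : b * p' < d := by rwa [lt_div_iff₀ hp'] at hb
  obtain ⟨s, hs1, hs2⟩ : ∃ s, b / p < s ∧ s < (d - b) / p' := by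
    refine exists_between ?_
    have e : (d - b) / p' - b / p = d / p' - b * (1 / p + 1 / p') := by ring
    rw [hinv, mul_one] at e
    linarith
  rw [div_lt_iff₀ hp] at hs1
  rw [lt_div_iff₀ hp'] at hs2
  obtain ⟨A, hA, hAi⟩ := sw_near_if d hd (b * p') hbp
  obtain ⟨A1, hA1, hA1i⟩ := sw_near_if d hd (b + s * p') (by linarith)
  set γ := a + d / p - d / q with hγ
  have hγ' : γ = d - b := by rw [hγ]; linarith
  obtain ⟨B1, hB1, hB1i⟩ := sw_far_if d hd (γ + s * p) (by linarith)
  have hτ : ∀ x : Esw d, (‖x‖ₑ ^ (-(d / q))) ^ ((q - p) / p) = ‖x‖ₑ ^ (-(d / p - d / q)) := by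
    intro x
    rw [← ENNReal.rpow_mul]; congr 1; field_simp
  refine sw_interp d p p' q hpp hpq _ (swlo_meas d a b) (fun x => ‖x‖ₑ ^ (-(d / q)))
    (by fun_prop) A (A1 ^ (p / p') * B1) hA (ENNReal.mul_ne_top
      (ENNReal.rpow_ne_top_of_nonneg (by positivity) hA1) hB1) ?_ ?_
  · filter_upwards [sw_ae_ne hd] with x hx
    have hx0 := sw_enorm_pos hx
    have e1 : ∀ y, swlo d a b x y ^ p' =
        if ‖y‖ₑ ≤ ‖x‖ₑ then ‖x‖ₑ ^ (-(a * p')) * ‖y‖ₑ ^ (-(b * p')) else 0 := by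
      intro y
      unfold swlo
      split_ifs
      · rw [ENNReal.mul_rpow_of_nonneg _ _ hp'.le, ← ENNReal.rpow_mul, ← ENNReal.rpow_mul,
          neg_mul, neg_mul]
      · exact ENNReal.zero_rpow_of_pos hp'
    simp only [e1]
    refine (hAi _ x hx).trans_eq ?_
    rw [mul_left_comm, ← ENNReal.rpow_add _ _ hx0 enorm_ne_top, ← ENNReal.rpow_mul]
    congr 2
    have : a = d / q + d / p' - b := by linarith
    rw [this]; field_simp; ring
  · intro g hg
    simp only [hτ]
    refine sw_schur d p p' hpp (fun x y => swlo d a b x y * ‖x‖ₑ ^ (-(d / p - d / q))) ?_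
      (fun x => ‖x‖ₑ ^ (-s)) (by fun_prop) (sw_w_ne hd s) A1 B1 ?_ ?_ g hg
    · have := swlo_meas d a b
      exact this.mul (by fun_prop)
    · filter_upwards [sw_ae_ne hd] with x hx
      have hx0 := sw_enorm_pos hx
      calc ∫⁻ y, swlo d a b x y * ‖x‖ₑ ^ (-(d / p - d / q)) * (‖y‖ₑ ^ (-s)) ^ p'
          = ∫⁻ y : Esw d, (if ‖y‖ₑ ≤ ‖x‖ₑ then ‖x‖ₑ ^ (-γ) * ‖y‖ₑ ^ (-(b + s * p')) else 0) := by
            refine lintegral_congr_ae ?_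
            filter_upwards [sw_ae_ne hd] with y hy
            have hy0 := sw_enorm_pos hy
            unfold swlo
            split_ifs
            · rw [← ENNReal.rpow_mul, mul_right_comm (‖x‖ₑ ^ (-a)), mul_assoc,
                ← ENNReal.rpow_add _ _ hx0 enorm_ne_top, ← ENNReal.rpow_add _ _ hy0 enorm_ne_top]
              congr 2
              · rw [hγ]; ring
              · ring
            · simp
        _ ≤ _ := hA1i _ x hx
        _ = _ := by
          rw [mul_left_comm, ← ENNReal.rpow_add _ _ hx0 enorm_ne_top, ← ENNReal.rpow_mul]
          congr 2
          rw [hγ']; ring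
    · filter_upwards [sw_ae_ne hd] with y hy
      have hy0 := sw_enorm_pos hy
      calc ∫⁻ x, swlo d a b x y * ‖x‖ₑ ^ (-(d / p - d / q)) * (‖x‖ₑ ^ (-s)) ^ p
          = ∫⁻ x : Esw d, (if ‖y‖ₑ ≤ ‖x‖ₑ then ‖y‖ₑ ^ (-b) * ‖x‖ₑ ^ (-(γ + s * p)) else 0) := by
            refine lintegral_congr_ae ?_
            filter_upwards [sw_ae_ne hd] with x hx
            have hx0 := sw_enorm_pos hx
            unfold swlo
            split_ifs
            · rw [← ENNReal.rpow_mul, mul_comm (‖x‖ₑ ^ (-a)), mul_assoc, mul_assoc,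
                ← ENNReal.rpow_add _ _ hx0 enorm_ne_top, ← ENNReal.rpow_add _ _ hx0 enorm_ne_top]
              congr 2; rw [hγ]; ring
            · simp
        _ ≤ _ := hB1i _ y hy
        _ = _ := by
          rw [mul_left_comm, ← ENNReal.rpow_add _ _ hy0 enorm_ne_top, ← ENNReal.rpow_mul]
          congr 2
          rw [hγ']; ring

lemma sw_hi_bdd (d : ℕ) (hd : 1 ≤ d) (a b p p' q : ℝ) (hpp : p.HolderConjugate p') (hpq : p ≤ q)
    (ha : a < d / q) (hab : a + b = d / q + d / p') : SWBdd d p q (swhi d a b) := by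
  have hp := hpp.pos
  have hp' := hpp.symm.pos
  have hq : 0 < q := hp.trans_le hpq
  have hinv : 1 / p + 1 / p' = 1 := by simpa using hpp.inv_add_inv_eq_one
  have hd1 : (d : ℝ) / p + d / p' = d := by
    calc (d : ℝ) / p + d / p' = d * (1 / p + 1 / p') := by ring
      _ = d := by rw [hinv, mul_one]
  have hb : d / p' < b := by linarith
  have hbp : d < b * p' := by rwa [div_lt_iff₀ hp'] at hb
  set γ := a + d / p - d / q with hγ
  have hγ' : γ = d - b := by rw [hγ]; linarith
  obtain ⟨s, hs1, hs2⟩ : ∃ s, γ / p' < s ∧ s < (d - γ) / p := by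
    refine exists_between ?_
    have e : (d - γ) / p - γ / p' = d / p - γ * (1 / p + 1 / p') := by ring
    rw [hinv, mul_one] at e
    linarith
  rw [div_lt_iff₀ hp'] at hs1
  rw [lt_div_iff₀ hp] at hs2
  obtain ⟨A, hA, hAi⟩ := sw_far_if d hd (b * p') hbp
  obtain ⟨A1, hA1, hA1i⟩ := sw_far_if d hd (b + s * p') (by linarith)
  obtain ⟨B1, hB1, hB1i⟩ := sw_near_if d hd (γ + s * p) (by linarith)
  have hτ : ∀ x : Esw d, (‖x‖ₑ ^ (-(d / q))) ^ ((q - p) / p) = ‖x‖ₑ ^ (-(d / p - d / q)) := by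
    intro x
    rw [← ENNReal.rpow_mul]; congr 1; field_simp
  refine sw_interp d p p' q hpp hpq _ (swhi_meas d a b) (fun x => ‖x‖ₑ ^ (-(d / q)))
    (by fun_prop) A (A1 ^ (p / p') * B1) hA (ENNReal.mul_ne_top
      (ENNReal.rpow_ne_top_of_nonneg (by positivity) hA1) hB1) ?_ ?_
  · filter_upwards [sw_ae_ne hd] with x hx
    have hx0 := sw_enorm_pos hx
    have e1 : ∀ y, swhi d a b x y ^ p' =
        if ‖x‖ₑ ≤ ‖y‖ₑ then ‖x‖ₑ ^ (-(a * p')) * ‖y‖ₑ ^ (-(b * p')) else 0 := by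
      intro y
      unfold swhi
      split_ifs
      · rw [ENNReal.mul_rpow_of_nonneg _ _ hp'.le, ← ENNReal.rpow_mul, ← ENNReal.rpow_mul,
          neg_mul, neg_mul]
      · exact ENNReal.zero_rpow_of_pos hp'
    simp only [e1]
    refine (hAi _ x hx).trans_eq ?_
    rw [mul_left_comm, ← ENNReal.rpow_add _ _ hx0 enorm_ne_top, ← ENNReal.rpow_mul]
    congr 2
    have : a = d / q + d / p' - b := by linarith
    rw [this]; field_simp; ring
  · intro g hg
    simp only [hτ]
    refine sw_schur d p p' hpp (fun x y => swhi d a b x y * ‖x‖ₑ ^ (-(d / p - d / q))) ?_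
      (fun x => ‖x‖ₑ ^ (-s)) (by fun_prop) (sw_w_ne hd s) A1 B1 ?_ ?_ g hg
    · have := swhi_meas d a b
      exact this.mul (by fun_prop)
    · filter_upwards [sw_ae_ne hd] with x hx
      have hx0 := sw_enorm_pos hx
      calc ∫⁻ y, swhi d a b x y * ‖x‖ₑ ^ (-(d / p - d / q)) * (‖y‖ₑ ^ (-s)) ^ p'
          = ∫⁻ y : Esw d, (if ‖x‖ₑ ≤ ‖y‖ₑ then ‖x‖ₑ ^ (-γ) * ‖y‖ₑ ^ (-(b + s * p')) else 0) := by
            refine lintegral_congr_ae ?_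
            filter_upwards [sw_ae_ne hd] with y hy
            have hy0 := sw_enorm_pos hy
            unfold swhi
            split_ifs
            · rw [← ENNReal.rpow_mul, mul_right_comm (‖x‖ₑ ^ (-a)), mul_assoc,
                ← ENNReal.rpow_add _ _ hx0 enorm_ne_top, ← ENNReal.rpow_add _ _ hy0 enorm_ne_top]
              congr 2
              · rw [hγ]; ring
              · ring
            · simp
        _ ≤ _ := hA1i _ x hx
        _ = _ := by
          rw [mul_left_comm, ← ENNReal.rpow_add _ _ hx0 enorm_ne_top, ← ENNReal.rpow_mul]
          congr 2
          rw [hγ']; ring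
    · filter_upwards [sw_ae_ne hd] with y hy
      have hy0 := sw_enorm_pos hy
      calc ∫⁻ x, swhi d a b x y * ‖x‖ₑ ^ (-(d / p - d / q)) * (‖x‖ₑ ^ (-s)) ^ p
          = ∫⁻ x : Esw d, (if ‖x‖ₑ ≤ ‖y‖ₑ then ‖y‖ₑ ^ (-b) * ‖x‖ₑ ^ (-(γ + s * p)) else 0) := by
            refine lintegral_congr_ae ?_
            filter_upwards [sw_ae_ne hd] with x hx
            have hx0 := sw_enorm_pos hx
            unfold swhi
            split_ifs
            · rw [← ENNReal.rpow_mul, mul_comm (‖x‖ₑ ^ (-a)), mul_assoc, mul_assoc,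
                ← ENNReal.rpow_add _ _ hx0 enorm_ne_top, ← ENNReal.rpow_add _ _ hx0 enorm_ne_top]
              congr 2; rw [hγ]; ring
            · simp
        _ ≤ _ := hB1i _ y hy
        _ = _ := by
          rw [mul_left_comm, ← ENNReal.rpow_add _ _ hy0 enorm_ne_top, ← ENNReal.rpow_mul]
          congr 2
          rw [hγ']; ring

lemma SWBdd.mono {d : ℕ} (hd : 1 ≤ d) {p q : ℝ} (hq : 0 < q) {K K' : Esw d → Esw d → ℝ≥0∞}
    (h : SWBdd d p q K') (hle : ∀ x y, x ≠ 0 → y ≠ 0 → K x y ≤ K' x y) : SWBdd d p q K := by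
  obtain ⟨C, hC, hb⟩ := h
  refine ⟨C, hC, fun g hg => le_trans (lintegral_mono_ae ?_) (hb g hg)⟩
  filter_upwards [sw_ae_ne hd] with x hx
  refine ENNReal.rpow_le_rpow (lintegral_mono_ae ?_) hq.le
  filter_upwards [sw_ae_ne hd] with y hy
  exact mul_le_mul_left (hle x y hx hy) _

lemma SWBdd.const_mul {d : ℕ} {p q : ℝ} (hq : 0 < q) {K : Esw d → Esw d → ℝ≥0∞}
    (h : SWBdd d p q K) (c : ℝ≥0∞) (hc : c ≠ ⊤) : SWBdd d p q (fun x y => c * K x y) := by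
  obtain ⟨C, hC, hb⟩ := h
  have hcq : c ^ q ≠ ⊤ := ENNReal.rpow_ne_top_of_nonneg hq.le hc
  refine ⟨c ^ q * C, ENNReal.mul_ne_top hcq hC, fun g hg => ?_⟩
  simp only [mul_assoc]
  simp only [lintegral_const_mul' _ _ hc, ENNReal.mul_rpow_of_nonneg _ _ hq.le]
  rw [lintegral_const_mul' _ _ hcq]
  exact mul_le_mul_right (hb g hg) _

lemma SWBdd.add {d : ℕ} {p q : ℝ} (hq : 1 ≤ q) {K K' : Esw d → Esw d → ℝ≥0∞}
    (h : SWBdd d p q K) (hK : Measurable (Function.uncurry K))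
    (h' : SWBdd d p q K') : SWBdd d p q (fun x y => K x y + K' x y) := by
  obtain ⟨C, hC, hb⟩ := h
  obtain ⟨C', hC', hb'⟩ := h'
  have h2 : (2 : ℝ≥0∞) ^ (q - 1) ≠ ⊤ := ENNReal.rpow_ne_top_of_nonneg (by linarith) (by simp)
  refine ⟨2 ^ (q - 1) * (C + C'), ENNReal.mul_ne_top h2 (by simp [hC, hC']), fun g hg => ?_⟩
  have hKx : ∀ x, Measurable (K x) := fun x => hK.of_uncurry_left
  have hm : Measurable (fun z : Esw d × Esw d => K z.1 z.2 * g z.2) := by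
    have : Measurable fun z : Esw d × Esw d => K z.1 z.2 := hK
    fun_prop
  have e1 : ∀ x, ∫⁻ y, (K x y + K' x y) * g y = (∫⁻ y, K x y * g y) + (∫⁻ y, K' x y * g y) := by
    intro x
    simp only [add_mul]
    have m1 : Measurable fun y => K x y * g y := (hKx x).mul hg
    rw [lintegral_add_left m1]
  simp only [e1]
  calc _ ≤ ∫⁻ x, 2 ^ (q - 1) * ((∫⁻ y, K x y * g y) ^ q + (∫⁻ y, K' x y * g y) ^ q) :=
        lintegral_mono fun x => ENNReal.rpow_add_le_mul_rpow_add_rpow _ _ hq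
    _ = 2 ^ (q - 1) * ((∫⁻ x, (∫⁻ y, K x y * g y) ^ q) + (∫⁻ x, (∫⁻ y, K' x y * g y) ^ q)) := by
        have m2 : Measurable fun x => (∫⁻ y, K x y * g y) ^ q :=
          hm.lintegral_prod_right'.pow_const _
        rw [lintegral_const_mul' _ _ h2, lintegral_add_left m2]
    _ ≤ 2 ^ (q - 1) * (C * (∫⁻ y, g y ^ p) ^ (q / p) + C' * (∫⁻ y, g y ^ p) ^ (q / p)) := by
        gcongr
        · exact hb g hg
        · exact hb' g hg
    _ = _ := by ring

lemma sw_neg_pow {u v c : ℝ≥0∞} {e : ℝ} (he : 0 ≤ e) (h : u ≤ c * v) (hc0 : c ≠ 0) (hc : c ≠ ⊤)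
    (hv : v ≠ ⊤) : v ^ (-e) ≤ c ^ e * u ^ (-e) := by
  have h1 : (c * v) ^ (-e) ≤ u ^ (-e) := by
    rw [ENNReal.rpow_neg, ENNReal.rpow_neg]
    exact ENNReal.inv_le_inv.2 (ENNReal.rpow_le_rpow h he)
  calc v ^ (-e) = c ^ e * (c * v) ^ (-e) := by
        rw [ENNReal.mul_rpow_of_ne_top hc hv, ← mul_assoc, ← ENNReal.rpow_add _ _ hc0 hc,
          add_neg_cancel, ENNReal.rpow_zero, one_mul]
    _ ≤ _ := mul_le_mul_right h1 _

/-- comparable kernel in the diagonal case -/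
noncomputable def swdi (d : ℕ) (lam : ℝ) (x y : Esw d) : ℝ≥0∞ :=
  if ‖y‖ₑ ≤ 2 * ‖x‖ₑ ∧ ‖x‖ₑ ≤ 2 * ‖y‖ₑ then ‖x‖ₑ ^ (-(d - lam)) * ‖x - y‖ₑ ^ (-lam) else 0

lemma swdi_meas (d : ℕ) (lam : ℝ) : Measurable (Function.uncurry (swdi d lam)) := by
  unfold Function.uncurry swdi
  have h1 : MeasurableSet {z : Esw d × Esw d | ‖z.2‖ₑ ≤ 2 * ‖z.1‖ₑ} :=
    measurableSet_le (by fun_prop) (by fun_prop)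
  have h2 : MeasurableSet {z : Esw d × Esw d | ‖z.1‖ₑ ≤ 2 * ‖z.2‖ₑ} :=
    measurableSet_le (by fun_prop) (by fun_prop)
  exact Measurable.ite (h1.inter h2) (by fun_prop) (by fun_prop)

lemma sw_sub_le {d : ℕ} (x y : Esw d) : ‖x - y‖ₑ ≤ ‖x‖ₑ + ‖y‖ₑ := enorm_sub_le

lemma sw_di_bdd (d : ℕ) (hd : 1 ≤ d) (lam p p' : ℝ) (hpp : p.HolderConjugate p')
    (hlam : lam < d) : SWBdd d p p (swdi d lam) := by
  have hp := hpp.pos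
  have hp' := hpp.symm.pos
  obtain ⟨C, hC, near⟩ := sw_near d hd lam hlam
  set e := (d : ℝ) - lam with he
  have he0 : 0 ≤ e := by linarith
  have h3e : (3 : ℝ≥0∞) ^ e ≠ ⊤ := ENNReal.rpow_ne_top_of_nonneg he0 (by simp)
  have h2e : (2 : ℝ≥0∞) ^ e ≠ ⊤ := ENNReal.rpow_ne_top_of_nonneg he0 (by simp)
  have hk : ∀ x : Esw d, x ≠ 0 → ‖x‖ₑ ^ (-e) * ∫⁻ z, swk d lam (3 * ‖x‖ₑ) z ≤ C * 3 ^ e := by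
    intro x hx
    have hx0 := sw_enorm_pos hx
    rw [swk_int]
    calc _ ≤ ‖x‖ₑ ^ (-e) * (C * (3 * ‖x‖ₑ) ^ e) :=
          mul_le_mul_right (near _ (mul_ne_zero (by simp) hx0)
            (ENNReal.mul_ne_top (by simp) enorm_ne_top)) _
      _ = C * 3 ^ e * (‖x‖ₑ ^ (-e) * ‖x‖ₑ ^ e) := by
          rw [ENNReal.mul_rpow_of_nonneg _ _ he0]; ring
      _ = _ := by
          rw [← ENNReal.rpow_add _ _ hx0 enorm_ne_top, neg_add_cancel, ENNReal.rpow_zero, mul_one]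
  refine ⟨(C * 3 ^ e) ^ (p / p') * (2 ^ e * (C * 3 ^ e)), ?_, fun g hg => ?_⟩
  · exact ENNReal.mul_ne_top (ENNReal.rpow_ne_top_of_nonneg (by positivity)
      (ENNReal.mul_ne_top hC h3e)) (ENNReal.mul_ne_top h2e (ENNReal.mul_ne_top hC h3e))
  rw [div_self hp.ne', ENNReal.rpow_one]
  refine sw_schur d p p' hpp _ (swdi_meas d lam) (fun _ => 1) measurable_const
    (by simp) _ _ ?_ ?_ g hg
  · filter_upwards [sw_ae_ne hd] with x hx
    simp only [ENNReal.one_rpow, mul_one]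
    refine le_trans ?_ (hk x hx)
    have m1 : Measurable fun y => swk d lam (3 * ‖x‖ₑ) (x - y) :=
      (swk_meas _ _ _).comp (by fun_prop)
    rw [← lintegral_sub_left_eq_self (fun z => swk d lam (3 * ‖x‖ₑ) z) x,
      ← lintegral_const_mul _ m1]
    refine lintegral_mono fun y => ?_
    unfold swdi
    split_ifs with h
    · have : ‖x - y‖ₑ ≤ 3 * ‖x‖ₑ := by
        calc _ ≤ ‖x‖ₑ + ‖y‖ₑ := sw_sub_le x y
          _ ≤ ‖x‖ₑ + 2 * ‖x‖ₑ := by gcongr; exact h.1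
          _ = _ := by ring
      unfold swk
      rw [Set.indicator_of_mem (by exact this)]
    · exact zero_le
  · filter_upwards [sw_ae_ne hd] with y hy
    simp only [ENNReal.one_rpow, mul_one]
    refine le_trans ?_ (mul_le_mul_right (hk y hy) _)
    have m1 : Measurable fun x => swk d lam (3 * ‖y‖ₑ) (x - y) :=
      (swk_meas _ _ _).comp (by fun_prop)
    rw [← lintegral_sub_right_eq_self (fun z => swk d lam (3 * ‖y‖ₑ) z) y,
      ← lintegral_const_mul _ m1, ← lintegral_const_mul _ (m1.const_mul _)]
    refine lintegral_mono fun x => ?_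
    unfold swdi
    split_ifs with h
    · have : ‖x - y‖ₑ ≤ 3 * ‖y‖ₑ := by
        calc _ ≤ ‖x‖ₑ + ‖y‖ₑ := sw_sub_le x y
          _ ≤ 2 * ‖y‖ₑ + ‖y‖ₑ := by gcongr; exact h.2
          _ = _ := by ring
      unfold swk
      rw [Set.indicator_of_mem (by exact this), ← mul_assoc]
      exact mul_le_mul_left (sw_neg_pow he0 h.1 (by simp) (by simp) enorm_ne_top) _
    · exact zero_le

lemma sw_cmp {u v : ℝ≥0∞} (α : ℝ) (h1 : u ≤ 2 * v) (h2 : v ≤ 2 * u) (hu : u ≠ ⊤) :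
    u ^ (-α) ≤ 2 ^ |α| * v ^ (-α) := by
  rcases le_or_gt 0 α with h | h
  · rw [abs_of_nonneg h]
    exact sw_neg_pow h h2 (by simp) (by simp) hu
  · rw [abs_of_neg h, ← ENNReal.mul_rpow_of_nonneg _ _ (by linarith)]
    exact ENNReal.rpow_le_rpow h1 (by linarith)

/-- full kernel -/
noncomputable def swK (d : ℕ) (lam α β : ℝ) (x y : Esw d) : ℝ≥0∞ :=
  ‖x‖ₑ ^ (-β) * (‖x - y‖ₑ ^ (-lam) * ‖y‖ₑ ^ (-α))

lemma sw_far_cmp {d : ℕ} {x y : Esw d} (h : 2 * ‖y‖ₑ ≤ ‖x‖ₑ) : ‖x‖ₑ ≤ 2 * ‖x - y‖ₑ := by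
  have h' : 2 * ‖y‖ ≤ ‖x‖ := by
    have := ENNReal.toReal_mono enorm_ne_top h
    simpa using this
  have h2 : ‖x‖ ≤ 2 * ‖x - y‖ := by
    have := norm_sub_norm_le x y
    linarith
  have e : (2 : ℝ≥0∞) * ENNReal.ofReal ‖x - y‖ = ENNReal.ofReal (2 * ‖x - y‖) := by
    rw [ENNReal.ofReal_mul (by norm_num)]; simp
  rw [← ofReal_norm, ← ofReal_norm, e]
  exact ENNReal.ofReal_le_ofReal h2

lemma sw_full (d : ℕ) (hd : 1 ≤ d) (lam p p' q α β : ℝ)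
    (hlam0 : 0 < lam) (hlamd : lam < d) (hpp : p.HolderConjugate p') (hpq : p ≤ q)
    (hα : α < (d : ℝ) / p') (hβ : β < (d : ℝ) / q)
    (hαβ : 0 ≤ α + β) (hscal : 1 / q = 1 / p + (lam + α + β) / d - 1) :
    SWBdd d p q (swK d lam α β) := by
  have hp := hpp.pos
  have hp' := hpp.symm.pos
  have hq : 0 < q := hp.trans_le hpq
  have hq1 : 1 ≤ q := hpp.lt.le.trans hpq
  have hinv : 1 / p + 1 / p' = 1 := by simpa using hpp.inv_add_inv_eq_one
  have hd0 : (0 : ℝ) < d := by exact_mod_cast hd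
  have hsum : lam + α + β = d / q + d / p' := by
    have : (lam + α + β) / d = 1 / q + 1 / p' := by linarith
    field_simp at this ⊢
    linarith
  have hA := sw_lo_bdd d hd (lam + β) α p p' q hpp hpq hα (by linarith)
  have hB := sw_hi_bdd d hd β (lam + α) p p' q hpp hpq hβ (by linarith)
  have h2l : (2 : ℝ≥0∞) ^ lam ≠ ⊤ := ENNReal.rpow_ne_top_of_nonneg hlam0.le (by simp)
  obtain ⟨KC, hC, hCle⟩ : ∃ KC : Esw d → Esw d → ℝ≥0∞, SWBdd d p q KC ∧
      ∀ x y, x ≠ 0 → y ≠ 0 → ‖y‖ₑ ≤ 2 * ‖x‖ₑ → ‖x‖ₑ ≤ 2 * ‖y‖ₑ →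
        ‖x‖ₑ ^ (-(α + β)) * ‖x - y‖ₑ ^ (-lam) ≤ KC x y := by
    rcases hpq.lt_or_eq with hlt | heq
    · have hμ : lam + α + β < d := by
        have : 1 / q < 1 / p := one_div_lt_one_div_of_lt hp hlt
        have : (lam + α + β) / d < 1 := by linarith
        rwa [div_lt_one hd0] at this
      refine ⟨_, (sw_hls d hd (lam + α + β) p p' q hpp hq hμ hscal).const_mul hq (3 ^ (α + β))
        (ENNReal.rpow_ne_top_of_nonneg hαβ (by simp)), fun x y hx hy h1 h2 => ?_⟩
      have h3 : ‖x - y‖ₑ ≤ 3 * ‖x‖ₑ := by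
        calc _ ≤ ‖x‖ₑ + ‖y‖ₑ := sw_sub_le x y
          _ ≤ ‖x‖ₑ + 2 * ‖x‖ₑ := by gcongr
          _ = _ := by ring
      calc _ ≤ 3 ^ (α + β) * ‖x - y‖ₑ ^ (-(α + β)) * ‖x - y‖ₑ ^ (-lam) :=
            mul_le_mul_left (sw_neg_pow hαβ h3 (by simp) (by simp) enorm_ne_top) _
        _ = _ := by
            rw [mul_assoc]
            congr 1
            rw [ENNReal.rpow_neg, ENNReal.rpow_neg, ENNReal.rpow_neg,
              show lam + α + β = (α + β) + lam by ring,
              ENNReal.rpow_add_of_nonneg _ _ hαβ hlam0.le, ENNReal.mul_inv]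
            · right; exact ENNReal.rpow_ne_top_of_nonneg hlam0.le enorm_ne_top
            · left; exact ENNReal.rpow_ne_top_of_nonneg hαβ enorm_ne_top
    · subst heq
      refine ⟨_, sw_di_bdd d hd lam p p' hpp hlamd, fun x y hx hy h1 h2 => ?_⟩
      unfold swdi
      rw [if_pos ⟨h1, h2⟩]
      have : (lam + α + β) / d = 1 := by linarith
      rw [div_eq_one_iff_eq hd0.ne'] at this
      rw [show α + β = d - lam by linarith]
  have h2a : (2 : ℝ≥0∞) ^ |α| ≠ ⊤ := ENNReal.rpow_ne_top_of_nonneg (abs_nonneg _) (by simp)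
  have hA' := hA.const_mul hq (2 ^ lam) h2l
  have hB' := hB.const_mul hq (2 ^ lam) h2l
  have hC' := hC.const_mul hq (2 ^ |α|) h2a
  refine (hA'.add hq1 ((swlo_meas _ _ _).const_mul _)
    (hB'.add hq1 ((swhi_meas _ _ _).const_mul _) hC')).mono hd hq fun x y hx hy => ?_
  have hx0 := sw_enorm_pos hx
  have hy0 := sw_enorm_pos hy
  unfold swK
  have hle2 : ∀ u : ℝ≥0∞, u ≤ 2 * u := fun u => by
    rw [two_mul]; exact le_self_add
  by_cases c1 : 2 * ‖y‖ₑ ≤ ‖x‖ₑ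
  · refine le_trans ?_ le_self_add
    unfold swlo
    rw [if_pos ((hle2 _).trans c1)]
    calc _ ≤ ‖x‖ₑ ^ (-β) * ((2 ^ lam * ‖x‖ₑ ^ (-lam)) * ‖y‖ₑ ^ (-α)) := by
          gcongr
          exact sw_neg_pow hlam0.le (sw_far_cmp c1) (by simp) (by simp) enorm_ne_top
      _ = 2 ^ lam * ((‖x‖ₑ ^ (-lam) * ‖x‖ₑ ^ (-β)) * ‖y‖ₑ ^ (-α)) := by ring
      _ = _ := by rw [← ENNReal.rpow_add _ _ hx0 enorm_ne_top, neg_add lam β]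
  by_cases c2 : 2 * ‖x‖ₑ ≤ ‖y‖ₑ
  · refine le_trans (le_trans ?_ le_self_add) le_add_self
    unfold swhi
    rw [if_pos ((hle2 _).trans c2)]
    have c3 := sw_far_cmp c2
    rw [enorm_sub_rev] at c3
    calc _ ≤ ‖x‖ₑ ^ (-β) * ((2 ^ lam * ‖y‖ₑ ^ (-lam)) * ‖y‖ₑ ^ (-α)) := by
          gcongr
          exact sw_neg_pow hlam0.le c3 (by simp) (by simp) enorm_ne_top
      _ = 2 ^ lam * (‖x‖ₑ ^ (-β) * (‖y‖ₑ ^ (-lam) * ‖y‖ₑ ^ (-α))) := by ring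
      _ = _ := by rw [← ENNReal.rpow_add _ _ hy0 enorm_ne_top, neg_add lam α]
  · refine le_trans (le_trans ?_ le_add_self) le_add_self
    push Not at c1 c2
    refine le_trans ?_ (mul_le_mul_right (hCle x y hx hy c2.le c1.le) _)
    calc _ ≤ ‖x‖ₑ ^ (-β) * (‖x - y‖ₑ ^ (-lam) * (2 ^ |α| * ‖x‖ₑ ^ (-α))) := by
          gcongr
          exact sw_cmp α c2.le c1.le enorm_ne_top
      _ = 2 ^ |α| * ((‖x‖ₑ ^ (-α) * ‖x‖ₑ ^ (-β)) * ‖x - y‖ₑ ^ (-lam)) := by ring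
      _ = _ := by rw [← ENNReal.rpow_add _ _ hx0 enorm_ne_top, neg_add α β]

/-- Stein–Weiss inequality: for `0 < λ < d`, `1 < p ≤ q < ∞`, `α < d/p'`, `β < d/q`,
`α + β ≥ 0` and `1/q = 1/p + (λ+α+β)/d - 1`, there is `C` such that for every measurable `f`,
`(∫ (|x|^{-β} ∫ |f(y)|/|x-y|^λ dy)^q dx)^{1/q} ≤ C (∫ (|f(x)| |x|^α)^p dx)^{1/p}`. -/
theorem stein_weiss_inequality (d : ℕ) (hd : 1 ≤ d) (lam p p' q α β : ℝ)
    (hlam0 : 0 < lam) (hlamd : lam < d) (hp : 1 < p) (hpq : p ≤ q)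
    (hp' : 1 / p + 1 / p' = 1) (hα : α < (d : ℝ) / p') (hβ : β < (d : ℝ) / q)
    (hαβ : 0 ≤ α + β) (hscal : 1 / q = 1 / p + (lam + α + β) / d - 1) :
    ∃ C : ℝ, 0 < C ∧ ∀ f : EuclideanSpace ℝ (Fin d) → ℝ, Measurable f →
      (∫⁻ x : EuclideanSpace ℝ (Fin d),
          ((‖x‖₊ : ℝ≥0∞) ^ (-β) *
            ∫⁻ y : EuclideanSpace ℝ (Fin d),
              (‖f y‖₊ : ℝ≥0∞) / (‖x - y‖₊ : ℝ≥0∞) ^ lam) ^ q) ^ (1 / q) ≤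
        ENNReal.ofReal C *
          (∫⁻ x : EuclideanSpace ℝ (Fin d),
            ((‖f x‖₊ : ℝ≥0∞) * (‖x‖₊ : ℝ≥0∞) ^ α) ^ p) ^ (1 / p) := by
  have hpp : p.HolderConjugate p' := by
    rw [Real.holderConjugate_iff]
    exact ⟨hp, by simpa using hp'⟩
  have hp0 := hpp.pos
  have hq : 0 < q := hp0.trans_le hpq
  obtain ⟨C, hC, hb⟩ := sw_full d hd lam p p' q α β hlam0 hlamd hpp hpq hα hβ hαβ hscal
  have hCq : C ^ (1 / q) ≠ ⊤ := ENNReal.rpow_ne_top_of_nonneg (by positivity) hC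
  refine ⟨(C ^ (1 / q)).toReal + 1, by positivity, fun f hf => ?_⟩
  simp only [← enorm_eq_nnnorm]
  have hm : Measurable fun y => ‖f y‖ₑ * ‖y‖ₑ ^ α := by fun_prop
  have e1 : ∀ x : EuclideanSpace ℝ (Fin d),
      ‖x‖ₑ ^ (-β) * ∫⁻ y : EuclideanSpace ℝ (Fin d), ‖f y‖ₑ / ‖x - y‖ₑ ^ lam =
        ∫⁻ y, swK d lam α β x y * (‖f y‖ₑ * ‖y‖ₑ ^ α) := by
    intro x
    rw [← lintegral_const_mul _ (by fun_prop)]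
    refine lintegral_congr_ae ?_
    filter_upwards [sw_ae_ne hd] with y hy
    have hy0 := sw_enorm_pos hy
    unfold swK
    calc ‖x‖ₑ ^ (-β) * (‖f y‖ₑ / ‖x - y‖ₑ ^ lam)
        = ‖x‖ₑ ^ (-β) * (‖x - y‖ₑ ^ (-lam)) * ‖f y‖ₑ * (‖y‖ₑ ^ (-α) * ‖y‖ₑ ^ α) := by
          rw [← ENNReal.rpow_add _ _ hy0 enorm_ne_top, neg_add_cancel, ENNReal.rpow_zero, mul_one,
            ENNReal.rpow_neg _ lam, div_eq_mul_inv]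
          ring
      _ = _ := by ring
  simp only [e1]
  calc _ ≤ (C * (∫⁻ y, (‖f y‖ₑ * ‖y‖ₑ ^ α) ^ p) ^ (q / p)) ^ (1 / q) :=
        ENNReal.rpow_le_rpow (hb _ hm) (by positivity)
    _ = C ^ (1 / q) * (∫⁻ y, (‖f y‖ₑ * ‖y‖ₑ ^ α) ^ p) ^ (1 / p) := by
        rw [ENNReal.mul_rpow_of_nonneg _ _ (by positivity), ← ENNReal.rpow_mul]
        congr 2
        field_simp
    _ ≤ _ := by
        refine mul_le_mul_left ?_ _
        rw [ENNReal.le_ofReal_iff_toReal_le hCq (by positivity)]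
        linarith
end

section
/- (Refined Hardy inequality for the gradient.) Let 2 < q < d. There is a constant C = C(d,q,ψ) such that for every Schwartz function f on ℝ^d, ‖f/|x|‖_{L^q(ℝ^d)} ≤ C ‖∇f‖_{L^q(ℝ^d)}^{1/q} · ‖f‖_{Ḟ^1_{q,2(q−1)}}^{(q−1)/q}. -/
open MeasureTheory Real FourierTransform

lemma rgh_jensen {α : Type*} [MeasurableSpace α] (μ : Measure α) {q : ℝ} (hq : 1 < q)
    {w g : α → ENNReal} (hw : AEMeasurable w μ) (hg : AEMeasurable g μ) :
    (∫⁻ x, w x * g x ∂μ) ^ q ≤ (∫⁻ x, w x ∂μ) ^ (q - 1) * ∫⁻ x, w x * g x ^ q ∂μ := by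
  have hq0 : 0 < q := by linarith
  have hc : (q / (q - 1)).HolderConjugate q := by
    have := Real.HolderConjugate.conjExponent hq
    exact this.symm
  have h := ENNReal.lintegral_mul_le_Lp_mul_Lq μ hc (f := fun x => w x ^ ((q - 1) / q))
    (g := fun x => w x ^ (1 / q) * g x) (hw.pow_const _) ((hw.pow_const _).mul hg)
  have e1 : ∀ x, ((fun x => w x ^ ((q - 1) / q)) * (fun x => w x ^ (1 / q) * g x)) x
      = w x * g x := by
    intro x
    simp only [Pi.mul_apply]
    rw [← mul_assoc, ← ENNReal.rpow_add_of_nonneg _ _ (div_nonneg (by linarith) hq0.le)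
      (by positivity)]
    rw [← add_div, sub_add_cancel, div_self hq0.ne', ENNReal.rpow_one]
  have e2 : ∀ x, (w x ^ ((q - 1) / q)) ^ (q / (q - 1)) = w x := by
    intro x
    rw [← ENNReal.rpow_mul, div_mul_div_cancel₀ hq0.ne', div_self (by linarith), ENNReal.rpow_one]
  have e3 : ∀ x, (w x ^ (1 / q) * g x) ^ q = w x * g x ^ q := by
    intro x
    rw [ENNReal.mul_rpow_of_nonneg _ _ hq0.le, ← ENNReal.rpow_mul, one_div_mul_cancel hq0.ne',
      ENNReal.rpow_one]
  simp only [e1, e2, e3] at h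
  have h2 := ENNReal.rpow_le_rpow h hq0.le
  refine h2.trans (le_of_eq ?_)
  rw [ENNReal.mul_rpow_of_nonneg _ _ hq0.le, ← ENNReal.rpow_mul, ← ENNReal.rpow_mul,
    one_div_mul_cancel hq0.ne', ENNReal.rpow_one]
  congr 2
  field_simp

lemma rgh_jensen_tsum {q : ℝ} (hq : 1 < q) (w g : ℤ → ENNReal) :
    (∑' j, w j * g j) ^ q ≤ (∑' j, w j) ^ (q - 1) * ∑' j, w j * g j ^ q := by
  have := rgh_jensen (Measure.count : Measure ℤ) hq (w := w) (g := g)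
    (measurable_of_countable _).aemeasurable (measurable_of_countable _).aemeasurable
  simpa [lintegral_count] using this

lemma rgh_dyadic {β : ℝ} (hβ : 0 < β) : ∃ C : ENNReal, C ≠ ⊤ ∧ ∀ t : ℝ, 0 < t →
    ∑' j : ℤ, ENNReal.ofReal (min (((2:ℝ) ^ j * t) ^ β) (((2:ℝ) ^ j * t) ^ (-β))) ≤ C := by
  have hs : Summable (fun i : ℤ => (2:ℝ) ^ β * ((2:ℝ) ^ (-β)) ^ i.natAbs) := by
    apply Summable.mul_left
    have h1 : Summable (fun n : ℕ => ((2:ℝ) ^ (-β)) ^ n) :=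
      summable_geometric_of_lt_one (by positivity)
        (Real.rpow_lt_one_of_one_lt_of_neg (by norm_num) (by linarith))
    apply Summable.of_nat_of_neg
    · simpa using h1
    · simpa using h1
  refine ⟨∑' i : ℤ, ENNReal.ofReal ((2:ℝ) ^ β * ((2:ℝ) ^ (-β)) ^ i.natAbs), ?_, ?_⟩
  · exact hs.tsum_ofReal_ne_top
  · intro t ht
    obtain ⟨k, hk1, hk2⟩ := exists_mem_Ico_zpow ht (by norm_num : (1:ℝ) < 2)
    rw [← (Equiv.subRight k).tsum_eq]
    refine ENNReal.tsum_le_tsum fun i => ENNReal.ofReal_le_ofReal ?_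
    simp only [Equiv.subRight_apply]
    set v : ℝ := (2:ℝ) ^ (-k) * t with hv
    have hu : (2:ℝ) ^ (i - k) * t = 2 ^ i * v := by
      rw [hv, ← mul_assoc, ← zpow_add₀ (by norm_num)]; rfl
    have hv1 : 1 ≤ v := by
      rw [hv, zpow_neg, inv_mul_eq_div, le_div_iff₀ (by positivity)]; linarith
    have hv2 : v ≤ 2 := by
      rw [hv, zpow_neg, inv_mul_eq_div, div_le_iff₀ (by positivity)]
      rw [zpow_add₀ (by norm_num)] at hk2; linarith
    clear_value v
    rw [hu, Real.mul_rpow (by positivity) (by positivity),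
      Real.mul_rpow (by positivity) (by positivity)]
    have hvβ : v ^ β ≤ 2 ^ β := Real.rpow_le_rpow (by linarith) hv2 hβ.le
    have hvβ' : v ^ (-β) ≤ 2 ^ β := by
      calc v ^ (-β) ≤ 1 := Real.rpow_le_one_of_one_le_of_nonpos hv1 (by linarith)
        _ ≤ _ := Real.one_le_rpow (by norm_num) hβ.le
    have key : ((2:ℝ) ^ (-β)) ^ i.natAbs = (2:ℝ) ^ (-β * (i.natAbs : ℝ)) := by
      rw [Real.rpow_mul (by norm_num), Real.rpow_natCast]
    rw [key]
    rcases le_total 0 i with hi | hi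
    · refine (min_le_right _ _).trans ?_
      have : ((2:ℝ) ^ i) ^ (-β) = (2:ℝ) ^ (-β * (i.natAbs : ℝ)) := by
        rw [← Real.rpow_intCast, ← Real.rpow_mul (by norm_num)]
        congr 1
        rw [Nat.cast_natAbs, abs_of_nonneg hi]; ring
      rw [this, mul_comm]
      gcongr
    · refine (min_le_left _ _).trans ?_
      have : ((2:ℝ) ^ i) ^ (β) = (2:ℝ) ^ (-β * (i.natAbs : ℝ)) := by
        rw [← Real.rpow_intCast, ← Real.rpow_mul (by norm_num)]
        congr 1
        rw [Nat.cast_natAbs, abs_of_nonpos hi]; push_cast; ring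
      rw [this, mul_comm]
      gcongr

lemma rgh_scale {d : ℕ} {r : ℝ} (hr : 0 < r) (F : EuclideanSpace ℝ (Fin d) → ENNReal) :
    ∫⁻ x, F (r • x) = ENNReal.ofReal (r ^ (-(d:ℝ))) * ∫⁻ x, F x := by
  have h := Measure.map_addHaar_smul (volume : Measure (EuclideanSpace ℝ (Fin d))) hr.ne'
  have hm : MeasurableEmbedding (fun x : EuclideanSpace ℝ (Fin d) => r • x) :=
    measurableEmbedding_const_smul₀ hr.ne'
  rw [← hm.lintegral_map, h, lintegral_smul_measure]
  simp only [smul_eq_mul]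
  congr 2
  rw [abs_of_pos (by positivity), Real.rpow_neg hr.le, Real.rpow_natCast]
  simp

lemma rgh_ball {d : ℕ} (hd : 1 ≤ d) {s : ℝ} (hs : s < d) : ∃ C : ENNReal, C ≠ ⊤ ∧
    ∀ r : ℝ, 0 < r → ∫⁻ x : EuclideanSpace ℝ (Fin d),
      (if r * ‖x‖ < 1 then ENNReal.ofReal (‖x‖ ^ (-s)) else 0)
        ≤ C * ENNReal.ofReal (r ^ (s - d)) := by
  have hmeas : Measurable (fun x : EuclideanSpace ℝ (Fin d) => ‖x‖ ^ (-s)) := by fun_prop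
  have hI : IntegrableOn (fun x : EuclideanSpace ℝ (Fin d) => ‖x‖ ^ (-s))
      (Metric.ball 0 1) volume := by
    apply integrableOn_ball_of_norm_le_rpow (C := 1) (α := s) (by simpa using hd) (by simpa using hs)
    · refine Filter.Eventually.of_forall fun x => ?_
      rw [Real.norm_of_nonneg (by positivity)]; simp
    · exact hmeas.aestronglyMeasurable
  refine ⟨∫⁻ x : EuclideanSpace ℝ (Fin d),
      (if 1 * ‖x‖ < 1 then ENNReal.ofReal (‖x‖ ^ (-s)) else 0), ?_, ?_⟩
  · have h2 := hI.2
    rw [hasFiniteIntegral_iff_norm] at h2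
    rw [← lintegral_indicator Metric.isOpen_ball.measurableSet] at h2
    refine ne_top_of_le_ne_top h2.ne (lintegral_mono fun x => ?_)
    by_cases hx : ‖x‖ < 1
    · rw [Set.indicator_of_mem (by simpa using hx), Real.norm_of_nonneg (by positivity)]
      simp [hx]
    · simp [hx]
  · intro r hr
    have h := rgh_scale (d := d) hr (fun x =>
      (if 1 * ‖x‖ < 1 then ENNReal.ofReal (‖x‖ ^ (-s)) else 0))
    have e : ∀ x : EuclideanSpace ℝ (Fin d),
        (if r * ‖x‖ < 1 then ENNReal.ofReal (‖x‖ ^ (-s)) else 0) = ENNReal.ofReal (r ^ s) *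
        (if 1 * ‖r • x‖ < 1 then ENNReal.ofReal (‖r • x‖ ^ (-s)) else 0) := by
      intro x
      rw [norm_smul, Real.norm_of_nonneg hr.le, one_mul]
      split_ifs
      · rw [← ENNReal.ofReal_mul (by positivity), Real.mul_rpow hr.le (norm_nonneg _),
          ← mul_assoc, ← Real.rpow_add hr]
        simp
      · simp
    simp_rw [e]
    rw [lintegral_const_mul' _ _ (by simp), h, ← mul_assoc, ← ENNReal.ofReal_mul (by positivity),
      ← Real.rpow_add hr, mul_comm, ← sub_eq_add_neg]

/-- The averaging functional used for the low frequencies. -/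
noncomputable def rghT {d : ℕ} (A : EuclideanSpace ℝ (Fin d) → ENNReal) (j : ℤ) : ENNReal :=
  ∫⁻ y, ENNReal.ofReal (((2:ℝ) ^ j) ^ (d:ℝ) * (1 + (2:ℝ) ^ j * ‖y‖) ^ (-((d:ℝ) + 2))) * A y

lemma rgh_I1 {d : ℕ} (hd : 1 ≤ d) {γ : ℝ} (hγ0 : 0 < γ) (hγ : γ < d) :
    ∫⁻ z : EuclideanSpace ℝ (Fin d),
      ENNReal.ofReal ((1 + ‖z‖) ^ (-((d:ℝ) + 2)) * ‖z‖ ^ (-γ)) ≠ ⊤ := by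
  obtain ⟨C, hC, hb⟩ := rgh_ball hd hγ
  have hb1 := hb 1 one_pos
  have hf := finite_integral_one_add_norm (E := EuclideanSpace ℝ (Fin d)) (μ := volume)
    (r := (d:ℝ) + 2) (by simp)
  have hm : Measurable (fun x : EuclideanSpace ℝ (Fin d) =>
    ENNReal.ofReal ((1 + ‖x‖) ^ (-((d:ℝ) + 2)))) := by fun_prop
  refine ne_top_of_le_ne_top (ENNReal.add_ne_top.2
    ⟨ne_top_of_le_ne_top (ENNReal.mul_ne_top hC (by simp)) hb1, hf.ne⟩) ?_
  rw [← lintegral_add_right _ hm]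
  refine lintegral_mono fun z => ?_
  have h0 : (1 + ‖z‖) ^ (-((d:ℝ) + 2)) ≤ 1 :=
    Real.rpow_le_one_of_one_le_of_nonpos (by linarith [norm_nonneg z])
      (by have : (0:ℝ) ≤ d := by positivity
          linarith)
  by_cases hz : 1 * ‖z‖ < 1
  · rw [if_pos hz]
    refine le_add_right (ENNReal.ofReal_le_ofReal ?_)
    exact mul_le_of_le_one_left (by positivity) h0
  · rw [if_neg hz, zero_add]
    refine (ENNReal.ofReal_le_ofReal ?_)
    refine mul_le_of_le_one_right (by positivity) ?_
    exact Real.rpow_le_one_of_one_le_of_nonpos (by linarith) (by linarith)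

lemma rgh_T_pow {d : ℕ} (hd : 3 ≤ d) {q : ℝ} (hq : 2 < q)
    {A : EuclideanSpace ℝ (Fin d) → ENNReal} (hA : Measurable A) (j : ℤ) :
    ENNReal.ofReal (((2:ℝ) ^ j) ^ (-(d:ℝ))) * rghT A j ^ q ≤
      (∫⁻ z : EuclideanSpace ℝ (Fin d),
        ENNReal.ofReal ((1 + ‖z‖) ^ (-((d:ℝ) + 2)) * ‖z‖ ^ (-(1 / (q - 1))))) ^ (q - 1) *
      ∫⁻ y, ENNReal.ofReal ((1 + (2:ℝ) ^ j * ‖y‖) ^ (-((d:ℝ) + 2)) * ((2:ℝ) ^ j * ‖y‖)) *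
        A y ^ q := by
  set N : ℝ := (2:ℝ) ^ j with hN
  have hNpos : 0 < N := by positivity
  clear_value N
  set γ : ℝ := 1 / (q - 1) with hγ
  have hγ0 : 0 < γ := by rw [hγ]; apply one_div_pos.2; linarith
  have hγq : γ * q = γ + 1 := by
    have : q - 1 ≠ 0 := by linarith
    rw [hγ]; field_simp; ring
  have : Nonempty (Fin d) := ⟨⟨0, by omega⟩⟩
  have hne : ∀ᵐ y : EuclideanSpace ℝ (Fin d), y ≠ 0 := by
    simp [ae_iff, measure_singleton]
  let w : EuclideanSpace ℝ (Fin d) → ENNReal := fun y =>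
    ENNReal.ofReal (N ^ (d:ℝ) * ((1 + N * ‖y‖) ^ (-((d:ℝ) + 2)) * (N * ‖y‖) ^ (-γ)))
  let g : EuclideanSpace ℝ (Fin d) → ENNReal := fun y => ENNReal.ofReal ((N * ‖y‖) ^ γ) * A y
  have hw : Measurable w := by fun_prop
  have hg : Measurable g := by fun_prop
  have hJ := rgh_jensen volume (q := q) (by linarith) hw.aemeasurable hg.aemeasurable
  have e1 : ∫⁻ y, w y * g y = rghT A j := by
    rw [rghT, ← hN]
    refine lintegral_congr_ae ?_
    filter_upwards [hne] with y hy
    have hy' : 0 < N * ‖y‖ := by have := norm_pos_iff.2 hy; positivity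
    simp only [w, g]
    rw [← mul_assoc, ← ENNReal.ofReal_mul (by positivity)]
    congr 2
    rw [mul_assoc, mul_assoc, ← Real.rpow_add hy']
    simp
  have e2 : ∫⁻ y, w y = ∫⁻ z : EuclideanSpace ℝ (Fin d),
        ENNReal.ofReal ((1 + ‖z‖) ^ (-((d:ℝ) + 2)) * ‖z‖ ^ (-γ)) := by
    have h := rgh_scale (d := d) hNpos (fun z =>
      ENNReal.ofReal ((1 + ‖z‖) ^ (-((d:ℝ) + 2)) * ‖z‖ ^ (-γ)))
    have : ∀ y, w y = ENNReal.ofReal (N ^ (d:ℝ)) *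
        ENNReal.ofReal ((1 + ‖N • y‖) ^ (-((d:ℝ) + 2)) * ‖N • y‖ ^ (-γ)) := by
      intro y
      rw [norm_smul, Real.norm_of_nonneg hNpos.le, ← ENNReal.ofReal_mul (by positivity)]
    simp_rw [this]
    rw [lintegral_const_mul' _ _ (by simp), h, ← mul_assoc, ← ENNReal.ofReal_mul (by positivity),
      ← Real.rpow_add hNpos]
    simp
  have e3 : ENNReal.ofReal (N ^ (-(d:ℝ))) * ∫⁻ y, w y * g y ^ q =
      ∫⁻ y, ENNReal.ofReal ((1 + N * ‖y‖) ^ (-((d:ℝ) + 2)) * (N * ‖y‖)) *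
        A y ^ q := by
    rw [← lintegral_const_mul' _ _ (by simp)]
    refine lintegral_congr_ae ?_
    filter_upwards [hne] with y hy
    have hy' : 0 < N * ‖y‖ := by have := norm_pos_iff.2 hy; positivity
    simp only [w, g]
    rw [ENNReal.mul_rpow_of_nonneg _ _ (by linarith), ENNReal.ofReal_rpow_of_pos (by positivity),
      ← mul_assoc, ← mul_assoc, ← ENNReal.ofReal_mul (by positivity),
      ← ENNReal.ofReal_mul (by positivity)]
    congr 2
    rw [← mul_assoc, ← mul_assoc, ← Real.rpow_add hNpos, ← Real.rpow_mul hy'.le, mul_assoc,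
      ← Real.rpow_add hy', hγq]
    simp
  rw [e1, e2] at hJ
  calc _ ≤ _ := mul_le_mul_right hJ _
    _ = _ := by rw [← e3]; ring

lemma rgh_low {d : ℕ} {q : ℝ} (hq : 2 < q) (hqd : q < d) : ∃ C : ENNReal, C ≠ ⊤ ∧
    ∀ A : EuclideanSpace ℝ (Fin d) → ENNReal, Measurable A →
    ∫⁻ x : EuclideanSpace ℝ (Fin d), (ENNReal.ofReal (‖x‖⁻¹) *
      ∑' j : ℤ, if (2:ℝ) ^ j * ‖x‖ < 1 then ENNReal.ofReal (((2:ℝ) ^ j)⁻¹) * rghT A j else 0) ^ q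
      ≤ C * ∫⁻ x, A x ^ q := by
  have hd : 3 ≤ d := by
    have : (2:ℝ) < d := by linarith
    have : 2 < d := by exact_mod_cast this
    omega
  have hq1 : 0 < q - 1 := by linarith
  set β : ℝ := (d - q) / (2 * (q - 1)) with hβ
  have hβ0 : 0 < β := div_pos (by linarith) (by linarith)
  set s : ℝ := q + β * (q - 1) with hs
  have hsd : s < d := by
    have : β * (q - 1) = (d - q) / 2 := by rw [hβ]; field_simp
    rw [hs, this]; linarith
  obtain ⟨D, hD, hDb⟩ := rgh_dyadic hβ0
  obtain ⟨D1, hD1, hD1b⟩ := rgh_dyadic one_pos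
  obtain ⟨C0, hC0, hC0b⟩ := rgh_ball (by omega) hsd
  have hI1 := rgh_I1 (d := d) (γ := 1 / (q - 1)) (by omega) (by positivity) (by
    have : 1 / (q - 1) < 1 := by rw [div_lt_one hq1]; linarith
    linarith)
  set I1 := ∫⁻ z : EuclideanSpace ℝ (Fin d),
        ENNReal.ofReal ((1 + ‖z‖) ^ (-((d:ℝ) + 2)) * ‖z‖ ^ (-(1 / (q - 1)))) with hI1def
  refine ⟨D ^ (q - 1) * C0 * I1 ^ (q - 1) * D1, ?_, ?_⟩
  · refine ENNReal.mul_ne_top (ENNReal.mul_ne_top (ENNReal.mul_ne_top ?_ hC0) ?_) hD1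
    · exact ENNReal.rpow_ne_top_of_nonneg hq1.le hD
    · exact ENNReal.rpow_ne_top_of_nonneg hq1.le hI1
  intro A hA
  have : Nonempty (Fin d) := ⟨⟨0, by omega⟩⟩
  have hne : ∀ᵐ y : EuclideanSpace ℝ (Fin d), y ≠ 0 := by
    simp [ae_iff, measure_singleton]
  have step2 : ∀ᵐ x : EuclideanSpace ℝ (Fin d), (ENNReal.ofReal (‖x‖⁻¹) *
      ∑' j : ℤ, if (2:ℝ) ^ j * ‖x‖ < 1 then ENNReal.ofReal (((2:ℝ) ^ j)⁻¹) * rghT A j else 0) ^ q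
      ≤ D ^ (q - 1) * ∑' j : ℤ, (ENNReal.ofReal (((2:ℝ) ^ j) ^ (-s)) * rghT A j ^ q) *
        (if (2:ℝ) ^ j * ‖x‖ < 1 then ENNReal.ofReal (‖x‖ ^ (-s)) else 0) := by
    filter_upwards [hne] with x hx
    set t := ‖x‖ with htdef
    have ht : 0 < t := norm_pos_iff.2 hx
    let w : ℤ → ENNReal := fun j => if (2:ℝ) ^ j * t < 1 then ENNReal.ofReal (((2:ℝ) ^ j) ^ β) else 0
    let g : ℤ → ENNReal := fun j => ENNReal.ofReal (((2:ℝ) ^ j) ^ (-(1 + β))) * rghT A j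
    have hJ := rgh_jensen_tsum (q := q) (by linarith) w g
    have e1 : ∀ j, w j * g j =
        if (2:ℝ) ^ j * t < 1 then ENNReal.ofReal (((2:ℝ) ^ j)⁻¹) * rghT A j else 0 := by
      intro j
      simp only [w, g]
      split_ifs
      · rw [← mul_assoc, ← ENNReal.ofReal_mul (by positivity), ← Real.rpow_add (by positivity),
          ← Real.rpow_neg_one]
        congr 3; ring
      · simp
    have e2 : ∑' j, w j ≤ ENNReal.ofReal (t ^ (-β)) * D := by
      calc ∑' j, w j ≤ ∑' j : ℤ, ENNReal.ofReal (t ^ (-β)) *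
            ENNReal.ofReal (min (((2:ℝ) ^ j * t) ^ β) (((2:ℝ) ^ j * t) ^ (-β))) := by
            refine ENNReal.tsum_le_tsum fun j => ?_
            simp only [w]
            split_ifs with h
            · have hu : 0 < (2:ℝ) ^ j * t := by positivity
              have hmin : ((2:ℝ) ^ j * t) ^ β ≤ ((2:ℝ) ^ j * t) ^ (-β) :=
                Real.rpow_le_rpow_of_exponent_ge hu h.le (by linarith)
              rw [min_eq_left hmin, ← ENNReal.ofReal_mul (by positivity),
                Real.mul_rpow (by positivity) ht.le, mul_left_comm, ← Real.rpow_add ht]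
              simp
            · simp
        _ ≤ _ := by rw [ENNReal.tsum_mul_left]; exact mul_le_mul_right (hDb t ht) _
    simp_rw [e1] at hJ
    rw [ENNReal.mul_rpow_of_nonneg _ _ (by linarith)]
    calc _ ≤ ENNReal.ofReal t⁻¹ ^ q * ((ENNReal.ofReal (t ^ (-β)) * D) ^ (q - 1) *
          ∑' j, w j * g j ^ q) := by gcongr; exact hJ.trans (by gcongr)
      _ = D ^ (q - 1) * (ENNReal.ofReal (t ^ (-s)) * ∑' j, w j * g j ^ q) := by
          rw [ENNReal.mul_rpow_of_nonneg _ _ hq1.le, ENNReal.ofReal_rpow_of_pos (by positivity),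
            ENNReal.ofReal_rpow_of_pos (by positivity)]
          have : t ^ (-s) = t⁻¹ ^ q * (t ^ (-β)) ^ (q - 1) := by
            rw [← Real.rpow_neg_one, ← Real.rpow_mul ht.le, ← Real.rpow_mul ht.le,
              ← Real.rpow_add ht]
            congr 1; rw [hs]; ring
          rw [this, ENNReal.ofReal_mul (by positivity)]
          ring
      _ = _ := by
          congr 1
          rw [← ENNReal.tsum_mul_left]
          refine tsum_congr fun j => ?_
          simp only [w, g]
          split_ifs
          · rw [ENNReal.mul_rpow_of_nonneg _ _ (by linarith),
              ENNReal.ofReal_rpow_of_pos (by positivity)]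
            have : ((2:ℝ) ^ j) ^ (-s) = ((2:ℝ) ^ j) ^ β * (((2:ℝ) ^ j) ^ (-(1 + β))) ^ q := by
              rw [← Real.rpow_mul (by positivity), ← Real.rpow_add (by positivity)]
              congr 1; rw [hs]; ring
            rw [this, ENNReal.ofReal_mul (by positivity)]
            ring
          · simp
  calc _ ≤ _ := lintegral_mono_ae step2
    _ = D ^ (q - 1) * ∑' j : ℤ, (ENNReal.ofReal (((2:ℝ) ^ j) ^ (-s)) * rghT A j ^ q) *
        ∫⁻ x : EuclideanSpace ℝ (Fin d),
          (if (2:ℝ) ^ j * ‖x‖ < 1 then ENNReal.ofReal (‖x‖ ^ (-s)) else 0) := by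
        have hmj : ∀ j : ℤ, Measurable (fun x : EuclideanSpace ℝ (Fin d) =>
            (if (2:ℝ) ^ j * ‖x‖ < 1 then ENNReal.ofReal (‖x‖ ^ (-s)) else 0)) := by
          intro j
          refine Measurable.ite ?_ (by fun_prop) measurable_const
          exact measurableSet_lt (by fun_prop) measurable_const
        rw [lintegral_const_mul' _ _ (ENNReal.rpow_ne_top_of_nonneg hq1.le hD)]
        rw [lintegral_tsum (fun j => ((hmj j).const_mul _).aemeasurable)]
        congr 1
        refine tsum_congr fun j => ?_
        rw [lintegral_const_mul _ (hmj j)]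
    _ ≤ D ^ (q - 1) * ∑' j : ℤ, (ENNReal.ofReal (((2:ℝ) ^ j) ^ (-s)) * rghT A j ^ q) *
        (C0 * ENNReal.ofReal (((2:ℝ) ^ j) ^ (s - d))) := by
        gcongr with j
        exact hC0b _ (by positivity)
    _ = D ^ (q - 1) * C0 * ∑' j : ℤ, ENNReal.ofReal (((2:ℝ) ^ j) ^ (-(d:ℝ))) * rghT A j ^ q := by
        rw [mul_assoc, ← ENNReal.tsum_mul_left (a := C0)]
        congr 1
        refine tsum_congr fun j => ?_
        have : ((2:ℝ) ^ j) ^ (-(d:ℝ)) = ((2:ℝ) ^ j) ^ (-s) * ((2:ℝ) ^ j) ^ (s - d) := by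
          rw [← Real.rpow_add (by positivity)]; congr 1; ring
        rw [this, ENNReal.ofReal_mul (by positivity)]
        ring
    _ ≤ D ^ (q - 1) * C0 * ∑' j : ℤ, I1 ^ (q - 1) *
        ∫⁻ y, ENNReal.ofReal ((1 + (2:ℝ) ^ j * ‖y‖) ^ (-((d:ℝ) + 2)) * ((2:ℝ) ^ j * ‖y‖)) *
        A y ^ q := by
        exact mul_le_mul_right (ENNReal.tsum_le_tsum fun j => rgh_T_pow hd hq hA j) _
    _ = D ^ (q - 1) * C0 * I1 ^ (q - 1) * ∫⁻ y, ∑' j : ℤ,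
        ENNReal.ofReal ((1 + (2:ℝ) ^ j * ‖y‖) ^ (-((d:ℝ) + 2)) * ((2:ℝ) ^ j * ‖y‖)) *
        A y ^ q := by
        rw [lintegral_tsum (fun j => by fun_prop), ENNReal.tsum_mul_left]
        ring
    _ ≤ D ^ (q - 1) * C0 * I1 ^ (q - 1) * ∫⁻ y, D1 * A y ^ q := by
        gcongr with y
        rw [ENNReal.tsum_mul_right]
        gcongr
        by_cases hy : y = 0
        · simp [hy]
        · refine le_trans (ENNReal.tsum_le_tsum fun j => ENNReal.ofReal_le_ofReal ?_)
            (hD1b ‖y‖ (norm_pos_iff.2 hy))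
          have hu : 0 < (2:ℝ) ^ j * ‖y‖ := by
            have := norm_pos_iff.2 hy
            positivity
          set u := (2:ℝ) ^ j * ‖y‖
          rw [Real.rpow_one]
          refine le_min (mul_le_of_le_one_left hu.le
            (Real.rpow_le_one_of_one_le_of_nonpos (by linarith) (by linarith))) ?_
          calc (1 + u) ^ (-((d:ℝ) + 2)) * u ≤ (1 + u) ^ (-2 : ℝ) * (1 + u) := by
                gcongr
                · linarith
                · linarith
                · linarith
            _ = (1 + u) ^ (-1 : ℝ) := by
                rw [← Real.rpow_add_one (by positivity)]; norm_num
            _ ≤ u ^ (-1 : ℝ) := Real.rpow_le_rpow_of_nonpos hu (by linarith) (by norm_num)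
    _ = _ := by rw [lintegral_const_mul' _ _ hD1]; ring

lemma rgh_ray {d : ℕ} (f : SchwartzMap (EuclideanSpace ℝ (Fin d)) ℂ)
    {x : EuclideanSpace ℝ (Fin d)} (hx : x ≠ 0) :
    ‖f x‖ₑ ≤ ‖x‖ₑ * ∫⁻ t in Set.Ioi (1:ℝ), ‖fderiv ℝ f (t • x)‖ₑ := by
  have hder : ∀ t : ℝ, HasDerivAt (fun t : ℝ => f (t • x)) (fderiv ℝ f (t • x) x) t := by
    intro t
    have h1 : HasDerivAt (fun t : ℝ => t • x) x t := by
      simpa using (hasDerivAt_id t).smul_const x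
    exact (f.differentiableAt.hasFDerivAt).comp_hasDerivAt t h1
  have hc : Continuous (fun t : ℝ => fderiv ℝ f (t • x) x) := by
    have h1 : Continuous (fderiv ℝ f) := f.smooth'.continuous_fderiv (by simp)
    exact (h1.comp (by fun_prop : Continuous fun t : ℝ => t • x)).clm_apply continuous_const
  have hbound : ∀ T : ℝ, 1 ≤ T → ‖f x‖ₑ ≤ ‖f (T • x)‖ₑ +
      ‖x‖ₑ * ∫⁻ t in Set.Ioi (1:ℝ), ‖fderiv ℝ f (t • x)‖ₑ := by
    intro T hT
    have hI := intervalIntegral.integral_eq_sub_of_hasDerivAt (a := 1) (b := T)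
      (fun t _ => hder t) (hc.intervalIntegrable _ _)
    rw [one_smul] at hI
    have : f x = f (T • x) - ∫ t in (1:ℝ)..T, fderiv ℝ f (t • x) x := by rw [hI]; ring
    rw [this]
    refine (enorm_sub_le).trans (by
      gcongr
      rw [intervalIntegral.integral_of_le hT]
      refine (enorm_integral_le_lintegral_enorm _).trans ?_
      rw [← lintegral_const_mul' _ _ (by simp)]
      refine (lintegral_mono_set Set.Ioc_subset_Ioi_self).trans (lintegral_mono fun t => ?_)
      rw [mul_comm]
      exact ContinuousLinearMap.le_opENorm _ _)
  have hlim : Filter.Tendsto (fun T : ℝ => ‖f (T • x)‖ₑ +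
      ‖x‖ₑ * ∫⁻ t in Set.Ioi (1:ℝ), ‖fderiv ℝ f (t • x)‖ₑ) Filter.atTop (nhds (0 +
      ‖x‖ₑ * ∫⁻ t in Set.Ioi (1:ℝ), ‖fderiv ℝ f (t • x)‖ₑ)) := by
    refine Filter.Tendsto.add ?_ tendsto_const_nhds
    have h0 : Filter.Tendsto (fun T : ℝ => f (T • x)) Filter.atTop (nhds 0) := by
      refine f.tendsto_cocompact.comp ?_
      rw [← Metric.cobounded_eq_cocompact, ← tendsto_norm_atTop_iff_cobounded]
      simp only [norm_smul]
      exact (tendsto_norm_atTop_atTop).atTop_mul_const (norm_pos_iff.2 hx)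
    have := (continuous_enorm.tendsto (0:ℂ)).comp h0
    simpa [Function.comp_def] using this
  rw [zero_add] at hlim
  exact ge_of_tendsto hlim (Filter.eventually_atTop.2 ⟨1, hbound⟩)

lemma rgh_hardy {d : ℕ} {q : ℝ} (hq : 2 < q) (hqd : q < d) : ∃ C : ENNReal, C ≠ ⊤ ∧
    ∀ f : SchwartzMap (EuclideanSpace ℝ (Fin d)) ℂ,
    ∫⁻ x : EuclideanSpace ℝ (Fin d), (ENNReal.ofReal (‖x‖⁻¹) * ‖f x‖ₑ) ^ q
      ≤ C * ∫⁻ x, ‖fderiv ℝ f x‖ₑ ^ q := by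
  have hd : 3 ≤ d := by
    have : (2:ℝ) < d := by linarith
    have : 2 < d := by exact_mod_cast this
    omega
  have hq1 : 0 < q - 1 := by linarith
  set b : ℝ := ((d + q) / 2 - 1) / (q - 1) with hb
  have hbq : b * (q - 1) = (d + q) / 2 - 1 := by rw [hb]; field_simp
  have hb1 : 1 < b := by rw [hb, lt_div_iff₀ hq1]; linarith
  have fin : ∀ a : ℝ, a < -1 → ∫⁻ t in Set.Ioi (1:ℝ), ENNReal.ofReal (t ^ a) ≠ ⊤ := by
    intro a ha
    have h := (integrableOn_Ioi_rpow_of_lt ha one_pos).2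
    rw [hasFiniteIntegral_iff_norm] at h
    refine ne_top_of_le_ne_top h.ne (lintegral_mono fun t => ENNReal.ofReal_le_ofReal (le_abs_self _))
  set J1 := ∫⁻ t in Set.Ioi (1:ℝ), ENNReal.ofReal (t ^ (-b)) with hJ1
  set J2 := ∫⁻ t in Set.Ioi (1:ℝ), ENNReal.ofReal (t ^ (b * (q - 1) - d)) with hJ2
  have hJ1f : J1 ≠ ⊤ := fin _ (by linarith)
  have hJ2f : J2 ≠ ⊤ := fin _ (by linarith)
  refine ⟨J1 ^ (q - 1) * J2, ENNReal.mul_ne_top (ENNReal.rpow_ne_top_of_nonneg hq1.le hJ1f) hJ2f, ?_⟩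
  intro f
  have : Nonempty (Fin d) := ⟨⟨0, by omega⟩⟩
  have hne : ∀ᵐ y : EuclideanSpace ℝ (Fin d), y ≠ 0 := by
    simp [ae_iff, measure_singleton]
  have hcf : Continuous (fderiv ℝ f) := f.smooth'.continuous_fderiv (by simp)
  set G : EuclideanSpace ℝ (Fin d) → ENNReal := fun x => ‖fderiv ℝ f x‖ₑ with hG
  have hGm : Measurable G := hcf.enorm.measurable
  have hpt : ∀ᵐ x : EuclideanSpace ℝ (Fin d), (ENNReal.ofReal (‖x‖⁻¹) * ‖f x‖ₑ) ^ q ≤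
      J1 ^ (q - 1) * ∫⁻ t in Set.Ioi (1:ℝ), ENNReal.ofReal (t ^ (b * (q - 1))) * G (t • x) ^ q := by
    filter_upwards [hne] with x hx
    have hx' : 0 < ‖x‖ := norm_pos_iff.2 hx
    have h1 : ENNReal.ofReal (‖x‖⁻¹) * ‖f x‖ₑ ≤ ∫⁻ t in Set.Ioi (1:ℝ), G (t • x) := by
      calc _ ≤ ENNReal.ofReal (‖x‖⁻¹) * (‖x‖ₑ * ∫⁻ t in Set.Ioi (1:ℝ), ‖fderiv ℝ f (t • x)‖ₑ) := by
            gcongr; exact rgh_ray f hx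
        _ = _ := by
            rw [← mul_assoc, ← ofReal_norm, ← ENNReal.ofReal_mul (by positivity),
              inv_mul_cancel₀ hx'.ne']
            simp [hG]
    have hGx : Measurable (fun t : ℝ => G (t • x)) := hGm.comp (by fun_prop)
    have h2 := rgh_jensen (volume.restrict (Set.Ioi (1:ℝ))) (q := q) (by linarith)
      (w := fun t => ENNReal.ofReal (t ^ (-b))) (g := fun t => ENNReal.ofReal (t ^ b) * G (t • x))
      (by fun_prop) (by fun_prop)
    have e1 : ∫⁻ t in Set.Ioi (1:ℝ), ENNReal.ofReal (t ^ (-b)) * (ENNReal.ofReal (t ^ b) * G (t • x))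
        = ∫⁻ t in Set.Ioi (1:ℝ), G (t • x) := by
      refine setLIntegral_congr_fun measurableSet_Ioi fun t ht => ?_
      have ht0 : (0:ℝ) < t := lt_trans one_pos ht
      rw [← mul_assoc, ← ENNReal.ofReal_mul (by positivity), ← Real.rpow_add ht0]
      simp
    have e2 : ∫⁻ t in Set.Ioi (1:ℝ), ENNReal.ofReal (t ^ (-b)) * (ENNReal.ofReal (t ^ b) * G (t • x)) ^ q
        = ∫⁻ t in Set.Ioi (1:ℝ), ENNReal.ofReal (t ^ (b * (q - 1))) * G (t • x) ^ q := by
      refine setLIntegral_congr_fun measurableSet_Ioi fun t ht => ?_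
      have ht0 : (0:ℝ) < t := lt_trans one_pos ht
      rw [ENNReal.mul_rpow_of_nonneg _ _ (by linarith), ENNReal.ofReal_rpow_of_pos (by positivity),
        ← mul_assoc, ← ENNReal.ofReal_mul (by positivity), ← Real.rpow_mul ht0.le,
        ← Real.rpow_add ht0]
      congr 3; ring
    rw [e1, e2] at h2
    exact (ENNReal.rpow_le_rpow h1 (by linarith)).trans h2
  calc _ ≤ _ := lintegral_mono_ae hpt
    _ = J1 ^ (q - 1) * ∫⁻ t in Set.Ioi (1:ℝ), ∫⁻ x : EuclideanSpace ℝ (Fin d),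
        ENNReal.ofReal (t ^ (b * (q - 1))) * G (t • x) ^ q := by
        rw [lintegral_const_mul' _ _ (ENNReal.rpow_ne_top_of_nonneg hq1.le hJ1f)]
        rw [lintegral_lintegral_swap]
        have hGx : Measurable (fun p : EuclideanSpace ℝ (Fin d) × ℝ => G (p.2 • p.1)) :=
          hGm.comp (by fun_prop)
        refine Measurable.aemeasurable ?_
        have h1 : Measurable (fun p : EuclideanSpace ℝ (Fin d) × ℝ =>
          ENNReal.ofReal (p.2 ^ (b * (q - 1)))) := by fun_prop
        exact h1.mul (hGx.pow_const q)
    _ = J1 ^ (q - 1) * ∫⁻ t in Set.Ioi (1:ℝ), ENNReal.ofReal (t ^ (b * (q - 1) - d)) *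
          ∫⁻ x, G x ^ q := by
        congr 1
        refine setLIntegral_congr_fun measurableSet_Ioi fun t ht => ?_
        have ht0 : (0:ℝ) < t := lt_trans one_pos ht
        rw [lintegral_const_mul' _ _ (by simp), rgh_scale ht0 (fun x => G x ^ q), ← mul_assoc,
          ← ENNReal.ofReal_mul (by positivity), ← Real.rpow_add ht0, ← sub_eq_add_neg]
    _ = _ := by
        rw [lintegral_mul_const _ (by fun_prop)]
        ring

lemma rgh_mult {d : ℕ} (φ : EuclideanSpace ℝ (Fin d) → ℝ) (hφ : ContDiff ℝ (⊤ : ℕ∞) φ)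
    (hsupp : ∀ ξ, φ ξ ≠ 0 → ‖ξ‖ ≤ 3) (j : ℤ) :
    ∃ χ : SchwartzMap (EuclideanSpace ℝ (Fin d)) ℂ, ∀ ξ, χ ξ = (φ ((2:ℝ) ^ (-j) • ξ) : ℂ) := by
  have h1 : ContDiff ℝ (⊤ : ℕ∞) (fun ξ => (φ ((2:ℝ) ^ (-j) • ξ) : ℂ)) :=
    Complex.ofRealCLM.contDiff.comp (hφ.comp (contDiff_const_smul _))
  have h2 : HasCompactSupport (fun ξ : EuclideanSpace ℝ (Fin d) =>
      (φ ((2:ℝ) ^ (-j) • ξ) : ℂ)) := by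
    refine HasCompactSupport.of_support_subset_isCompact
      (isCompact_closedBall (0 : EuclideanSpace ℝ (Fin d)) ((2:ℝ) ^ j * 3)) ?_
    intro ξ hξ
    have h3 : φ ((2:ℝ) ^ (-j) • ξ) ≠ 0 := by simpa using hξ
    have h4 := hsupp _ h3
    rw [norm_smul, Real.norm_of_nonneg (by positivity), zpow_neg,
      inv_mul_le_iff₀ (by positivity)] at h4
    simpa using h4
  exact ⟨h2.toSchwartzMap h1, fun ξ => rfl⟩

lemma rgh_scaleFourier {d : ℕ} (χ : EuclideanSpace ℝ (Fin d) → ℂ) {N : ℝ} (hN : 0 < N)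
    (z : EuclideanSpace ℝ (Fin d)) :
    𝓕⁻ (fun ξ => χ (N⁻¹ • ξ)) z = (N ^ (d:ℝ) : ℝ) • 𝓕⁻ χ (N • z) := by
  rw [Real.fourierInv_eq, Real.fourierInv_eq]
  have h := Measure.integral_comp_smul (volume : Measure (EuclideanSpace ℝ (Fin d)))
    (fun v => Real.fourierChar (inner ℝ v (N • z)) • χ v) N⁻¹
  simp only [finrank_euclideanSpace, Fintype.card_fin] at h
  have e : (N ^ (d:ℝ) : ℝ) = |(N⁻¹ ^ d)⁻¹| := by
    rw [abs_of_pos (by positivity), Real.rpow_natCast]; simp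
  rw [e, ← h]
  congr 1
  ext v
  rw [inner_smul_left, inner_smul_right, ← mul_assoc]
  simp [hN.ne']

lemma rgh_kernel (d : ℕ) : ∃ C : ENNReal, C ≠ ⊤ ∧
    ∀ (j : ℤ) (h : SchwartzMap (EuclideanSpace ℝ (Fin d)) ℂ),
    (∀ ξ, h ξ ≠ 0 → ‖(2:ℝ) ^ (-j) • ξ‖ ≤ 2) →
    ∀ x : EuclideanSpace ℝ (Fin d), (2:ℝ) ^ j * ‖x‖ < 1 →
    ‖(𝓕⁻ h) x‖ₑ ≤ C * rghT (fun y => ‖(𝓕⁻ h) y‖ₑ) j := by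
  let b : ContDiffBump (0 : EuclideanSpace ℝ (Fin d)) := ⟨2, 3, by norm_num, by norm_num⟩
  have hb1 : ∀ ξ, ‖ξ‖ ≤ 2 → b ξ = 1 := by
    intro ξ hξ
    exact b.one_of_mem_closedBall (by simpa using hξ)
  have hb2 : ∀ ξ, b ξ ≠ 0 → ‖ξ‖ ≤ 3 := by
    intro ξ hξ
    by_contra hc
    exact hξ (b.zero_of_le_dist (by simpa using (not_le.1 hc).le))
  have hχ := rgh_mult (fun ξ => b ξ) b.contDiff hb2
  obtain ⟨χ, hχ0⟩ := hχ 0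
  obtain ⟨C, hC⟩ : ∃ C : ℝ, ∀ z, (1 + ‖z‖) ^ (d + 2) * ‖(𝓕⁻ χ) z‖ ≤ C := by
    refine ⟨2 ^ (d + 2) * (Finset.Iic (d + 2, 0)).sup
      (fun m => SchwartzMap.seminorm ℝ m.1 m.2) (𝓕⁻ χ), fun z => ?_⟩
    have := SchwartzMap.one_add_le_sup_seminorm_apply (𝕜 := ℝ) (m := (d + 2, 0)) le_rfl le_rfl
      (𝓕⁻ χ) z
    simpa only [norm_iteratedFDeriv_zero] using this
  have hC0 : 0 ≤ C := le_trans (by positivity) (hC 0)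
  refine ⟨ENNReal.ofReal (2 ^ (d + 2) * C), ENNReal.ofReal_ne_top, ?_⟩
  intro j h hh x hx
  obtain ⟨χj, hχj⟩ := hχ j
  set N : ℝ := (2:ℝ) ^ j with hN
  have hNpos : 0 < N := by positivity
  -- the kernel
  have hK : ∀ z, (𝓕⁻ χj) z = (N ^ (d:ℝ) : ℝ) • (𝓕⁻ χ) (N • z) := by
    intro z
    have e : (χj : EuclideanSpace ℝ (Fin d) → ℂ) = fun ξ => χ (N⁻¹ • ξ) := by
      funext ξ
      rw [hχj, hχ0, hN, zpow_neg]
      simp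
    rw [SchwartzMap.fourierInv_coe, SchwartzMap.fourierInv_coe, e, rgh_scaleFourier _ hNpos]
  -- reproducing formula
  have hrep : SchwartzMap.convolution (ContinuousLinearMap.mul ℂ ℂ) (𝓕⁻ χj) (𝓕⁻ h) = 𝓕⁻ h := by
    have h1 : 𝓕 (SchwartzMap.convolution (ContinuousLinearMap.mul ℂ ℂ) (𝓕⁻ χj) (𝓕⁻ h)) = h := by
      rw [SchwartzMap.fourier_convolution]
      ext ξ
      simp only [FourierTransform.fourier_fourierInv_eq, SchwartzMap.pairing_apply_apply,
        ContinuousLinearMap.mul_apply']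
      by_cases h0 : h ξ = 0
      · simp [h0]
      · rw [hχj, hb1 _ (hh ξ h0)]; simp
    conv_rhs => rw [← h1]
    simp
  have hconv : (𝓕⁻ h) x = ∫ y, (𝓕⁻ χj) (x - y) * (𝓕⁻ h) y := by
    conv_lhs => rw [← hrep]
    rw [SchwartzMap.convolution_apply, MeasureTheory.convolution_eq_swap]
    rfl
  rw [hconv]
  refine (enorm_integral_le_lintegral_enorm _).trans ?_
  rw [rghT, ← lintegral_const_mul' _ _ ENNReal.ofReal_ne_top]
  refine lintegral_mono fun y => ?_
  rw [enorm_mul, ← mul_assoc]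
  gcongr
  rw [← ofReal_norm, ← ENNReal.ofReal_mul (by positivity)]
  refine ENNReal.ofReal_le_ofReal ?_
  rw [hK, norm_smul, Real.norm_of_nonneg (by positivity), ← hN]
  set z := N • (x - y) with hz
  have hz1 : 1 + N * ‖y‖ ≤ 2 * (1 + ‖z‖) := by
    have : N * ‖y‖ ≤ N * ‖x‖ + ‖z‖ := by
      rw [hz, norm_smul, Real.norm_of_nonneg hNpos.le, ← mul_add]
      gcongr
      have := norm_sub_le x (x - y)
      simpa using this
    linarith [norm_nonneg z]
  have hp : 0 < 1 + N * ‖y‖ := by positivity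
  have e : (1 + N * ‖y‖) ^ (-((d:ℝ) + 2)) = ((1 + N * ‖y‖) ^ (d + 2))⁻¹ := by
    rw [Real.rpow_neg hp.le, ← Real.rpow_natCast]; push_cast; rfl
  rw [e]
  have h5 : ‖(𝓕⁻ χ) z‖ ≤ 2 ^ (d + 2) * C * ((1 + N * ‖y‖) ^ (d + 2))⁻¹ := by
    rw [← div_eq_mul_inv, le_div_iff₀ (by positivity)]
    calc ‖(𝓕⁻ χ) z‖ * (1 + N * ‖y‖) ^ (d + 2) ≤ ‖(𝓕⁻ χ) z‖ * (2 * (1 + ‖z‖)) ^ (d + 2) := by gcongr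
      _ = 2 ^ (d + 2) * ((1 + ‖z‖) ^ (d + 2) * ‖(𝓕⁻ χ) z‖) := by rw [mul_pow]; ring
      _ ≤ _ := by gcongr; exact hC z
  calc _ ≤ N ^ (d:ℝ) * (2 ^ (d + 2) * C * ((1 + N * ‖y‖) ^ (d + 2))⁻¹) := by gcongr
    _ = _ := by ring

lemma rgh_LP {d : ℕ} (ψ : EuclideanSpace ℝ (Fin d) → ℝ) (hψsmooth : ContDiff ℝ (⊤ : ℕ∞) ψ)
    (hψsupp : Function.support ψ ⊆ {ξ | 1 / 2 ≤ ‖ξ‖ ∧ ‖ξ‖ ≤ 2})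
    (f : SchwartzMap (EuclideanSpace ℝ (Fin d)) ℂ) (P : ℤ → EuclideanSpace ℝ (Fin d) → ℂ)
    (hP : ∀ j x, P j x = 𝓕⁻ (fun ξ => (ψ ((2 : ℝ) ^ (-j) • ξ) : ℂ) * 𝓕 (⇑f) ξ) x) :
    ∃ h : ℤ → SchwartzMap (EuclideanSpace ℝ (Fin d)) ℂ,
      (∀ j ξ, h j ξ = (ψ ((2 : ℝ) ^ (-j) • ξ) : ℂ) * (𝓕 f) ξ) ∧ ∀ j x, P j x = (𝓕⁻ (h j)) x := by
  have hχ := rgh_mult ψ hψsmooth (fun ξ hξ => by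
    have := (hψsupp hξ).2
    linarith)
  choose χ hχ using hχ
  have hh : ∀ j ξ, (SchwartzMap.smulLeftCLM ℂ (χ j) (𝓕 f)) ξ =
      (ψ ((2 : ℝ) ^ (-j) • ξ) : ℂ) * (𝓕 f) ξ := by
    intro j ξ
    rw [SchwartzMap.smulLeftCLM_apply_apply (χ j).hasTemperateGrowth, hχ, smul_eq_mul]
  refine ⟨fun j => SchwartzMap.smulLeftCLM ℂ (χ j) (𝓕 f), hh, ?_⟩
  intro j x
  rw [hP, SchwartzMap.fourierInv_coe]
  have : (SchwartzMap.smulLeftCLM ℂ (χ j) (𝓕 f) : EuclideanSpace ℝ (Fin d) → ℂ) =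
      fun ξ => (ψ ((2 : ℝ) ^ (-j) • ξ) : ℂ) * 𝓕 (⇑f) ξ := by
    funext ξ
    rw [hh, SchwartzMap.fourier_coe]
  rw [this]

lemma rgh_sum {d : ℕ} (hd : 1 ≤ d) (ψ : EuclideanSpace ℝ (Fin d) → ℝ)
    (hψrange : ∀ ξ, ψ ξ ∈ Set.Icc (0 : ℝ) 1)
    (hψsum : ∀ ξ : EuclideanSpace ℝ (Fin d), ξ ≠ 0 →
      ∑' j : ℤ, ψ ((2 : ℝ) ^ (-j) • ξ) = 1)
    (f : SchwartzMap (EuclideanSpace ℝ (Fin d)) ℂ)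
    (h : ℤ → SchwartzMap (EuclideanSpace ℝ (Fin d)) ℂ)
    (hh : ∀ j ξ, h j ξ = (ψ ((2 : ℝ) ^ (-j) • ξ) : ℂ) * (𝓕 f) ξ)
    (x : EuclideanSpace ℝ (Fin d)) :
    ‖f x‖ₑ ≤ ∑' j, ‖(𝓕⁻ (h j)) x‖ₑ := by
  have : Nonempty (Fin d) := ⟨⟨0, by omega⟩⟩
  have hne : ∀ᵐ y : EuclideanSpace ℝ (Fin d), y ≠ 0 := by
    simp [ae_iff, measure_singleton]
  have hsummable : ∀ ξ : EuclideanSpace ℝ (Fin d), ξ ≠ 0 →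
      Summable (fun j : ℤ => ψ ((2 : ℝ) ^ (-j) • ξ)) := by
    intro ξ hξ
    by_contra hc
    have := hψsum ξ hξ
    rw [tsum_eq_zero_of_not_summable hc] at this
    norm_num at this
  have hinv : f x = 𝓕⁻ ((𝓕 f : SchwartzMap (EuclideanSpace ℝ (Fin d)) ℂ) :
      EuclideanSpace ℝ (Fin d) → ℂ) x := by
    rw [← SchwartzMap.fourierInv_coe]; simp
  let F : ℤ → EuclideanSpace ℝ (Fin d) → ℂ := fun j v => Real.fourierChar (inner ℝ v x) • h j v
  have hF : ∀ j, (𝓕⁻ (h j)) x = ∫ v, F j v := by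
    intro j
    rw [SchwartzMap.fourierInv_coe, Real.fourierInv_eq]
  have hFn : ∀ j v, ‖F j v‖ₑ = ‖h j v‖ₑ := by
    intro j v
    rw [← ofReal_norm, ← ofReal_norm, Circle.norm_smul]
  have hcont : ∀ j, Continuous (F j) := by
    intro j
    have h1 : Continuous (fun v : EuclideanSpace ℝ (Fin d) => Real.fourierChar (inner ℝ v x)) :=
      Real.continuous_fourierChar.comp (by fun_prop)
    exact h1.smul (h j).continuous
  have hfin : ∑' j, ∫⁻ v, ‖F j v‖ₑ ≠ ⊤ := by
    rw [← lintegral_tsum (fun j => (hcont j).enorm.measurable.aemeasurable)]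
    have hi := ((𝓕 f).integrable (μ := volume)).2
    refine ne_top_of_le_ne_top hi.ne (lintegral_mono_ae ?_)
    filter_upwards [hne] with v hv
    have : ∀ j, ‖F j v‖ₑ = ENNReal.ofReal (ψ ((2 : ℝ) ^ (-j) • v)) * ‖(𝓕 f) v‖ₑ := by
      intro j
      rw [hFn, hh, enorm_mul, ← ofReal_norm, Complex.norm_real,
        Real.norm_of_nonneg (hψrange _).1]
    simp_rw [this]
    rw [ENNReal.tsum_mul_right, ← ENNReal.ofReal_tsum_of_nonneg (fun j => (hψrange _).1)
      (hsummable v hv), hψsum v hv]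
    simp
  have key : f x = ∑' j, (𝓕⁻ (h j)) x := by
    simp_rw [hF]
    rw [← integral_tsum (fun j => (hcont j).aestronglyMeasurable) hfin, hinv, Real.fourierInv_eq]
    refine integral_congr_ae ?_
    filter_upwards [hne] with v hv
    have h1 : HasSum (fun j : ℤ => ψ ((2 : ℝ) ^ (-j) • v)) 1 := by
      rw [← hψsum v hv]; exact (hsummable v hv).hasSum
    have h2 : HasSum (fun j : ℤ => (ψ ((2 : ℝ) ^ (-j) • v) : ℂ)) 1 := by
      rw [← Complex.ofReal_one]
      exact Complex.hasSum_ofReal.2 h1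
    have h3 := (h2.mul_right ((𝓕 f) v)).const_smul (Real.fourierChar (inner ℝ v x))
    simp_rw [← hh, one_mul] at h3
    exact h3.tsum_eq.symm
  rw [key]
  exact enorm_tsum_le_tsum_enorm

lemma rgh_bounds {d : ℕ} (ψ : EuclideanSpace ℝ (Fin d) → ℝ)
    (hψrange : ∀ ξ, ψ ξ ∈ Set.Icc (0 : ℝ) 1)
    (hψsupp : Function.support ψ ⊆ {ξ | 1 / 2 ≤ ‖ξ‖ ∧ ‖ξ‖ ≤ 2})
    (f : SchwartzMap (EuclideanSpace ℝ (Fin d)) ℂ)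
    (h : ℤ → SchwartzMap (EuclideanSpace ℝ (Fin d)) ℂ)
    (hh : ∀ j ξ, h j ξ = (ψ ((2 : ℝ) ^ (-j) • ξ) : ℂ) * (𝓕 f) ξ) :
    ∃ B : ℝ, 0 ≤ B ∧ ∀ j : ℤ,
      (∀ x, (2:ℝ) ^ j * ‖(𝓕⁻ (h j)) x‖ ≤ B * (1 / 2) ^ j.natAbs) ∧
      ∫ x, ((2:ℝ) ^ j * ‖(𝓕⁻ (h j)) x‖) ^ 2 ≤ B * ((1 / 2) ^ j.natAbs) ^ 2 := by
  have htg : Function.HasTemperateGrowth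
      (fun ξ : EuclideanSpace ℝ (Fin d) => (1 + ‖ξ‖ ^ 2 : ℝ)) := by fun_prop
  set g : SchwartzMap (EuclideanSpace ℝ (Fin d)) ℂ :=
    SchwartzMap.smulLeftCLM ℂ (fun ξ : EuclideanSpace ℝ (Fin d) => (1 + ‖ξ‖ ^ 2 : ℝ)) (𝓕 f) with hg
  have hgn : ∀ ξ, ‖g ξ‖ = (1 + ‖ξ‖ ^ 2) * ‖(𝓕 f) ξ‖ := by
    intro ξ
    rw [hg, SchwartzMap.smulLeftCLM_apply_apply htg, norm_smul, Real.norm_of_nonneg (by positivity)]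
  have hpt : ∀ j ξ, (2:ℝ) ^ j * ‖h j ξ‖ ≤ 4 * (1 / 2) ^ j.natAbs * ‖g ξ‖ := by
    intro j ξ
    rw [hh, norm_mul, Complex.norm_real, Real.norm_of_nonneg (hψrange _).1, hgn]
    by_cases h0 : ψ ((2 : ℝ) ^ (-j) • ξ) = 0
    · rw [h0]; simp only [zero_mul, mul_zero]; positivity
    have hs := (hψsupp h0).1
    rw [norm_smul, Real.norm_of_nonneg (by positivity), zpow_neg, inv_mul_eq_div,
      div_le_div_iff₀ (by norm_num) (by positivity), one_mul] at hs
    have h1 : ψ ((2 : ℝ) ^ (-j) • ξ) * ‖(𝓕 f) ξ‖ ≤ ‖(𝓕 f) ξ‖ :=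
      mul_le_of_le_one_left (norm_nonneg _) (hψrange _).2
    have h2 : (2:ℝ) ^ j ≤ 4 * (1 / 2) ^ j.natAbs * (1 + ‖ξ‖ ^ 2) := by
      rcases le_total 0 j with hj | hj
      · obtain ⟨n, rfl⟩ := Int.eq_ofNat_of_zero_le hj
        simp only [Int.natAbs_natCast, zpow_natCast] at hs ⊢
        have : (2:ℝ) ^ n * 2 ^ n ≤ 4 * ‖ξ‖ ^ 2 := by nlinarith [pow_pos (two_pos : (0:ℝ) < 2) n]
        rw [one_div, inv_pow, mul_assoc, mul_left_comm, inv_mul_eq_div, le_div_iff₀ (by positivity)]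
        linarith
      · obtain ⟨n, rfl⟩ := Int.exists_eq_neg_ofNat hj
        simp only [Int.natAbs_neg, Int.natAbs_natCast, zpow_neg, zpow_natCast, one_div, inv_pow]
        have : (0:ℝ) < (2 ^ n)⁻¹ := by positivity
        nlinarith [mul_nonneg this.le (sq_nonneg ‖ξ‖)]
    calc _ ≤ (2:ℝ) ^ j * ‖(𝓕 f) ξ‖ := by gcongr
      _ ≤ (4 * (1 / 2) ^ j.natAbs * (1 + ‖ξ‖ ^ 2)) * ‖(𝓕 f) ξ‖ := by gcongr
      _ = _ := by ring
  have hg2 : Integrable (fun ξ => ‖g ξ‖ ^ 2) volume := by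
    have := (g.memLp 2 volume).integrable_norm_pow (by norm_num)
    simpa using this
  have hh2 : ∀ j, Integrable (fun ξ => ‖h j ξ‖ ^ 2) volume := by
    intro j
    have := ((h j).memLp 2 volume).integrable_norm_pow (by norm_num)
    simpa using this
  refine ⟨4 * (∫ ξ, ‖g ξ‖) + 16 * ∫ ξ, ‖g ξ‖ ^ 2, by positivity, fun j => ⟨fun x => ?_, ?_⟩⟩
  · have h1 : ‖(𝓕⁻ (h j)) x‖ ≤ ∫ ξ, ‖h j ξ‖ := by
      rw [SchwartzMap.fourierInv_coe, Real.fourierInv_eq]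
      refine (norm_integral_le_integral_norm _).trans (le_of_eq ?_)
      simp only [Circle.norm_smul]
    calc _ ≤ (2:ℝ) ^ j * ∫ ξ, ‖h j ξ‖ := by gcongr
      _ = ∫ ξ, (2:ℝ) ^ j * ‖h j ξ‖ := by rw [integral_const_mul]
      _ ≤ ∫ ξ, 4 * (1 / 2) ^ j.natAbs * ‖g ξ‖ :=
          integral_mono ((h j).integrable.norm.const_mul _) (g.integrable.norm.const_mul _) (hpt j)
      _ = (4 * ∫ ξ, ‖g ξ‖) * (1 / 2) ^ j.natAbs := by rw [integral_const_mul]; ring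
      _ ≤ _ := by
          gcongr
          have : 0 ≤ ∫ ξ, ‖g ξ‖ ^ 2 := by positivity
          linarith
  · have h1 := SchwartzMap.integral_norm_sq_fourier (𝓕⁻ (h j))
    rw [FourierTransform.fourier_fourierInv_eq] at h1
    calc _ = ((2:ℝ) ^ j) ^ 2 * ∫ x, ‖(𝓕⁻ (h j)) x‖ ^ 2 := by
          rw [← integral_const_mul]; congr 1; ext x; ring
      _ = ∫ x, ((2:ℝ) ^ j * ‖h j x‖) ^ 2 := by
          rw [← h1, ← integral_const_mul]; congr 1; ext x; ring
      _ ≤ ∫ x, (4 * (1 / 2) ^ j.natAbs) ^ 2 * ‖g x‖ ^ 2 := by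
          refine integral_mono ?_ (hg2.const_mul _) fun x => ?_
          · simp_rw [mul_pow]
            exact (hh2 j).const_mul _
          · simp only
            rw [← mul_pow]
            have := hpt j x
            gcongr
      _ = (16 * ∫ x, ‖g x‖ ^ 2) * ((1 / 2) ^ j.natAbs) ^ 2 := by rw [integral_const_mul]; ring
      _ ≤ _ := by
          gcongr
          have : 0 ≤ ∫ ξ, ‖g ξ‖ := by positivity
          linarith

lemma rgh_lp {q r : ℝ} (hq : 0 < q) (hqr : q ≤ r) (a : ℤ → ENNReal) :
    (∑' j, a j ^ r) ^ (q / r) ≤ ∑' j, a j ^ q := by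
  have hr : 0 < r := by linarith
  set s := ∑' j, a j ^ q with hs
  have hqr' : 0 ≤ (r - q) / q := div_nonneg (by linarith) hq.le
  have h1 : ∑' j, a j ^ r ≤ s ^ (r / q) := by
    calc ∑' j, a j ^ r ≤ ∑' j, a j ^ q * s ^ ((r - q) / q) := by
          refine ENNReal.tsum_le_tsum fun j => ?_
          have e : a j ^ r = a j ^ q * (a j ^ q) ^ ((r - q) / q) := by
            rw [← ENNReal.rpow_mul, ← ENNReal.rpow_add_of_nonneg _ _ hq.le (by positivity)]
            congr 1
            field_simp
            ring
          rw [e]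
          gcongr
          exact ENNReal.le_tsum j
      _ = s * s ^ ((r - q) / q) := by rw [ENNReal.tsum_mul_right]
      _ = s ^ (1:ℝ) * s ^ ((r - q) / q) := by rw [ENNReal.rpow_one]
      _ = s ^ (r / q) := by
          rw [← ENNReal.rpow_add_of_nonneg _ _ (by norm_num) hqr']
          congr 1
          field_simp
          ring
  calc _ ≤ (s ^ (r / q)) ^ (q / r) := ENNReal.rpow_le_rpow h1 (by positivity)
    _ = s := by
      rw [← ENNReal.rpow_mul, div_mul_div_cancel₀ hq.ne', div_self hr.ne', ENNReal.rpow_one]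

lemma rgh_finite {d : ℕ} {q : ℝ} (hq : 2 < q)
    (h : ℤ → SchwartzMap (EuclideanSpace ℝ (Fin d)) ℂ) {B : ℝ} (hB : 0 ≤ B)
    (hb : ∀ j : ℤ, (∀ x, (2:ℝ) ^ j * ‖h j x‖ ≤ B * (1 / 2) ^ j.natAbs) ∧
      ∫ x, ((2:ℝ) ^ j * ‖h j x‖) ^ 2 ≤ B * ((1 / 2) ^ j.natAbs) ^ 2) :
    ∫⁻ x, ∑' j : ℤ, (ENNReal.ofReal ((2:ℝ) ^ j) * ‖h j x‖ₑ) ^ q ≠ ⊤ := by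
  have hs : Summable (fun i : ℤ => B ^ (q - 2) * B * (1 / 2 : ℝ) ^ i.natAbs) := by
    apply Summable.mul_left
    have h1 : Summable (fun n : ℕ => ((1 / 2 : ℝ)) ^ n) := summable_geometric_two
    apply Summable.of_nat_of_neg
    · simpa using h1
    · simpa using h1
  rw [lintegral_tsum (fun j => by
    have := (h j).continuous.measurable
    fun_prop)]
  refine ne_top_of_le_ne_top hs.tsum_ofReal_ne_top (ENNReal.tsum_le_tsum fun j => ?_)
  obtain ⟨hb1, hb2⟩ := hb j
  set θ : ℝ := (1 / 2 : ℝ) ^ j.natAbs with hθ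
  have hθ0 : 0 < θ := by positivity
  have hθ1 : θ ≤ 1 := pow_le_one₀ (by norm_num) (by norm_num)
  have hIntg : Integrable (fun x => ((2:ℝ) ^ j * ‖h j x‖) ^ 2) volume := by
    have := ((h j).memLp 2 volume).integrable_norm_pow (by norm_num)
    simp_rw [mul_pow]
    exact Integrable.const_mul (by simpa using this) _
  calc _ ≤ ∫⁻ x, ENNReal.ofReal ((B * θ) ^ (q - 2)) *
        ENNReal.ofReal (((2:ℝ) ^ j * ‖h j x‖) ^ 2) := by
        refine lintegral_mono fun x => ?_
        rw [← ofReal_norm, ← ENNReal.ofReal_mul (by positivity),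
          ENNReal.ofReal_rpow_of_nonneg (by positivity) (by linarith),
          ← ENNReal.ofReal_mul (by positivity)]
        refine ENNReal.ofReal_le_ofReal ?_
        have e : ((2:ℝ) ^ j * ‖h j x‖) ^ q =
            ((2:ℝ) ^ j * ‖h j x‖) ^ (q - 2) * ((2:ℝ) ^ j * ‖h j x‖) ^ 2 := by
          rw [← Real.rpow_natCast, ← Real.rpow_add_of_nonneg (by positivity) (by linarith)
            (by positivity)]
          congr 1; push_cast; ring
        rw [e]
        exact mul_le_mul_of_nonneg_right (Real.rpow_le_rpow (by positivity) (hb1 x)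
          (by linarith)) (by positivity)
    _ = ENNReal.ofReal ((B * θ) ^ (q - 2)) * ENNReal.ofReal (∫ x, ((2:ℝ) ^ j * ‖h j x‖) ^ 2) := by
        rw [lintegral_const_mul' _ _ ENNReal.ofReal_ne_top,
          ofReal_integral_eq_lintegral_ofReal hIntg (Filter.Eventually.of_forall fun x => by positivity)]
    _ ≤ ENNReal.ofReal ((B * θ) ^ (q - 2)) * ENNReal.ofReal (B * θ ^ 2) := by gcongr
    _ ≤ _ := by
        rw [← ENNReal.ofReal_mul (by positivity)]
        refine ENNReal.ofReal_le_ofReal ?_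
        rw [Real.mul_rpow hB hθ0.le]
        have h1 : θ ^ (q - 2) ≤ 1 := Real.rpow_le_one hθ0.le hθ1 (by linarith)
        have h2 : θ ^ 2 ≤ θ := by nlinarith
        calc B ^ (q - 2) * θ ^ (q - 2) * (B * θ ^ 2) ≤ B ^ (q - 2) * 1 * (B * θ) := by gcongr
          _ = _ := by ring

lemma rgh_refined {d : ℕ} {q : ℝ} (hq : 2 < q) (hqd : q < d)
    (ψ : EuclideanSpace ℝ (Fin d) → ℝ) (hψsmooth : ContDiff ℝ (⊤ : ℕ∞) ψ)
    (hψrange : ∀ ξ, ψ ξ ∈ Set.Icc (0 : ℝ) 1)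
    (hψsupp : Function.support ψ ⊆ {ξ | 1 / 2 ≤ ‖ξ‖ ∧ ‖ξ‖ ≤ 2})
    (hψsum : ∀ ξ : EuclideanSpace ℝ (Fin d), ξ ≠ 0 →
      ∑' j : ℤ, ψ ((2 : ℝ) ^ (-j) • ξ) = 1) :
    ∃ C : ENNReal, C ≠ ⊤ ∧ ∀ f : SchwartzMap (EuclideanSpace ℝ (Fin d)) ℂ,
      ∀ P : ℤ → EuclideanSpace ℝ (Fin d) → ℂ,
      (∀ j x, P j x = 𝓕⁻ (fun ξ => (ψ ((2 : ℝ) ^ (-j) • ξ) : ℂ) * 𝓕 (⇑f) ξ) x) →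
      (∫⁻ x, (∑' j : ℤ, (ENNReal.ofReal ((2:ℝ) ^ j) * ‖P j x‖ₑ) ^ (2 * (q - 1))) ^
        (q / (2 * (q - 1))) ≠ ⊤) ∧
      ∫⁻ x : EuclideanSpace ℝ (Fin d), (ENNReal.ofReal (‖x‖⁻¹) * ‖f x‖ₑ) ^ q ≤
        C * ∫⁻ x, (∑' j : ℤ, (ENNReal.ofReal ((2:ℝ) ^ j) * ‖P j x‖ₑ) ^ (2 * (q - 1))) ^
        (q / (2 * (q - 1))) := by
  have hd : 3 ≤ d := by
    have : (2:ℝ) < d := by linarith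
    have : 2 < d := by exact_mod_cast this
    omega
  have hq0 : 0 < q := by linarith
  have hq1 : 0 < q - 1 := by linarith
  set r : ℝ := 2 * (q - 1) with hr
  have hr0 : 0 < r := by linarith
  obtain ⟨D1, hD1, hD1b⟩ := rgh_dyadic one_pos
  obtain ⟨CK, hCK, hker⟩ := rgh_kernel d
  obtain ⟨CL, hCL, hlow⟩ := rgh_low hq hqd
  refine ⟨2 ^ (q - 1) * (D1 ^ q + CK ^ q * CL), ?_, ?_⟩
  · have h1 := ENNReal.rpow_ne_top_of_nonneg hq0.le hD1
    have h2 := ENNReal.rpow_ne_top_of_nonneg hq0.le hCK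
    have h3 : (2 : ENNReal) ^ (q - 1) ≠ ⊤ := ENNReal.rpow_ne_top_of_nonneg hq1.le (by norm_num)
    finiteness
  intro f P hP
  obtain ⟨h, hh, hPh⟩ := rgh_LP ψ hψsmooth hψsupp f P hP
  obtain ⟨B, hB, hb⟩ := rgh_bounds ψ hψrange hψsupp f h hh
  simp_rw [hPh]
  have hmeas : ∀ j, Measurable (fun x => ‖(𝓕⁻ (h j)) x‖ₑ) := fun j =>
    (𝓕⁻ (h j)).continuous.enorm.measurable
  set a : ℤ → EuclideanSpace ℝ (Fin d) → ENNReal := fun j x =>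
    ENNReal.ofReal ((2:ℝ) ^ j) * ‖(𝓕⁻ (h j)) x‖ₑ with ha
  constructor
  · refine ne_top_of_le_ne_top (rgh_finite hq (fun j => 𝓕⁻ (h j)) hB hb) ?_
    exact lintegral_mono fun x => rgh_lp hq0 (by linarith) (fun j => a j x)
  set A : EuclideanSpace ℝ (Fin d) → ENNReal := fun x => (∑' j, a j x ^ r) ^ (1 / r) with hA
  have hAm : Measurable A := by
    refine Measurable.pow_const (Measurable.ennreal_tsum fun j => ?_) _
    exact ((hmeas j).const_mul _).pow_const _
  have hAq : ∀ x, (∑' j, a j x ^ r) ^ (q / r) = A x ^ q := by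
    intro x
    rw [hA, ← ENNReal.rpow_mul]
    congr 1
    ring
  have haA : ∀ j x, ‖(𝓕⁻ (h j)) x‖ₑ ≤ ENNReal.ofReal (((2:ℝ) ^ j)⁻¹) * A x := by
    intro j x
    have h1 : a j x ≤ A x := by
      calc a j x = (a j x ^ r) ^ (1 / r) := by
            rw [← ENNReal.rpow_mul, mul_one_div_cancel hr0.ne', ENNReal.rpow_one]
        _ ≤ _ := ENNReal.rpow_le_rpow (ENNReal.le_tsum (f := fun j => a j x ^ r) j) (by positivity)
    calc ‖(𝓕⁻ (h j)) x‖ₑ = ENNReal.ofReal (((2:ℝ) ^ j)⁻¹) * a j x := by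
          rw [ha]
          simp only
          rw [← mul_assoc, ← ENNReal.ofReal_mul (by positivity), inv_mul_cancel₀ (by positivity)]
          simp
      _ ≤ _ := by gcongr
  have hsuppj : ∀ j ξ, h j ξ ≠ 0 → ‖(2:ℝ) ^ (-j) • ξ‖ ≤ 2 := by
    intro j ξ hξ
    rw [hh] at hξ
    have h1 : ψ ((2:ℝ) ^ (-j) • ξ) ≠ 0 := by
      intro h0
      rw [h0] at hξ
      simp at hξ
    exact (hψsupp h1).2
  have hlowj : ∀ j x, (2:ℝ) ^ j * ‖x‖ < 1 → ‖(𝓕⁻ (h j)) x‖ₑ ≤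
      CK * (ENNReal.ofReal (((2:ℝ) ^ j)⁻¹) * rghT A j) := by
    intro j x hx
    refine (hker j (h j) (hsuppj j) x hx).trans ?_
    gcongr
    rw [rghT, rghT, ← lintegral_const_mul' _ _ ENNReal.ofReal_ne_top]
    refine lintegral_mono fun y => ?_
    rw [mul_left_comm]
    gcongr
    exact haA j y
  have : Nonempty (Fin d) := ⟨⟨0, by omega⟩⟩
  have hne : ∀ᵐ y : EuclideanSpace ℝ (Fin d), y ≠ 0 := by
    simp [ae_iff, measure_singleton]
  set L : EuclideanSpace ℝ (Fin d) → ENNReal := fun x => ENNReal.ofReal (‖x‖⁻¹) *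
      ∑' j : ℤ, if (2:ℝ) ^ j * ‖x‖ < 1 then ENNReal.ofReal (((2:ℝ) ^ j)⁻¹) * rghT A j else 0 with hL
  have hpt : ∀ᵐ x : EuclideanSpace ℝ (Fin d), ENNReal.ofReal (‖x‖⁻¹) * ‖f x‖ₑ ≤
      D1 * A x + CK * L x := by
    filter_upwards [hne] with x hx
    have ht : 0 < ‖x‖ := norm_pos_iff.2 hx
    calc _ ≤ ENNReal.ofReal (‖x‖⁻¹) * ∑' j, ‖(𝓕⁻ (h j)) x‖ₑ := by
          gcongr
          exact rgh_sum (by omega) ψ hψrange hψsum f h hh x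
      _ ≤ ENNReal.ofReal (‖x‖⁻¹) * ∑' j : ℤ, (
            ENNReal.ofReal ‖x‖ * ENNReal.ofReal (min (((2:ℝ) ^ j * ‖x‖) ^ (1:ℝ))
              (((2:ℝ) ^ j * ‖x‖) ^ (-1:ℝ))) * A x +
            CK * (if (2:ℝ) ^ j * ‖x‖ < 1 then
              ENNReal.ofReal (((2:ℝ) ^ j)⁻¹) * rghT A j else 0)) := by
          gcongr with j
          by_cases hj : (2:ℝ) ^ j * ‖x‖ < 1
          · rw [if_pos hj]
            exact le_add_left (hlowj j x hj)
          · rw [if_neg hj]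
            refine le_add_right ((haA j x).trans ?_)
            gcongr
            rw [← ENNReal.ofReal_mul (by positivity)]
            refine ENNReal.ofReal_le_ofReal (le_of_eq ?_)
            have hu : 0 < (2:ℝ) ^ j * ‖x‖ := by positivity
            rw [min_eq_right (Real.rpow_le_rpow_of_exponent_le (not_lt.1 hj) (by norm_num)),
              Real.rpow_neg_one]
            field_simp
      _ = ENNReal.ofReal (‖x‖⁻¹) * ENNReal.ofReal ‖x‖ *
            (∑' j : ℤ, ENNReal.ofReal (min (((2:ℝ) ^ j * ‖x‖) ^ (1:ℝ))
              (((2:ℝ) ^ j * ‖x‖) ^ (-1:ℝ)))) * A x + CK * L x := by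
          rw [ENNReal.tsum_add, ENNReal.tsum_mul_right, ENNReal.tsum_mul_left,
            ENNReal.tsum_mul_left, hL]
          ring
      _ ≤ _ := by
          rw [← ENNReal.ofReal_mul (by positivity), inv_mul_cancel₀ ht.ne', ENNReal.ofReal_one,
            one_mul]
          gcongr
          exact hD1b _ ht
  have hAq' : ∫⁻ x, (∑' j : ℤ, (ENNReal.ofReal ((2:ℝ) ^ j) * ‖(𝓕⁻ (h j)) x‖ₑ) ^ r) ^ (q / r)
      = ∫⁻ x, A x ^ q := lintegral_congr fun x => hAq x
  rw [hAq']
  calc _ ≤ ∫⁻ x, 2 ^ (q - 1) * (D1 ^ q * A x ^ q + CK ^ q * L x ^ q) := by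
        refine lintegral_mono_ae ?_
        filter_upwards [hpt] with x hx
        refine (ENNReal.rpow_le_rpow hx hq0.le).trans ?_
        refine (ENNReal.rpow_add_le_mul_rpow_add_rpow _ _ (by linarith)).trans ?_
        rw [ENNReal.mul_rpow_of_nonneg _ _ hq0.le, ENNReal.mul_rpow_of_nonneg _ _ hq0.le]
    _ = 2 ^ (q - 1) * (D1 ^ q * ∫⁻ x, A x ^ q) + 2 ^ (q - 1) * (CK ^ q * ∫⁻ x, L x ^ q) := by
        rw [lintegral_const_mul' _ _ (ENNReal.rpow_ne_top_of_nonneg hq1.le (by norm_num)),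
          lintegral_add_left ((hAm.pow_const q).const_mul _),
          lintegral_const_mul' _ _ (ENNReal.rpow_ne_top_of_nonneg hq0.le hD1),
          lintegral_const_mul' _ _ (ENNReal.rpow_ne_top_of_nonneg hq0.le hCK), mul_add]
    _ ≤ 2 ^ (q - 1) * (D1 ^ q * ∫⁻ x, A x ^ q) +
          2 ^ (q - 1) * (CK ^ q * (CL * ∫⁻ x, A x ^ q)) := by
        gcongr
        exact hlow A hAm
    _ = _ := by ring

/-- Refined Hardy inequality for the gradient: for `2 < q < d` and a Littlewood–Paley
partition function `ψ`, there is `C = C(d,q,ψ)` such that for every Schwartz `f`,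
`‖f/|x|‖_{L^q} ≤ C ‖∇f‖_{L^q}^{1/q} ‖f‖_{Ḟ^1_{q,2(q-1)}}^{(q-1)/q}`,
where `P_N f = 𝓕⁻¹(ψ(·/N) 𝓕 f)` and `‖f‖_{Ḟ^s_{q,r}} = ‖(∑_N N^{sr} |P_N f|^r)^{1/r}‖_{L^q}`. -/
theorem refined_gradient_hardy (d : ℕ) (q : ℝ) (hq : 2 < q) (hqd : q < d)
    (ψ : EuclideanSpace ℝ (Fin d) → ℝ) (hψsmooth : ContDiff ℝ (⊤ : ℕ∞) ψ)
    (hψrange : ∀ ξ, ψ ξ ∈ Set.Icc (0 : ℝ) 1)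
    (hψsupp : Function.support ψ ⊆ {ξ | 1 / 2 ≤ ‖ξ‖ ∧ ‖ξ‖ ≤ 2})
    (hψsum : ∀ ξ : EuclideanSpace ℝ (Fin d), ξ ≠ 0 →
      ∑' j : ℤ, ψ ((2 : ℝ) ^ (-j) • ξ) = 1) :
    ∃ C : ℝ, 0 < C ∧ ∀ f : SchwartzMap (EuclideanSpace ℝ (Fin d)) ℂ,
      ∀ P : ℤ → EuclideanSpace ℝ (Fin d) → ℂ,
      (∀ j x, P j x = 𝓕⁻ (fun ξ => (ψ ((2 : ℝ) ^ (-j) • ξ) : ℂ) * 𝓕 (⇑f) ξ) x) →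
      (∫ x : EuclideanSpace ℝ (Fin d), ‖f x‖ ^ q / ‖x‖ ^ q) ^ (1 / q) ≤
        C * ((∫ x : EuclideanSpace ℝ (Fin d), ‖fderiv ℝ (⇑f) x‖ ^ q) ^ (1 / q)) ^ (1 / q) *
          ((∫ x : EuclideanSpace ℝ (Fin d),
              (∑' j : ℤ, ((2 : ℝ) ^ j) ^ (2 * (q - 1)) *
                ‖P j x‖ ^ (2 * (q - 1))) ^ (q / (2 * (q - 1)))) ^ (1 / q)) ^ ((q - 1) / q) := by
  have hd : 3 ≤ d := by
    have : (2:ℝ) < d := by linarith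
    have : 2 < d := by exact_mod_cast this
    omega
  have hq0 : 0 < q := by linarith
  have hq1 : 0 < q - 1 := by linarith
  obtain ⟨C1, hC1, hardy⟩ := rgh_hardy hq hqd
  obtain ⟨C2, hC2, refined⟩ := rgh_refined hq hqd ψ hψsmooth hψrange hψsupp hψsum
  set c1 : ℝ := C1.toReal + 1 with hc1
  set c2 : ℝ := C2.toReal + 1 with hc2
  have hc1p : 0 < c1 := by positivity
  have hc2p : 0 < c2 := by positivity
  refine ⟨(c1 ^ (1 / q)) ^ (1 / q) * (c2 ^ (1 / q)) ^ ((q - 1) / q), by positivity, ?_⟩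
  intro f P hP
  obtain ⟨hZfin, hX2⟩ := refined f P hP
  have hX1 := hardy f
  have hPm : ∀ j, Measurable (P j) := by
    obtain ⟨h, -, hPh⟩ := rgh_LP ψ hψsmooth hψsupp f P hP
    intro j
    have : P j = (𝓕⁻ (h j) : SchwartzMap (EuclideanSpace ℝ (Fin d)) ℂ) := funext (hPh j)
    rw [this]
    exact (𝓕⁻ (h j)).continuous.measurable
  set X := ∫⁻ x : EuclideanSpace ℝ (Fin d), (ENNReal.ofReal (‖x‖⁻¹) * ‖f x‖ₑ) ^ q with hX
  set Y := ∫⁻ x, ‖fderiv ℝ f x‖ₑ ^ q with hY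
  set Z := ∫⁻ x, (∑' j : ℤ, (ENNReal.ofReal ((2:ℝ) ^ j) * ‖P j x‖ₑ) ^ (2 * (q - 1))) ^
    (q / (2 * (q - 1))) with hZ
  have hYfin : Y ≠ ⊤ := by
    have hm := (SchwartzMap.fderivCLM ℝ (EuclideanSpace ℝ (Fin d)) ℂ f).memLp
      (ENNReal.ofReal q) volume
    have h2 := lintegral_rpow_enorm_lt_top_of_eLpNorm_lt_top (by simpa using hq0) (by simp) hm.2
    rw [ENNReal.toReal_ofReal hq0.le] at h2
    exact h2.ne
  have hcf : Continuous (fderiv ℝ f) := f.smooth'.continuous_fderiv (by simp)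
  have eX : ∫ x : EuclideanSpace ℝ (Fin d), ‖f x‖ ^ q / ‖x‖ ^ q = X.toReal := by
    rw [hX, ← integral_toReal]
    · congr 1
      ext x
      rw [← ENNReal.toReal_rpow, ENNReal.toReal_mul, ENNReal.toReal_ofReal (by positivity),
        toReal_enorm, Real.mul_rpow (by positivity) (by positivity), Real.inv_rpow (by positivity)]
      rw [div_eq_mul_inv, mul_comm]
    · have := f.continuous.measurable
      fun_prop
    · exact Filter.Eventually.of_forall fun x =>
        (ENNReal.rpow_ne_top_of_nonneg hq0.le (by finiteness)).lt_top
  have eY : ∫ x : EuclideanSpace ℝ (Fin d), ‖fderiv ℝ (⇑f) x‖ ^ q = Y.toReal := by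
    rw [hY, ← integral_toReal]
    · congr 1
      ext x
      rw [← ENNReal.toReal_rpow, toReal_enorm]
    · exact (hcf.enorm.measurable.pow_const q).aemeasurable
    · exact Filter.Eventually.of_forall fun x =>
        (ENNReal.rpow_ne_top_of_nonneg hq0.le (by finiteness)).lt_top
  have eZ : ∫ x : EuclideanSpace ℝ (Fin d), (∑' j : ℤ, ((2 : ℝ) ^ j) ^ (2 * (q - 1)) *
                ‖P j x‖ ^ (2 * (q - 1))) ^ (q / (2 * (q - 1))) = Z.toReal := by
    have hmZ : Measurable (fun x => (∑' j : ℤ, (ENNReal.ofReal ((2:ℝ) ^ j) * ‖P j x‖ₑ) ^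
        (2 * (q - 1))) ^ (q / (2 * (q - 1)))) := by
      refine Measurable.pow_const (Measurable.ennreal_tsum fun j => ?_) _
      have := hPm j
      fun_prop
    rw [hZ, ← integral_toReal hmZ.aemeasurable (ae_lt_top hmZ hZfin)]
    congr 1
    ext x
    rw [← ENNReal.toReal_rpow, ENNReal.tsum_toReal_eq]
    · congr 2
      ext j
      rw [← ENNReal.toReal_rpow, ENNReal.toReal_mul, ENNReal.toReal_ofReal (by positivity),
        toReal_enorm, Real.mul_rpow (by positivity) (by positivity)]
    · intro j
      exact ENNReal.rpow_ne_top_of_nonneg (by linarith) (by finiteness)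
  rw [eX, eY, eZ]
  have hx0 : 0 ≤ X.toReal := ENNReal.toReal_nonneg
  have hy0 : 0 ≤ Y.toReal := ENNReal.toReal_nonneg
  have hz0 : 0 ≤ Z.toReal := ENNReal.toReal_nonneg
  have hXY : X.toReal ≤ c1 * Y.toReal := by
    have := ENNReal.toReal_mono (ENNReal.mul_ne_top hC1 hYfin) hX1
    rw [ENNReal.toReal_mul] at this
    nlinarith
  have hXZ : X.toReal ≤ c2 * Z.toReal := by
    have := ENNReal.toReal_mono (ENNReal.mul_ne_top hC2 hZfin) hX2
    rw [ENNReal.toReal_mul] at this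
    nlinarith
  generalize X.toReal = a at *
  generalize Y.toReal = b at *
  generalize Z.toReal = c at *
  have hsplit : a ^ (1 / q) = (a ^ (1 / q)) ^ (1 / q) * (a ^ (1 / q)) ^ ((q - 1) / q) := by
    rw [← Real.rpow_add_of_nonneg (by positivity) (by positivity) (by positivity), ← add_div]
    rw [add_sub_cancel, div_self hq0.ne', Real.rpow_one]
  calc a ^ (1 / q) = (a ^ (1 / q)) ^ (1 / q) * (a ^ (1 / q)) ^ ((q - 1) / q) := hsplit
    _ ≤ ((c1 * b) ^ (1 / q)) ^ (1 / q) * ((c2 * c) ^ (1 / q)) ^ ((q - 1) / q) := by gcongr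
    _ = _ := by
      rw [Real.mul_rpow hc1p.le hy0, Real.mul_rpow hc2p.le hz0,
        Real.mul_rpow (by positivity) (by positivity),
        Real.mul_rpow (by positivity) (by positivity)]
      ring
end
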